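/- arXiv:1402.1818 — 4 statements merged into one kernel-verified Lean document; each statement's English description precedes it below -/
import Mathlib

section
/- (Mixing Lemma) Let (X, γ) be a probability space and let (Eᵢ) be a sequence of measurable subsets of X that are pairwise independent (γ(Eᵢ ∩ Eⱼ) = γ(Eᵢ)γ(Eⱼ) for all i ≠ j) and satisfy ∑ᵢ γ(Eᵢ) = ∞. Then for every measurable set E ⊆ X and every ε > 0 there exists a positive integer i such that γ(E ∩ Eᵢ) > (γ(E) − ε) γ(Eᵢ). -/
/-!
Suppose `γ (F ∩ E i) ≤ (γ F - ε) γ (E i)` for every `i`. Let `S` be the sum of the indicators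
of `E i`, `i < n`, and let `s` be its mean. Pairwise independence gives `Var S ≤ s`, while the
assumption gives `Cov (S, 1_F) ≤ -ε s`. Nonnegativity of the variance of `S + ε⁻¹ 1_F` then reads
`0 ≤ s - 2 s + ε⁻²`, so the partial sums `s` are bounded by `ε⁻²`, contradicting divergence.
-/

open MeasureTheory ProbabilityTheory

lemma memLp_ind {X : Type*} [MeasurableSpace X] (γ : Measure X) [IsProbabilityMeasure γ]
    {A : Set X} (hA : MeasurableSet A) : MemLp (A.indicator (1 : X → ℝ)) 2 γ :=
  memLp_indicator_const 2 hA (1 : ℝ) (Or.inr (measure_ne_top γ A))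

lemma cov_ind {X : Type*} [MeasurableSpace X] (γ : Measure X) [IsProbabilityMeasure γ]
    {A B : Set X} (hA : MeasurableSet A) (hB : MeasurableSet B) :
    cov[A.indicator (1 : X → ℝ), B.indicator (1 : X → ℝ); γ]
      = γ.real (A ∩ B) - γ.real A * γ.real B := by
  rw [covariance_eq_sub (memLp_ind γ hA) (memLp_ind γ hB), ← Set.inter_indicator_one,
    integral_indicator_one hA, integral_indicator_one hB, integral_indicator_one (hA.inter hB)]

/-- Mixing Lemma: if `(E i)` are pairwise independent sets in a probability space `(X, γ)`
with divergent sum of measures, then any set `E` is mixed by some `E i` up to `ε`. -/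
theorem stmt1 {X : Type*} [MeasurableSpace X] (γ : Measure X) [IsProbabilityMeasure γ]
    (E : ℕ → Set X) (hE : ∀ i, MeasurableSet (E i))
    (hind : ∀ i j, i ≠ j → γ (E i ∩ E j) = γ (E i) * γ (E j))
    (hsum : ∑' i, γ (E i) = ⊤)
    (F : Set X) (hF : MeasurableSet F) (ε : ℝ) (hε : 0 < ε) :
    ∃ i : ℕ, (γ (F ∩ E i)).toReal > ((γ F).toReal - ε) * (γ (E i)).toReal := by
  by_contra! hcon
  have hbound : ∀ n : ℕ, ∑ i ∈ Finset.range n, γ.real (E i) ≤ (ε⁻¹) ^ 2 := by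
    intro n
    set s := ∑ i ∈ Finset.range n, γ.real (E i) with hs
    let a : ℕ → X → ℝ := fun i => (E i).indicator 1
    let b : X → ℝ := F.indicator 1
    have ha : ∀ i, MemLp (a i) 2 γ := fun i => memLp_ind γ (hE i)
    have hb : MemLp b 2 γ := memLp_ind γ hF
    have hS : MemLp (∑ i ∈ Finset.range n, a i) 2 γ := memLp_finsetSum' _ fun i _ => ha i
    have hvarS : Var[∑ i ∈ Finset.range n, a i; γ] ≤ s := by
      rw [variance_sum' fun i _ => ha i, hs]
      refine Finset.sum_le_sum fun i hi => ?_
      rw [Finset.sum_eq_single_of_mem i hi]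
      · rw [cov_ind γ (hE i) (hE i), Set.inter_self]
        nlinarith [mul_self_nonneg (γ.real (E i))]
      · intro j _ hj
        rw [cov_ind γ (hE i) (hE j), measureReal_def, hind i j hj.symm, ENNReal.toReal_mul]
        exact sub_self _
    have hcov : cov[∑ i ∈ Finset.range n, a i, b; γ] ≤ -ε * s := by
      rw [covariance_sum_left' (fun i _ => ha i) hb, hs, Finset.mul_sum]
      refine Finset.sum_le_sum fun i _ => ?_
      rw [cov_ind γ (hE i) hF, Set.inter_comm]
      have := hcon i
      simp only [← measureReal_def] at this
      linarith
    have hvarb : Var[b; γ] ≤ 1 := by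
      rw [← covariance_self hb.aemeasurable, cov_ind γ hF hF, Set.inter_self]
      nlinarith [mul_self_nonneg (γ.real F), measureReal_le_one (μ := γ) (s := F)]
    have h0 := variance_nonneg ((∑ i ∈ Finset.range n, a i) + ε⁻¹ • b) γ
    rw [variance_add hS (hb.const_smul _), covariance_smul_right, variance_smul] at h0
    have h1 := mul_le_mul_of_nonneg_left hcov (inv_nonneg.2 hε.le)
    have h2 := mul_le_mul_of_nonneg_left hvarb (sq_nonneg ε⁻¹)
    have h3 : ε⁻¹ * (-ε * s) = -s := by field_simp
    linarith
  have hsummable : Summable fun i => γ.real (E i) :=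
    summable_of_sum_range_le (fun _ => measureReal_nonneg) hbound
  refine hsummable.tsum_ofReal_ne_top ?_
  simpa [ofReal_measureReal] using hsum
end

section
/- (Double Mixing Lemma) Let (X, γ) and (Y, ν) be probability spaces. Suppose (Eᵢ)ᵢ₌₁^∞ ⊆ X and (Fᵢ)ᵢ₌₁^∞ ⊆ Y are each sequences of pairwise independent measurable sets such that γ(Eᵢ) = ν(Fᵢ) for all i and ∑ᵢ γ(Eᵢ) = ∑ᵢ ν(Fᵢ) = ∞. Then for all measurable sets E ⊆ X and F ⊆ Y and every ε > 0, there exists a positive integer i such that both γ(E ∩ Eᵢ) > (γ(E) − ε) γ(Eᵢ) and ν(F ∩ Fᵢ) > (ν(F) − ε) ν(Fᵢ). -/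
/-!
Call an index `i` bad for `A` if `γ (A ∩ E i) ≤ (γ A - ε) * γ (E i)`. Over a finite set `S` of bad
indices with `M = ∑ i ∈ S, γ (E i)`, the centred variable `Z = ∑ i ∈ S, (1_{E i} - γ (E i))` has
variance at most `M` by pairwise independence, while `∫ Z * 1_A ≤ -ε * M`. Expanding
`0 ≤ ∫ (Z + ε⁻¹ * 1_A) ^ 2` gives `M ≤ ε⁻¹ ^ 2` (`sum_bad_le`). If every index were bad for `A` or
for `B`, all partial sums of `∑ γ (E i)` would be at most `2 * ε⁻¹ ^ 2`, contradicting divergence.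
-/

open MeasureTheory

/-- Second-moment bound: the total measure of finitely many pairwise independent sets, each of which
meets `A` in noticeably less than its expected share, is bounded in terms of `ε` only. -/
theorem sum_bad_le {X : Type*} [MeasurableSpace X] (γ : Measure X) [IsProbabilityMeasure γ]
    (E : ℕ → Set X) (hE : ∀ i, MeasurableSet (E i))
    (hind : ∀ i j, i ≠ j → γ (E i ∩ E j) = γ (E i) * γ (E j))
    (A : Set X) (hA : MeasurableSet A) (ε : ℝ) (hε : 0 < ε) (S : Finset ℕ)
    (hS : ∀ i ∈ S, γ.real (A ∩ E i) ≤ (γ.real A - ε) * γ.real (E i)) :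
    ∑ i ∈ S, γ.real (E i) ≤ ε⁻¹ ^ 2 := by
  set M := ∑ i ∈ S, γ.real (E i) with hM
  set c := ε⁻¹ with hc
  have hint : ∀ s : Set X, MeasurableSet s → Integrable (s.indicator (1 : X → ℝ)) γ := fun s hs =>
    (integrable_const (1 : ℝ)).indicator hs
  have hmul : ∀ (s t : Set X) (x : X),
      s.indicator (1 : X → ℝ) x * t.indicator 1 x = (s ∩ t).indicator 1 x := by
    intro s t x
    rw [Set.inter_indicator_one]; rfl
  have hpt : ∀ x, (∑ i ∈ S, (E i).indicator (1 : X → ℝ) x - M + c * A.indicator 1 x) ^ 2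
      = ∑ i ∈ S, ∑ j ∈ S, (E i ∩ E j).indicator (1 : X → ℝ) x + M ^ 2
        + (c ^ 2 - 2 * c * M) * A.indicator 1 x
        - 2 * M * ∑ i ∈ S, (E i).indicator (1 : X → ℝ) x
        + 2 * c * ∑ i ∈ S, (A ∩ E i).indicator (1 : X → ℝ) x := by
    intro x
    have h1 := hmul A A x
    rw [Set.inter_self] at h1
    simp only [← hmul _ (E _), ← Finset.mul_sum, ← Finset.sum_mul]
    linear_combination c ^ 2 * h1
  have h0 : 0 ≤ ∫ x, (∑ i ∈ S, (E i).indicator (1 : X → ℝ) x - M + c * A.indicator 1 x) ^ 2 ∂γ :=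
    integral_nonneg fun x => sq_nonneg _
  have i1 : Integrable (fun x => ∑ i ∈ S, ∑ j ∈ S, (E i ∩ E j).indicator (1 : X → ℝ) x) γ :=
    integrable_finsetSum _ fun i _ => integrable_finsetSum _ fun j _ =>
      hint _ ((hE i).inter (hE j))
  have i2 : Integrable (fun _ : X => M ^ 2) γ := integrable_const _
  have i3 : Integrable (fun x => (c ^ 2 - 2 * c * M) * A.indicator (1 : X → ℝ) x) γ :=
    (hint A hA).const_mul _
  have i4 : Integrable (fun x => 2 * M * ∑ i ∈ S, (E i).indicator (1 : X → ℝ) x) γ :=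
    (integrable_finsetSum _ fun i _ => hint _ (hE i)).const_mul _
  have i5 : Integrable (fun x => 2 * c * ∑ i ∈ S, (A ∩ E i).indicator (1 : X → ℝ) x) γ :=
    (integrable_finsetSum _ fun i _ => hint _ (hA.inter (hE i))).const_mul _
  have e1 : ∫ x, ∑ i ∈ S, ∑ j ∈ S, (E i ∩ E j).indicator (1 : X → ℝ) x ∂γ
      = ∑ i ∈ S, ∑ j ∈ S, γ.real (E i ∩ E j) := by
    rw [integral_finsetSum _ fun i _ => integrable_finsetSum _ fun j _ =>
      hint _ ((hE i).inter (hE j))]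
    refine Finset.sum_congr rfl fun i _ => ?_
    rw [integral_finsetSum _ fun j _ => hint _ ((hE i).inter (hE j))]
    exact Finset.sum_congr rfl fun j _ => integral_indicator_one ((hE i).inter (hE j))
  have e4 : ∫ x, ∑ i ∈ S, (E i).indicator (1 : X → ℝ) x ∂γ = M := by
    rw [integral_finsetSum _ fun i _ => hint _ (hE i)]
    exact Finset.sum_congr rfl fun i _ => integral_indicator_one (hE i)
  have e5 : ∫ x, ∑ i ∈ S, (A ∩ E i).indicator (1 : X → ℝ) x ∂γ = ∑ i ∈ S, γ.real (A ∩ E i) := by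
    rw [integral_finsetSum _ fun i _ => hint _ (hA.inter (hE i))]
    exact Finset.sum_congr rfl fun i _ => integral_indicator_one (hA.inter (hE i))
  simp_rw [hpt] at h0
  rw [integral_add (((i1.fun_add i2).fun_add i3).sub' i4) i5, integral_sub ((i1.fun_add i2).fun_add i3) i4,
    integral_add (i1.fun_add i2) i3, integral_add i1 i2, integral_const_mul, integral_const_mul,
    integral_const_mul, e1, e4, e5, integral_indicator_one hA] at h0
  simp only [integral_const, probReal_univ, one_smul] at h0
  have hsq : ∑ i ∈ S, ∑ j ∈ S, γ.real (E i ∩ E j) ≤ M ^ 2 + M := by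
    have : M ^ 2 + M = ∑ i ∈ S, ∑ j ∈ S,
        (γ.real (E i) * γ.real (E j) + if i = j then γ.real (E i) else 0) := by
      simp only [Finset.sum_add_distrib, Finset.sum_ite_eq, ← Finset.mul_sum, ← Finset.sum_mul]
      rw [Finset.sum_congr rfl fun i hi => if_pos hi, ← hM, sq]
    rw [this]
    refine Finset.sum_le_sum fun i _ => Finset.sum_le_sum fun j _ => ?_
    split_ifs with h
    · subst h
      rw [Set.inter_self]
      nlinarith [mul_self_nonneg (γ.real (E i))]
    · simp [Measure.real, hind i j h]
  have hbad : ∑ i ∈ S, γ.real (A ∩ E i) ≤ (γ.real A - ε) * M := by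
    rw [hM, Finset.mul_sum]
    exact Finset.sum_le_sum hS
  have hcpos : 0 < c := inv_pos.2 hε
  have hcε : c * ε = 1 := inv_mul_cancel₀ hε.ne'
  have hA1 : γ.real A ≤ 1 := measureReal_le_one
  have h2 := mul_le_mul_of_nonneg_left hbad hcpos.le
  have h3 := mul_le_mul_of_nonneg_left hA1 (sq_nonneg c)
  have h4 : c * ((γ.real A - ε) * M) = c * γ.real A * M - M := by
    linear_combination (-M) * hcε
  nlinarith

/-- Double Mixing Lemma. -/
theorem stmt2 {X Y : Type*} [MeasurableSpace X] [MeasurableSpace Y]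
    (γ : Measure X) (ν : Measure Y) [IsProbabilityMeasure γ] [IsProbabilityMeasure ν]
    (E : ℕ → Set X) (F : ℕ → Set Y)
    (hE : ∀ i, MeasurableSet (E i)) (hF : ∀ i, MeasurableSet (F i))
    (hindE : ∀ i j, i ≠ j → γ (E i ∩ E j) = γ (E i) * γ (E j))
    (hindF : ∀ i j, i ≠ j → ν (F i ∩ F j) = ν (F i) * ν (F j))
    (heq : ∀ i, γ (E i) = ν (F i))
    (hsum : ∑' i, γ (E i) = ⊤)
    (A : Set X) (B : Set Y) (hA : MeasurableSet A) (hB : MeasurableSet B)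
    (ε : ℝ) (hε : 0 < ε) :
    ∃ i : ℕ, (γ (A ∩ E i)).toReal > ((γ A).toReal - ε) * (γ (E i)).toReal ∧
      (ν (B ∩ F i)).toReal > ((ν B).toReal - ε) * (ν (F i)).toReal := by
  classical
  by_contra hcon
  push Not at hcon
  refine absurd hsum (ne_top_of_le_ne_top (ENNReal.ofReal_ne_top (r := 2 * ε⁻¹ ^ 2)) ?_)
  rw [ENNReal.tsum_eq_iSup_sum]
  refine iSup_le fun S => ?_
  have hS : ∑ i ∈ S, γ (E i) = ENNReal.ofReal (∑ i ∈ S, γ.real (E i)) := by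
    rw [ENNReal.ofReal_sum_of_nonneg fun i _ => measureReal_nonneg]
    exact Finset.sum_congr rfl fun i _ => (ofReal_measureReal).symm
  rw [hS]
  refine ENNReal.ofReal_le_ofReal ?_
  rw [← Finset.sum_filter_add_sum_filter_not S
    (fun i => γ.real (A ∩ E i) ≤ (γ.real A - ε) * γ.real (E i))]
  have h1 := sum_bad_le γ E hE hindE A hA ε hε
    (S.filter fun i => γ.real (A ∩ E i) ≤ (γ.real A - ε) * γ.real (E i))
    (fun i hi => (Finset.mem_filter.1 hi).2)
  have h2 := sum_bad_le ν F hF hindF B hB ε hε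
    (S.filter fun i => ¬ γ.real (A ∩ E i) ≤ (γ.real A - ε) * γ.real (E i))
    (fun i hi => hcon i (not_le.1 (Finset.mem_filter.1 hi).2))
  have h3 : ∀ i, γ.real (E i) = ν.real (F i) := fun i => by simp [Measure.real, heq i]
  simp only [← h3] at h2
  linarith
end

section
/- For each subset R of ℚ ∩ (0,1), there exists a standard Borel space X with a nonatomic σ-finite Borel measure μ satisfying μ(X) = ∞, and an invertible measure-preserving transformation T : X → X, such that for all natural numbers p, q with 0 < p < q, the product transformation T^p × T^q on (X × X, μ × μ) is ergodic if and only if the rational number p/q belongs to R. -/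
/-!
The transformation is a rank-one tower over the 2-adic odometer. Level `m` of the construction
carries a ratio `p / q` and two offsets `s`, `t`, and places four copies of the preceding stage at
the positions `0`, `a`, `p * L + s`, `a + q * L + t`, where `L` is much larger than `a`, and `a` is
much larger than everything below. Concretely `X` is the set of `(x, i)` with `x : ℤ_[2]` and
`i < ht x`; the base-4 digits of `x` select positions, `g` adds these positions up, and the column
heights `ht x` are the increments of `g`, so that the travel time between two base points is the
difference of their `g`-values. Along the sequence of levels, every `(p, q, s, t)` with `p / q ∈ R`
occurs infinitely often, and no ratio outside `R ∪ {1}` occurs.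

If `p / q ∈ R`, let `A` be invariant under `T ^ p × T ^ q` with neither `A` nor its complement null.
By a density argument (`exists_dense_cyl`) both fill most of some cylinder, seen from base points
translated by fixed times. A level with ratio `p / q` whose offsets `s`, `t` match the height
differences of the two cylinders provides a power of the product map carrying a fixed proportion of
the first cylinder into the second (`T_shift`): in the first coordinate the digit changes from `0`
to `2`, in the second from `1` to `3`. This contradicts invariance (`no_two_invariant`).

If `p / q ∉ R`, separation of scales shows that two height differences between points with vanishing
low digits are never in ratio `p / q` (`g_rigid`). Hence a square of positive measure in the base is
wandering (`base_return`), and the saturation of half of it is invariant, neither null nor conull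
(`prod_not_ergodic`).
-/

open MeasureTheory

/-- `T` is *conservative* w.r.t. `μ`: for every measurable set `A` of positive measure
there is a positive integer `n` with `μ (T⁻ⁿ A ∩ A) > 0`. -/
def IsConservativeMap {X : Type*} [MeasurableSpace X] (μ : Measure X) (T : X → X) : Prop :=
  ∀ A : Set X, MeasurableSet A → 0 < μ A →
    ∃ n : ℕ, 0 < n ∧ 0 < μ (T^[n] ⁻¹' A ∩ A)

/-- `T` is *ergodic* w.r.t. `μ`: every measurable set `A` with `T⁻¹ A = A` mod `μ`
is null or conull. -/
def IsErgodicMap {X : Type*} [MeasurableSpace X] (μ : Measure X) (T : X → X) : Prop :=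
  ∀ A : Set X, MeasurableSet A → μ (symmDiff (T ⁻¹' A) A) = 0 →
    μ A = 0 ∨ μ Aᶜ = 0

namespace OdometerTower

/-! ### The four positions of a level and their rigidity -/

/-- Data attached to one level of the construction: a ratio `p / q` and two integer offsets
`s`, `t`. The level makes the times `p * L` and `q * L` move one point up by `p * L + s` and
another by `q * L + t`, for some large `L`. -/
structure LevelData where
  /-- numerator of the ratio served by the level -/
  p : ℕ
  /-- denominator of the ratio served by the level -/
  q : ℕ
  /-- offset in the first coordinate -/
  s : ℤ
  /-- offset in the second coordinate -/
  t : ℤ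
  hp : 0 < p
  hpq : p ≤ q

namespace LevelData
variable (d : LevelData) (m G : ℕ)

/-- A bound that dominates the total height `G` of the lower levels and both offsets. The last
summand makes the tower so tall that the total measure is infinite. -/
def slack : ℕ := G + d.s.natAbs + d.t.natAbs + (m + 1) * 4 ^ (m + 1)

/-- The intermediate scale of level `m`, larger than `slack` by a factor linear in `m`. -/
def a : ℕ := (4 * m + 4) * d.slack m G

/-- The large scale of level `m`, larger than `a` by a factor linear in `m`. -/
def L : ℕ := (4 * m + 4) * (d.a m G + d.slack m G)

/-- The four positions `0`, `a`, `p * L + s`, `a + q * L + t` of level `m`. The integers under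
`toNat` are nonnegative because `L` dominates the offsets; see `pos_two` and `pos_three`. -/
def pos : ℕ → ℕ
  | 0 => 0
  | 1 => d.a m G
  | 2 => (d.p * d.L m G + d.s).toNat
  | _ => (d.a m G + d.q * d.L m G + d.t).toNat

lemma slack_pos : 0 < d.slack m G := by unfold slack; positivity

lemma slack_le_a : d.slack m G ≤ d.a m G := by
  unfold a; nlinarith [d.slack_pos m G]

lemma L_ge : d.a m G + d.slack m G ≤ d.L m G := by
  unfold L; nlinarith [d.slack_pos m G]

lemma hq : 0 < d.q := d.hp.trans_le d.hpq

lemma pos_two : (d.pos m G 2 : ℤ) = d.p * d.L m G + d.s := by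
  have h1 := d.L_ge m G
  have h2 : d.L m G ≤ d.p * d.L m G := Nat.le_mul_of_pos_left _ d.hp
  have h3 : d.s.natAbs ≤ d.slack m G := by unfold slack; omega
  simp only [pos]
  zify at h2
  omega

lemma pos_three : (d.pos m G 3 : ℤ) = d.pos m G 1 + d.q * d.L m G + d.t := by
  have h1 := d.L_ge m G
  have h2 : d.L m G ≤ d.q * d.L m G := Nat.le_mul_of_pos_left _ d.hq
  have h3 : d.t.natAbs ≤ d.slack m G := by unfold slack; omega
  simp only [pos]
  zify at h2
  omega

/-- Consecutive positions are further apart than the total height `G` of the lower levels. -/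
lemma pos_gap (i : ℕ) (hi : i < 3) : G + d.pos m G i < d.pos m G (i + 1) := by
  have h1 := d.L_ge m G
  have h2 : d.L m G ≤ d.p * d.L m G := Nat.le_mul_of_pos_left _ d.hp
  have h2' : d.p * d.L m G ≤ d.q * d.L m G := Nat.mul_le_mul_right _ d.hpq
  have h3 : G + d.s.natAbs + d.t.natAbs < d.slack m G := by
    unfold slack
    have : 0 < (m + 1) * 4 ^ (m + 1) := by positivity
    omega
  have h4 := d.slack_le_a m G
  have e2 := d.pos_two m G
  have e3 := d.pos_three m G
  have e1 : d.pos m G 1 = d.a m G := rfl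
  have e0 : d.pos m G 0 = 0 := rfl
  zify at h2 h2'
  interval_cases i <;> simp only [Nat.reduceAdd] <;> omega

lemma abs_comb_le {P Q u v c : ℤ} (hP : 0 ≤ P) (hQ : 0 ≤ Q) (hu : |u| ≤ c) (hv : |v| ≤ c) :
    |Q * u - P * v| ≤ (P + Q) * c := by
  have h1 := abs_sub (Q * u) (P * v)
  rw [abs_mul, abs_mul, abs_of_nonneg hP, abs_of_nonneg hQ] at h1
  have h2 := mul_le_mul_of_nonneg_left hu hQ
  have h3 := mul_le_mul_of_nonneg_left hv hP
  linarith

/-- Separation of scales: a bounded integer combination has no component at a scale exceeding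
the bounds. -/
lemma coeff_eq_zero {X L w e b : ℤ} (h : |X * L + w| ≤ e) (hw : |w| ≤ b) (hL : e + b < L) :
    X = 0 := by
  by_contra hne
  have h1 : 1 ≤ |X| := Int.one_le_abs hne
  have h2 := abs_sub (X * L + w) w
  have hL0 : 0 < L := by linarith [abs_nonneg w, abs_nonneg (X * L + w)]
  rw [add_sub_cancel_right, abs_mul, abs_of_pos hL0] at h2
  have h5 : L ≤ |X| * L := le_mul_of_one_le_left hL0.le h1
  linarith

/-- Coefficient of `L` in the four positions. -/
def cL : ℕ → ℤ
  | 0 => 0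
  | 1 => 0
  | 2 => d.p
  | _ => d.q

/-- Coefficient of `a` in the four positions. -/
def cA : ℕ → ℤ
  | 0 => 0
  | 1 => 1
  | 2 => 0
  | _ => 1

/-- The offset in the four positions. -/
def cO : ℕ → ℤ
  | 0 => 0
  | 1 => 0
  | 2 => d.s
  | _ => d.t

lemma pos_eq {i : ℕ} (hi : i < 4) :
    (d.pos m G i : ℤ) = d.cL i * d.L m G + cA i * d.a m G + d.cO i := by
  have e2 := d.pos_two m G
  have e3 := d.pos_three m G
  have e1 : d.pos m G 1 = d.a m G := rfl
  have e0 : d.pos m G 0 = 0 := rfl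
  interval_cases i
  · simp [cL, cA, cO, e0]
  · simp [cL, cA, cO, e1]
  · simp [cL, cA, cO, e2]
  · simp [cL, cA, cO, e3, e1]; ring

lemma cA_inj {P Q : ℤ} (hP : 0 < P) (hPQ : P < Q) {i i' j j' : ℕ} (hi : i < 4) (hi' : i' < 4)
    (hj : j < 4) (hj' : j' < 4) (h : Q * (cA i' - cA i) - P * (cA j' - cA j) = 0) :
    cA i = cA i' ∧ cA j = cA j' := by
  have hb : ∀ k, k < 4 → cA k = 0 ∨ cA k = 1 := by
    intro k hk; interval_cases k <;> simp [cA]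
  rcases hb i hi with h1 | h1 <;> rcases hb i' hi' with h2 | h2 <;>
    rcases hb j hj with h3 | h3 <;> rcases hb j' hj' with h4 | h4 <;>
    rw [h1, h2, h3, h4] at h <;> rw [h1, h2, h3, h4] <;> constructor <;> first | rfl | linarith

/-- If `P / Q` differs from `p / q`, then differences of positions cannot have the ratio `P / Q`
at both scales `a` and `L` unless they vanish. The scale `a` separates positions `0, 2` from
`1, 3`, which excludes comparing `p * L` with `q * L` in the same coordinate. -/
lemma coeff_inj {P Q : ℤ} (hP : 0 < P) (hPQ : P < Q) (hne : P * d.q ≠ Q * d.p)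
    {i i' j j' : ℕ} (hi : i < 4) (hi' : i' < 4) (hj : j < 4) (hj' : j' < 4)
    (hA : Q * (cA i' - cA i) - P * (cA j' - cA j) = 0)
    (hL : Q * (d.cL i' - d.cL i) - P * (d.cL j' - d.cL j) = 0) : i = i' ∧ j = j' := by
  obtain ⟨h1, h2⟩ := cA_inj hP hPQ hi hi' hj hj' hA
  have hpq : (d.p : ℤ) ≤ d.q := by exact_mod_cast d.hpq
  have hp : (0 : ℤ) < d.p := by exact_mod_cast d.hp
  have n1 : P * d.p < Q * d.p := mul_lt_mul_of_pos_right hPQ hp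
  have n2 : P * d.q < Q * d.q := mul_lt_mul_of_pos_right hPQ (hp.trans_le hpq)
  have n3 : Q * d.p ≤ Q * d.q := mul_le_mul_of_nonneg_left hpq (hP.trans hPQ).le
  have n6 : (0 : ℤ) < P * d.p := mul_pos hP hp
  have n7 : (0 : ℤ) < P * d.q := mul_pos hP (hp.trans_le hpq)
  have key : ∀ k k', k < 4 → k' < 4 → cA k = cA k' → k = k' ∨
      d.cL k' - d.cL k = d.p ∨ d.cL k' - d.cL k = -d.p ∨
      d.cL k' - d.cL k = d.q ∨ d.cL k' - d.cL k = -d.q := by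
    intro k k' hk hk' hkk
    interval_cases k <;> interval_cases k' <;> simp [cA] at hkk <;> simp [cL]
  by_cases hii : i = i'
  · refine ⟨hii, ?_⟩
    rw [hii] at hL
    rcases key j j' hj hj' h2 with h | h | h | h | h
    · exact h
    all_goals exfalso; rw [h] at hL; linarith
  · exfalso
    rcases (key i i' hi hi' h1).resolve_left hii with h | h | h | h <;>
      rcases key j j' hj hj' h2 with h' | h' | h' | h' | h' <;>
      rw [h] at hL <;> simp only [h', sub_self] at hL <;>
      first | linarith | exact hne (by linarith)

/-- Rigidity of a level: if `P / Q ≠ p / q` and the height differences in the two coordinates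
have ratio `P / Q` up to an error controlled by the lower levels, both differences are trivial. -/
lemma pos_sep {P Q : ℕ} (hP : 0 < P) (hPQ : P < Q) (hQm : Q ≤ m)
    (hne : P * d.q ≠ Q * d.p) {i i' j j' : ℕ} (hi : i < 4) (hi' : i' < 4) (hj : j < 4)
    (hj' : j' < 4)
    (hle : |(Q : ℤ) * ((d.pos m G i' : ℤ) - d.pos m G i)
      - P * ((d.pos m G j' : ℤ) - d.pos m G j)| ≤ (P + Q) * G) :
    i = i' ∧ j = j' := by
  have hAb : ∀ k k', k < 4 → k' < 4 → |cA k - cA k'| ≤ 1 := by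
    intro k k' hk hk'; interval_cases k <;> interval_cases k' <;> simp [cA]
  have hOb : ∀ k k', k < 4 → k' < 4 → |d.cO k - d.cO k'| ≤ d.s.natAbs + d.t.natAbs := by
    intro k k' hk hk'
    interval_cases k <;> interval_cases k' <;> simp only [cO, abs_le] <;> omega
  obtain ⟨S, hS⟩ : ∃ S : ℤ, S = d.s.natAbs + d.t.natAbs := ⟨_, rfl⟩
  rw [← hS] at hOb
  have hS0 : 0 ≤ S := by rw [hS]; positivity
  rw [d.pos_eq m G hi, d.pos_eq m G hi', d.pos_eq m G hj, d.pos_eq m G hj'] at hle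
  have hslack : (G : ℤ) + S < d.slack m G := by
    have : 0 < (m + 1) * 4 ^ (m + 1) := by positivity
    simp only [slack]; push_cast [hS]; zify at this; linarith
  have ha : (d.a m G : ℤ) = (4 * m + 4) * d.slack m G := by simp [a]
  have hL : (d.L m G : ℤ) = (4 * m + 4) * (d.a m G + d.slack m G) := by simp [L]
  have hal : (0 : ℤ) < d.a m G := by
    exact_mod_cast (d.slack_pos m G).trans_le (d.slack_le_a m G)
  generalize (d.slack m G : ℤ) = σ at *
  generalize (d.a m G : ℤ) = al at *
  generalize (d.L m G : ℤ) = LL at *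
  have hPm : (P : ℤ) + Q ≤ 2 * m := by omega
  have hP' : (0 : ℤ) < P := by exact_mod_cast hP
  have hPQ' : (P : ℤ) < Q := by exact_mod_cast hPQ
  obtain ⟨X, hX⟩ : ∃ X : ℤ, X = Q * (d.cL i' - d.cL i) - P * (d.cL j' - d.cL j) := ⟨_, rfl⟩
  obtain ⟨Y, hY⟩ : ∃ Y : ℤ, Y = Q * (cA i' - cA i) - P * (cA j' - cA j) := ⟨_, rfl⟩
  obtain ⟨Z, hZ⟩ : ∃ Z : ℤ, Z = Q * (d.cO i' - d.cO i) - P * (d.cO j' - d.cO j) := ⟨_, rfl⟩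
  have hle' : |X * LL + Y * al + Z| ≤ (P + Q) * G := by
    refine le_trans (le_of_eq ?_) hle
    congr 1; rw [hX, hY, hZ]; ring
  have hG0 : (0 : ℤ) ≤ G := by positivity
  have hm0 : (0 : ℤ) ≤ m := by positivity
  have hYb : |Y| ≤ 2 * m := by
    have := abs_comb_le hP'.le (hP'.trans hPQ').le (hAb i' i hi' hi) (hAb j' j hj' hj)
    rw [← hY] at this
    linarith
  have hZb : |Z| ≤ 2 * m * S := by
    have := abs_comb_le hP'.le (hP'.trans hPQ').le (hOb i' i hi' hi) (hOb j' j hj' hj)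
    rw [← hZ] at this
    exact this.trans (mul_le_mul_of_nonneg_right hPm hS0)
  have hle2 : |X * LL + Y * al + Z| ≤ 2 * m * G :=
    hle'.trans (mul_le_mul_of_nonneg_right hPm hG0)
  have hmS : 0 ≤ (m : ℤ) * S := mul_nonneg hm0 hS0
  have hmG : 0 ≤ (m : ℤ) * G := mul_nonneg hm0 hG0
  have hmσ : (m : ℤ) * G + m * S ≤ m * σ := by
    rw [← mul_add]; exact mul_le_mul_of_nonneg_left hslack.le hm0
  have hX0 : X = 0 := by
    refine coeff_eq_zero (L := LL) (w := Y * al + Z) (e := 2 * m * G)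
      (b := 2 * m * al + 2 * m * S) (by rwa [← add_assoc]) ?_ ?_
    · refine (abs_add_le _ _).trans (add_le_add ?_ hZb)
      rw [abs_mul, abs_of_pos hal]
      exact mul_le_mul_of_nonneg_right hYb hal.le
    · rw [hL]
      have : 0 ≤ (m : ℤ) * al := mul_nonneg hm0 hal.le
      linarith
  have hY0 : Y = 0 := by
    rw [hX0, zero_mul, zero_add] at hle2
    refine coeff_eq_zero hle2 hZb ?_
    rw [ha]
    linarith
  exact d.coeff_inj hP' hPQ' (by exact_mod_cast hne) hi hi' hj hj' (hY ▸ hY0) (hX ▸ hX0)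
end LevelData

/-! ### Heights of the levels of the tower -/

section Heights
variable (e : ℕ → LevelData)

/-- The total height `G m` of all levels below `m`. -/
def G : ℕ → ℕ
  | 0 => 0
  | m + 1 => G m + (e m).pos m (G m) 3

/-- The `i`-th position of level `m` (for `i < 4`). -/
def lev (m i : ℕ) : ℕ := (e m).pos m (G e m) i

/-- The height `g e K v`: the sum over `l < K` of the position of level `l` selected by the `l`-th
base-4 digit of `v`. -/
def g : ℕ → ℕ → ℕ
  | 0, _ => 0
  | K + 1, v => g K v + lev e K (v / 4 ^ K % 4)

lemma lev_zero (m : ℕ) : lev e m 0 = 0 := rfl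

lemma lev_gap (m i : ℕ) (hi : i < 3) : G e m + lev e m i < lev e m (i + 1) :=
  (e m).pos_gap m (G e m) i hi

lemma lev_le (m : ℕ) {i : ℕ} (hi : i < 4) : lev e m i ≤ lev e m 3 := by
  have h0 := lev_gap e m 0 (by norm_num)
  have h1 := lev_gap e m 1 (by norm_num)
  have h2 := lev_gap e m 2 (by norm_num)
  simp only [Nat.reduceAdd] at *
  interval_cases i <;> omega

lemma g_le (K v : ℕ) : g e K v ≤ G e K := by
  induction K with
  | zero => simp [g]
  | succ K ih =>
    have := lev_le e K (Nat.mod_lt (v / 4 ^ K) (by norm_num : 0 < 4))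
    simp only [g, G]
    exact Nat.add_le_add ih this

lemma g_zero (K : ℕ) : g e K 0 = 0 := by
  induction K with
  | zero => rfl
  | succ K ih => simp [g, ih, lev_zero]

lemma g_add_mul (k v c : ℕ) : g e k (v + 4 ^ k * c) = g e k v := by
  induction k generalizing c with
  | zero => rfl
  | succ k ih =>
    have h1 : v + 4 ^ (k + 1) * c = v + 4 ^ k * (4 * c) := by ring
    simp only [g]
    rw [h1, ih, Nat.add_mul_div_left _ _ (by positivity), Nat.add_mul_mod_self_left]

lemma g_mod (k v : ℕ) : g e k (v % 4 ^ k) = g e k v := by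
  conv_rhs => rw [← Nat.mod_add_div v (4 ^ k), g_add_mul]

lemma g_succ_add (K : ℕ) {v c : ℕ} (hv : v < 4 ^ K) (hc : c < 4) :
    g e (K + 1) (v + 4 ^ K * c) = g e K v + lev e K c := by
  simp only [g]
  rw [g_add_mul, Nat.add_mul_div_left _ _ (by positivity), Nat.div_eq_of_lt hv, zero_add,
    Nat.mod_eq_of_lt hc]

lemma g_succ_split (K : ℕ) {V : ℕ} (hV : V < 4 ^ (K + 1)) :
    g e (K + 1) V = g e K (V % 4 ^ K) + lev e K (V / 4 ^ K) := by
  conv_lhs => rw [← Nat.mod_add_div V (4 ^ K)]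
  refine g_succ_add e K (Nat.mod_lt _ (by positivity)) ?_
  exact Nat.div_lt_of_lt_mul (by rwa [← pow_succ])

lemma g_add_low {k : ℕ} {M : ℕ} (hkM : k ≤ M) {V u : ℕ} (hV : 4 ^ k ∣ V) (hu : u < 4 ^ k) :
    g e M (V + u) = g e M V + g e k u := by
  obtain ⟨c, rfl⟩ := hV
  induction M, hkM using Nat.le_induction with
  | base =>
    have := g_add_mul e k 0 c
    rw [zero_add, g_zero] at this
    rw [this, add_comm, g_add_mul, zero_add]
  | succ M hM ih =>
    simp only [g]
    rw [ih]
    have : (4 ^ k * c + u) / 4 ^ M = (4 ^ k * c) / 4 ^ M := by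
      obtain ⟨j, rfl⟩ := Nat.exists_eq_add_of_le hM
      rw [pow_add, ← Nat.div_div_eq_div_mul, ← Nat.div_div_eq_div_mul,
        Nat.mul_add_div (by positivity), Nat.div_eq_of_lt hu, add_zero,
        Nat.mul_div_cancel_left _ (by positivity)]
    rw [this]; ring

/-- Heights increase strictly; at a carry this uses that the gaps of level `K` exceed the total
height of the lower levels. -/
lemma g_lt_succ (K : ℕ) {v : ℕ} (hv : v + 1 < 4 ^ K) : g e K v < g e K (v + 1) := by
  induction K generalizing v with
  | zero => simp at hv
  | succ K ih =>
    have h0 : 0 < 4 ^ K := by positivity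
    have hc : v / 4 ^ K < 4 := Nat.div_lt_of_lt_mul (by rw [← pow_succ]; omega)
    have hr := Nat.mod_lt v h0
    have hdec := Nat.mod_add_div v (4 ^ K)
    rw [g_succ_split e K (by omega : v < 4 ^ (K + 1))]
    by_cases h : v % 4 ^ K + 1 < 4 ^ K
    · have h1 : v + 1 = (v % 4 ^ K + 1) + 4 ^ K * (v / 4 ^ K) := by omega
      rw [h1, g_succ_add e K h hc]
      have := ih h
      omega
    · have h1 : v + 1 = 0 + 4 ^ K * (v / 4 ^ K + 1) := by rw [mul_add]; omega
      have hc' : v / 4 ^ K + 1 < 4 := by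
        by_contra hcon
        have : 4 ≤ v / 4 ^ K + 1 := by omega
        have := Nat.mul_le_mul_left (4 ^ K) this
        rw [pow_succ] at hv
        omega
      rw [h1, g_succ_add e K h0 hc', g_zero]
      have := lev_gap e K _ (by omega : v / 4 ^ K < 3)
      have := g_le e K (v % 4 ^ K)
      omega

/-- Rigidity of heights: if no level has ratio `P / Q`, then two height differences between
points whose lowest `k ≥ Q` digits vanish are never in ratio `P / Q`, unless both are trivial.
The digits are compared from the top down with `LevelData.pos_sep`. -/
lemma g_rigid {P Q k : ℕ} (hP : 0 < P) (hPQ : P < Q) (hQk : Q ≤ k)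
    (hne : ∀ m, P * (e m).q ≠ Q * (e m).p) {K : ℕ} (hK : k ≤ K) {V V' Y Y' : ℕ}
    (hV : V < 4 ^ K) (hV' : V' < 4 ^ K) (hY : Y < 4 ^ K) (hY' : Y' < 4 ^ K)
    (dV : 4 ^ k ∣ V) (dV' : 4 ^ k ∣ V') (dY : 4 ^ k ∣ Y) (dY' : 4 ^ k ∣ Y')
    (h : (Q : ℤ) * ((g e K V' : ℤ) - g e K V) = P * ((g e K Y' : ℤ) - g e K Y)) :
    V = V' ∧ Y = Y' := by
  induction K, hK using Nat.le_induction generalizing V V' Y Y' with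
  | base =>
    rw [Nat.eq_zero_of_dvd_of_lt dV hV, Nat.eq_zero_of_dvd_of_lt dV' hV',
      Nat.eq_zero_of_dvd_of_lt dY hY, Nat.eq_zero_of_dvd_of_lt dY' hY']
    exact ⟨rfl, rfl⟩
  | succ K hK ih =>
    have h0 : 0 < 4 ^ K := by positivity
    have hd : 4 ^ k ∣ 4 ^ K := pow_dvd_pow 4 hK
    have hc : ∀ {W}, W < 4 ^ (K + 1) → W / 4 ^ K < 4 := fun hW =>
      Nat.div_lt_of_lt_mul (by rwa [← pow_succ])
    rw [g_succ_split e K hV, g_succ_split e K hV', g_succ_split e K hY,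
      g_succ_split e K hY'] at h
    push_cast at h
    have hb : ∀ W W', |(g e K W : ℤ) - g e K W'| ≤ G e K := by
      intro W W'
      have := g_le e K W
      have := g_le e K W'
      rw [abs_le]; constructor <;> omega
    have hPQ0 : (0 : ℤ) ≤ P ∧ (0 : ℤ) ≤ Q := ⟨by positivity, by positivity⟩
    have h1 := LevelData.abs_comb_le hPQ0.1 hPQ0.2 (hb (V % 4 ^ K) (V' % 4 ^ K))
      (hb (Y % 4 ^ K) (Y' % 4 ^ K))
    obtain ⟨h2, h3⟩ := (e K).pos_sep K (G e K) hP hPQ (hQk.trans hK) (hne K) (hc hV) (hc hV')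
      (hc hY) (hc hY') (by
        refine le_trans (le_of_eq ?_) h1
        congr 1
        simp only [lev] at h
        linarith)
    rw [h2, h3] at h
    obtain ⟨h4, h5⟩ := ih (Nat.mod_lt V h0) (Nat.mod_lt V' h0) (Nat.mod_lt Y h0)
      (Nat.mod_lt Y' h0) ((Nat.dvd_mod_iff hd).2 dV) ((Nat.dvd_mod_iff hd).2 dV')
      ((Nat.dvd_mod_iff hd).2 dY) ((Nat.dvd_mod_iff hd).2 dY') (by linarith)
    constructor
    · rw [← Nat.mod_add_div V (4 ^ K), h2, h4, Nat.mod_add_div]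
    · rw [← Nat.mod_add_div Y (4 ^ K), h3, h5, Nat.mod_add_div]

end Heights

/-! ### The 2-adic odometer and its cylinders -/

section Padic
open MeasureTheory Measure

noncomputable instance : MeasurableSpace ℤ_[2] := borel _
instance : BorelSpace ℤ_[2] := ⟨rfl⟩

/-- The Haar probability measure on the 2-adic integers. -/
noncomputable def P : Measure ℤ_[2] := addHaarMeasure ⊤

instance : IsAddHaarMeasure P := by unfold P; infer_instance

instance : IsProbabilityMeasure P := ⟨by
  have := addHaarMeasure_self (K₀ := (⊤ : TopologicalSpace.PositiveCompacts ℤ_[2]))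
  simpa [P] using this⟩

/-- The residue of `x` modulo `4 ^ K`, as a natural number below `4 ^ K`. -/
noncomputable def vv (K : ℕ) (x : ℤ_[2]) : ℕ := (PadicInt.toZModPow (2 * K) x).val

lemma two_pow_two_mul (K : ℕ) : 2 ^ (2 * K) = 4 ^ K := by rw [pow_mul]; norm_num

lemma vv_lt (K : ℕ) (x : ℤ_[2]) : vv K x < 4 ^ K := by
  have : NeZero (2 ^ (2 * K)) := ⟨by positivity⟩
  rw [← two_pow_two_mul]
  exact ZMod.val_lt _

lemma vv_mod {k K : ℕ} (h : k ≤ K) (x : ℤ_[2]) : vv K x % 4 ^ k = vv k x := by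
  have : NeZero (2 ^ (2 * k)) := ⟨by positivity⟩
  have h1 := PadicInt.cast_toZModPow (p := 2) (2 * k) (2 * K) (by omega) x
  unfold vv
  rw [← h1, ← two_pow_two_mul, ZMod.cast_eq_val, ZMod.val_natCast]

lemma vv_add (K n : ℕ) (x : ℤ_[2]) : vv K (x + n) = (vv K x + n) % 4 ^ K := by
  have : NeZero (2 ^ (2 * K)) := ⟨by positivity⟩
  rw [← two_pow_two_mul]
  unfold vv
  rw [map_add, map_natCast, ZMod.val_add, ZMod.val_natCast, Nat.add_mod_mod]

lemma vv_add_of_lt {K n : ℕ} {x : ℤ_[2]} (h : vv K x + n < 4 ^ K) :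
    vv K (x + n) = vv K x + n := by rw [vv_add, Nat.mod_eq_of_lt h]

lemma vv_ext {x y : ℤ_[2]} (h : ∀ K, vv K x = vv K y) : x = y := by
  rw [← PadicInt.ext_of_toZModPow]
  intro n
  have : NeZero (2 ^ (2 * n)) := ⟨by positivity⟩
  have h1 : PadicInt.toZModPow (2 * n) x = PadicInt.toZModPow (2 * n) y :=
    ZMod.val_injective _ (h n)
  rw [← PadicInt.cast_toZModPow (p := 2) n (2 * n) (by omega) x,
    ← PadicInt.cast_toZModPow (p := 2) n (2 * n) (by omega) y, h1]

lemma vv_sub_iff {K : ℕ} {x y : ℤ_[2]} : vv K x = vv K y ↔ ‖x - y‖ ≤ (4 ^ K : ℝ)⁻¹ := by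
  have : NeZero (2 ^ (2 * K)) := ⟨by positivity⟩
  have h1 : vv K x = vv K y ↔ PadicInt.toZModPow (2 * K) (x - y) = 0 := by
    rw [map_sub, sub_eq_zero]
    exact (ZMod.val_injective _).eq_iff
  rw [h1, ← RingHom.mem_ker, PadicInt.ker_toZModPow, ← PadicInt.norm_le_pow_iff_mem_span_pow]
  have : ((2 : ℕ) : ℝ) ^ (-((2 * K : ℕ) : ℤ)) = (4 ^ K : ℝ)⁻¹ := by
    rw [zpow_neg, zpow_natCast, pow_mul]; norm_num
  rw [this]

lemma exists_vv_succ_lt {x : ℤ_[2]} (hx : x ≠ -1) : ∃ K, vv K x + 1 < 4 ^ K := by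
  by_contra! hcon
  apply hx
  have h1 : x + (1 : ℕ) = 0 := by
    apply vv_ext
    intro K
    have h2 := hcon K
    have h3 := vv_lt K x
    have h4 : vv K x + 1 = 4 ^ K := by omega
    rw [vv_add, h4, Nat.mod_self]
    simp [vv]
  rw [eq_neg_iff_add_eq_zero]
  simpa using h1

lemma vv_lt_mono {k K n : ℕ} (hk : k ≤ K) {x : ℤ_[2]} (h : vv k x + n < 4 ^ k) :
    vv K x + n < 4 ^ K := by
  have h1 := vv_mod hk x
  have h2 := vv_lt K x
  have h3 := Nat.mod_add_div (vv K x) (4 ^ k)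
  obtain ⟨j, rfl⟩ := Nat.exists_eq_add_of_le hk
  have h4 : vv (k + j) x / 4 ^ k < 4 ^ j := Nat.div_lt_of_lt_mul (by rwa [← pow_add])
  have h5 : 4 ^ k * (vv (k + j) x / 4 ^ k + 1) ≤ 4 ^ k * 4 ^ j := Nat.mul_le_mul_left _ h4
  rw [pow_add]
  rw [mul_add] at h5
  omega

lemma exists_vv_add_lt {x : ℤ_[2]} (hx : ∀ j : ℕ, x + j ≠ -1) (n : ℕ) :
    ∃ K, vv K x + n < 4 ^ K := by
  induction n with
  | zero => exact ⟨0, by simpa using vv_lt 0 x⟩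
  | succ n ih =>
    obtain ⟨K, hK⟩ := ih
    obtain ⟨K', hK'⟩ := exists_vv_succ_lt (hx n)
    refine ⟨max K K', ?_⟩
    have h1 := vv_lt_mono (le_max_left K K') hK
    have h2 := vv_lt_mono (le_max_right K K') hK'
    rw [vv_add_of_lt h1] at h2
    omega

lemma continuous_vv (K : ℕ) : Continuous (vv K) := by
  rw [continuous_discrete_rng]
  intro u
  rw [Metric.isOpen_iff]
  intro x hx
  refine ⟨(4 ^ K : ℝ)⁻¹, by positivity, fun y hy => ?_⟩
  rw [Metric.mem_ball, dist_eq_norm] at hy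
  have := vv_sub_iff.2 hy.le
  simp only [Set.mem_preimage, Set.mem_singleton_iff] at *
  rw [this, hx]

lemma measurable_vv (K : ℕ) : Measurable (vv K) := (continuous_vv K).measurable

lemma vv_natCast (K n : ℕ) : vv K (n : ℤ_[2]) = n % 4 ^ K := by
  have := vv_add K n 0
  have h0 : vv K 0 = 0 := by simp [vv]
  simpa [h0] using this

lemma P_cyl (K : ℕ) {u : ℕ} (hu : u < 4 ^ K) : P {x | vv K x = u} = (4 ^ K : ENNReal)⁻¹ := by
  have h1 : ∀ u < 4 ^ K, P {x | vv K x = u} = P {x | vv K x = 0} := by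
    intro u hu
    have : {x : ℤ_[2] | vv K x = 0} = (fun x => x + (u : ℤ_[2])) ⁻¹' {x | vv K x = u} := by
      ext x
      simp only [Set.mem_ofPred_eq, Set.mem_preimage, vv_add]
      have := vv_lt K x
      constructor
      · intro h; rw [h, zero_add, Nat.mod_eq_of_lt hu]
      · intro h
        by_cases h3 : vv K x + u < 4 ^ K
        · rw [Nat.mod_eq_of_lt h3] at h; omega
        · rw [Nat.mod_eq_sub_mod (by omega), Nat.mod_eq_of_lt (by omega)] at h; omega
    rw [this, measure_preimage_add_right]
  have h2 : ∑ u ∈ Finset.range (4 ^ K), P {x | vv K x = u} = 1 := by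
    rw [← measure_biUnion_finset]
    · rw [← measure_univ (μ := P)]
      congr 1
      ext x
      simp [vv_lt]
    · intro a _ b _ hab
      refine Set.disjoint_left.2 fun x hx hx' => hab ?_
      simp only [Set.mem_ofPred_eq] at hx hx'
      omega
    · exact fun b _ => measurable_vv K (measurableSet_singleton b)
  rw [Finset.sum_congr rfl (fun u hu => h1 u (Finset.mem_range.1 hu)), Finset.sum_const,
    Finset.card_range, nsmul_eq_mul] at h2
  rw [h1 u hu]
  refine ENNReal.eq_inv_of_mul_eq_one_left ?_
  rw [mul_comm]; exact_mod_cast h2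

/-- The `m`-th base-4 digit is independent of the residue modulo `4 ^ k` when `k ≤ m`. -/
lemma P_cyl_digit {k m : ℕ} (hkm : k ≤ m) {u c : ℕ} (hu : u < 4 ^ k) (hc : c < 4) :
    P {x | vv k x = u ∧ vv (m + 1) x / 4 ^ m = c} = (4 ^ (k + 1) : ENNReal)⁻¹ := by
  have h0 : 0 < 4 ^ m := by positivity
  have h1 : ∀ c < 4, P {x | vv k x = u ∧ vv (m + 1) x / 4 ^ m = c} =
      P {x | vv k x = u ∧ vv (m + 1) x / 4 ^ m = 0} := by
    intro c hc
    have : {x : ℤ_[2] | vv k x = u ∧ vv (m + 1) x / 4 ^ m = 0} =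
        (fun x => x + ((4 ^ m * c : ℕ) : ℤ_[2])) ⁻¹'
          {x | vv k x = u ∧ vv (m + 1) x / 4 ^ m = c} := by
      ext x
      simp only [Set.mem_ofPred_eq, Set.mem_preimage, vv_add]
      have hdvd : 4 ^ k ∣ 4 ^ m * c := (pow_dvd_pow 4 hkm).mul_right c
      have e1 : (vv k x + 4 ^ m * c) % 4 ^ k = vv k x := by
        obtain ⟨r, hr⟩ := hdvd
        rw [hr, Nat.add_mul_mod_self_left, Nat.mod_eq_of_lt (vv_lt k x)]
      have e2 : (vv (m + 1) x + 4 ^ m * c) % 4 ^ (m + 1) / 4 ^ m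
          = (vv (m + 1) x / 4 ^ m + c) % 4 := by
        rw [pow_succ, Nat.mod_mul_right_div_self, Nat.add_mul_div_left _ _ h0]
      have e3 : vv (m + 1) x / 4 ^ m < 4 :=
        Nat.div_lt_of_lt_mul (by rw [← pow_succ]; exact vv_lt _ _)
      rw [e1, e2]
      generalize vv (m + 1) x / 4 ^ m = z at *
      refine and_congr_right fun _ => ?_
      omega
    rw [this, measure_preimage_add_right]
  have h2 : ∑ c ∈ Finset.range 4, P {x | vv k x = u ∧ vv (m + 1) x / 4 ^ m = c} =
      (4 ^ k : ENNReal)⁻¹ := by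
    rw [← measure_biUnion_finset]
    · rw [← P_cyl k hu]
      congr 1
      ext x
      simp only [Set.mem_iUnion, Set.mem_ofPred_eq, Finset.mem_range]
      constructor
      · rintro ⟨_, _, h, _⟩; exact h
      · intro h
        exact ⟨_, Nat.div_lt_of_lt_mul (by rw [← pow_succ]; exact vv_lt _ _), h, rfl⟩
    · intro a _ b _ hab
      refine Set.disjoint_left.2 fun x hx hx' => hab ?_
      exact hx.2.symm.trans hx'.2
    · intro b _
      exact (measurable_vv k (measurableSet_singleton u)).inter
        (((measurable_of_countable (fun n : ℕ => n / 4 ^ m)).comp (measurable_vv (m + 1)))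
          (measurableSet_singleton b))
  rw [Finset.sum_congr rfl (fun u hu => h1 u (Finset.mem_range.1 hu)), Finset.sum_const,
    Finset.card_range, nsmul_eq_mul] at h2
  rw [h1 c hc, pow_succ, ENNReal.mul_inv (by simp) (by simp), ← h2, mul_comm, ← mul_assoc]
  push_cast
  rw [ENNReal.inv_mul_cancel (by simp) (by simp), one_mul]

end Padic

/-! ### The tower over the odometer -/

section Tower
open MeasureTheory Measure
variable (e : ℕ → LevelData)

open Classical in
/-- The height of the column over `x`: the increment of `g` at `x`, computed at any `K` where
adding `1` to `x` does not overflow (see `ht_eq`). The only point without such a `K` is `-1`,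
which gets height `1`. -/
noncomputable def ht (x : ℤ_[2]) : ℕ :=
  if hx : ∃ K, vv K x + 1 < 4 ^ K then
    g e (Nat.find hx) (vv (Nat.find hx) x + 1) - g e (Nat.find hx) (vv (Nat.find hx) x)
  else 1

lemma g_diff {k K : ℕ} (hk : k ≤ K) {x : ℤ_[2]} (h : vv k x + 1 < 4 ^ k) :
    g e K (vv K x + 1) - g e K (vv K x) = g e k (vv k x + 1) - g e k (vv k x) := by
  have h1 := vv_mod hk x
  have h2 := Nat.div_add_mod (vv K x) (4 ^ k)
  rw [h1] at h2
  have h3 := g_add_low e hk (V := 4 ^ k * (vv K x / 4 ^ k)) (dvd_mul_right _ _) h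
  have h4 := g_add_low e hk (V := 4 ^ k * (vv K x / 4 ^ k)) (dvd_mul_right _ _) (vv_lt k x)
  rw [← add_assoc] at h3
  rw [h2] at h3 h4
  omega

lemma ht_eq {K : ℕ} {x : ℤ_[2]} (h : vv K x + 1 < 4 ^ K) :
    ht e x = g e K (vv K x + 1) - g e K (vv K x) := by
  classical
  have hx : ∃ K, vv K x + 1 < 4 ^ K := ⟨K, h⟩
  rw [ht, dif_pos hx]
  exact (g_diff e (Nat.find_min' hx h) (Nat.find_spec hx)).symm

lemma g_add_ht {K : ℕ} {x : ℤ_[2]} (h : vv K x + 1 < 4 ^ K) :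
    g e K (vv K x) + ht e x = g e K (vv K x + 1) := by
  rw [ht_eq e h]
  have := g_lt_succ e K h
  omega

lemma ht_pos (x : ℤ_[2]) : 0 < ht e x := by
  by_cases hx : ∃ K, vv K x + 1 < 4 ^ K
  · obtain ⟨K, hK⟩ := hx
    rw [ht_eq e hK]
    have := g_lt_succ e K hK
    omega
  · rw [ht, dif_neg hx]; exact one_pos

lemma measurable_ht : Measurable (ht e) := by
  apply measurable_to_countable'
  intro n
  have hm : ∀ s : ℕ → Set ℕ, ∀ K, MeasurableSet {x : ℤ_[2] | vv K x ∈ s K} := fun s K =>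
    measurable_vv K (MeasurableSet.of_discrete (s := s K))
  have : ht e ⁻¹' {n} =
      (⋃ K, {x | vv K x ∈ {v | v + 1 < 4 ^ K ∧ g e K (v + 1) - g e K v = n}}) ∪
      ((⋃ K, {x | vv K x ∈ {v | v + 1 < 4 ^ K}})ᶜ ∩ {_x | 1 = n}) := by
    ext x
    simp only [Set.mem_preimage, Set.mem_singleton_iff, Set.mem_union, Set.mem_iUnion,
      Set.mem_ofPred_eq, Set.mem_inter_iff, Set.mem_compl_iff]
    by_cases hx : ∃ K, vv K x + 1 < 4 ^ K
    · simp only [hx, not_true_eq_false, false_and, or_false]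
      constructor
      · rintro rfl
        obtain ⟨K, hK⟩ := hx
        exact ⟨K, hK, (ht_eq e hK).symm⟩
      · rintro ⟨K, hK, rfl⟩
        exact ht_eq e hK
    · rw [ht, dif_neg hx]
      simp only [hx, not_false_eq_true, true_and]
      constructor
      · exact Or.inr
      · rintro (⟨K, hK, -⟩ | h)
        · exact absurd ⟨K, hK⟩ hx
        · exact h
  rw [this]
  refine (MeasurableSet.iUnion fun K => hm (fun K => _) K).union
    ((MeasurableSet.iUnion fun K => hm (fun K => _) K).compl.inter (MeasurableSet.const _))

/-- The tower: the points `(x, i)` with `i < ht e x`. -/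
def dom : Set (ℤ_[2] × ℕ) := {z | z.2 < ht e z.1}

lemma measurableSet_dom : MeasurableSet (dom e) :=
  measurableSet_lt measurable_snd ((measurable_ht e).comp measurable_fst)

/-- Move one step up the column over `x`, and from its top to the bottom of the column over
`x + 1`; points outside the tower are fixed. -/
noncomputable def stepFun (z : ℤ_[2] × ℕ) : ℤ_[2] × ℕ :=
  if z.2 + 1 < ht e z.1 then (z.1, z.2 + 1)
  else if z.2 + 1 = ht e z.1 then (z.1 + 1, 0) else z

/-- The inverse of `stepFun`. -/
noncomputable def stepInv (z : ℤ_[2] × ℕ) : ℤ_[2] × ℕ :=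
  if ht e z.1 ≤ z.2 then z
  else if z.2 = 0 then (z.1 - 1, ht e (z.1 - 1) - 1) else (z.1, z.2 - 1)

lemma step_left (z : ℤ_[2] × ℕ) : stepInv e (stepFun e z) = z := by
  obtain ⟨x, i⟩ := z
  have h0 := ht_pos e x
  have h1 := ht_pos e (x + 1)
  unfold stepFun
  split_ifs with h2 h3
  · simp only at h2
    have : ¬ ht e x ≤ i + 1 := by omega
    simp [stepInv, this]
  · simp only at h3
    have : ¬ ht e (x + 1) ≤ 0 := by omega
    simp only [stepInv, this, if_false, if_true, add_sub_cancel_right, ← h3]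
    simp
  · simp only at h2 h3
    have : ht e x ≤ i := by omega
    simp [stepInv, this]

lemma step_right (z : ℤ_[2] × ℕ) : stepFun e (stepInv e z) = z := by
  obtain ⟨x, i⟩ := z
  have h1 := ht_pos e (x - 1)
  unfold stepInv
  split_ifs with h2 h3
  · simp only at h2
    have h4 : ¬ i + 1 < ht e x := by omega
    have h5 : ¬ i + 1 = ht e x := by omega
    simp [stepFun, h4, h5]
  · simp only at h3
    subst h3
    have h4 : ht e (x - 1) - 1 + 1 = ht e (x - 1) := by omega
    simp [stepFun, h4]
  · simp only at h2 h3
    have h4 : i - 1 + 1 = i := by omega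
    have h5 : i < ht e x := by omega
    simp [stepFun, h4, h5]

lemma measurable_stepFun : Measurable (stepFun e) := by
  have h : Measurable (fun z : ℤ_[2] × ℕ => ht e z.1) := (measurable_ht e).comp measurable_fst
  have h2 : Measurable (fun z : ℤ_[2] × ℕ => z.2 + 1) := by fun_prop
  unfold stepFun
  refine Measurable.ite (measurableSet_lt h2 h) (by fun_prop)
    (Measurable.ite (measurableSet_eq_fun h2 h) (by fun_prop) measurable_id)

lemma measurable_stepInv : Measurable (stepInv e) := by
  have h : Measurable (fun z : ℤ_[2] × ℕ => ht e z.1) := (measurable_ht e).comp measurable_fst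
  have hh := measurable_ht e
  unfold stepInv
  refine Measurable.ite (measurableSet_le h measurable_snd) measurable_id
    (Measurable.ite (measurable_snd (measurableSet_singleton 0)) (by fun_prop) (by fun_prop))

/-- The rank-one transformation: the tower map over the odometer `x ↦ x + 1`. -/
noncomputable def T : ℤ_[2] × ℕ ≃ᵐ ℤ_[2] × ℕ where
  toFun := stepFun e
  invFun := stepInv e
  left_inv := step_left e
  right_inv := step_right e
  measurable_toFun := measurable_stepFun e
  measurable_invFun := measurable_stepInv e

lemma T_apply_lt {x : ℤ_[2]} {i : ℕ} (h : i + 1 < ht e x) : T e (x, i) = (x, i + 1) := by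
  change stepFun e (x, i) = _
  simp [stepFun, h]

lemma T_apply_eq {x : ℤ_[2]} {i : ℕ} (h : i + 1 = ht e x) : T e (x, i) = (x + 1, 0) := by
  change stepFun e (x, i) = _
  simp [stepFun, h]

/-- Haar measure times counting measure, restricted to the tower. -/
noncomputable def mu : Measure (ℤ_[2] × ℕ) := (P.prod count).restrict (dom e)

instance : NullSingletonClass P := ⟨fun x => by
  refine le_antisymm (ENNReal.le_of_forall_pos_le_add fun ε hε _ => ?_) zero_le
  obtain ⟨K, hK⟩ := ENNReal.exists_inv_two_pow_lt (a := (ε : ENNReal)) (by simpa using hε.ne')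
  have h1 : P {x} ≤ (4 ^ K : ENNReal)⁻¹ := by
    rw [← P_cyl K (vv_lt K x)]
    exact measure_mono (by simp)
  have h2 : (4 ^ K : ENNReal)⁻¹ ≤ 2⁻¹ ^ K := by
    rw [← ENNReal.inv_pow, ENNReal.inv_le_inv]
    exact pow_le_pow_left' (by norm_num) K
  rw [zero_add]
  exact h1.trans (h2.trans hK.le)⟩

instance : SigmaFinite (mu e) := by unfold mu; infer_instance
instance : NullSingletonClass (mu e) := by unfold mu; infer_instance
instance : StandardBorelSpace (ℤ_[2] × ℕ) := inferInstance

lemma mu_apply {A : Set (ℤ_[2] × ℕ)} (hA : MeasurableSet A) :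
    mu e A = ∑' i, P {x | i < ht e x ∧ (x, i) ∈ A} := by
  rw [mu, Measure.restrict_apply hA, Measure.prod_apply_symm (hA.inter (measurableSet_dom e)),
    lintegral_count]
  congr 1
  ext i
  congr 1
  ext x
  simp [dom, and_comm]

lemma mp_T : MeasurePreserving (T e) (mu e) (mu e) := by
  refine ⟨(T e).measurable, ?_⟩
  ext A hA
  rw [Measure.map_apply (T e).measurable hA, mu_apply e hA, mu_apply e ((T e).measurable hA)]
  have hsec : ∀ i : ℕ, MeasurableSet {x : ℤ_[2] | (x, i) ∈ A} := fun i =>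
    (measurable_id.prodMk measurable_const) hA
  have hsec' : MeasurableSet {x : ℤ_[2] | (x + 1, 0) ∈ A} :=
    ((measurable_id.add_const 1).prodMk measurable_const) hA
  have hlt : ∀ i, MeasurableSet {x | i < ht e x} := fun i =>
    measurableSet_lt measurable_const (measurable_ht e)
  have heq : ∀ i, MeasurableSet {x | i = ht e x} := fun i =>
    measurableSet_eq_fun measurable_const (measurable_ht e)
  have h1 : ∀ i, P {x | i < ht e x ∧ (x, i) ∈ T e ⁻¹' A} =
      P {x | i + 1 < ht e x ∧ (x, i + 1) ∈ A} + P {x | i + 1 = ht e x ∧ (x + 1, 0) ∈ A} := by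
    intro i
    rw [← measure_union]
    · congr 1
      ext x
      simp only [Set.mem_ofPred_eq, Set.mem_union, Set.mem_preimage]
      constructor
      · rintro ⟨h, h'⟩
        rcases (Nat.succ_le_of_lt h).lt_or_eq with h2 | h2
        · rw [T_apply_lt e h2] at h'; exact Or.inl ⟨h2, h'⟩
        · rw [T_apply_eq e h2] at h'; exact Or.inr ⟨h2, h'⟩
      · rintro (⟨h, h'⟩ | ⟨h, h'⟩)
        · rw [T_apply_lt e h]; exact ⟨by omega, h'⟩
        · rw [T_apply_eq e h]; exact ⟨by omega, h'⟩
    · refine Set.disjoint_left.2 fun x hx hx' => ?_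
      have := hx.1; have := hx'.1; omega
    · exact (heq (i + 1)).inter hsec'
  simp_rw [h1]
  have h2 : ∑' i, P {x | i + 1 = ht e x ∧ (x + 1, 0) ∈ A} = P {x | (x, 0) ∈ A} := by
    rw [← measure_iUnion]
    · have : (⋃ i, {x | i + 1 = ht e x ∧ (x + 1, 0) ∈ A}) =
          (fun x => x + (1 : ℤ_[2])) ⁻¹' {x | (x, 0) ∈ A} := by
        ext x
        simp only [Set.mem_iUnion, Set.mem_ofPred_eq, Set.mem_preimage]
        have := ht_pos e x
        constructor
        · rintro ⟨_, _, h⟩; exact h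
        · intro h; exact ⟨ht e x - 1, by omega, h⟩
      rw [this, measure_preimage_add_right]
    · intro i j hij
      refine Set.disjoint_left.2 fun x hx hx' => hij ?_
      have := hx.1; have := hx'.1; omega
    · exact fun i => (heq (i + 1)).inter hsec'
  rw [ENNReal.tsum_add, h2,
    tsum_eq_zero_add' (f := fun i => P {x | i < ht e x ∧ (x, i) ∈ A}) ENNReal.summable, add_comm]
  simp only [ht_pos, true_and]

/-- The column over a point whose lowest `K` digits are all `3` and whose next digit is `0` has
height at least `(K + 1) * 4 ^ (K + 1)`, and such points have measure `(4 ^ (K + 1))⁻¹`. -/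
lemma mu_univ : mu e Set.univ = ⊤ := by
  refine ENNReal.eq_top_of_forall_nnreal_le fun r => ?_
  obtain ⟨K, hK⟩ := exists_nat_ge r
  have hr : (r : ENNReal) ≤ (K : ENNReal) := by exact_mod_cast hK
  refine hr.trans ?_
  have h4 : 0 < 4 ^ K := by positivity
  have hsub : ∀ i ∈ Finset.range ((K + 1) * 4 ^ (K + 1)),
      (4 ^ (K + 1) : ENNReal)⁻¹ ≤ P {x | i < ht e x ∧ (x, i) ∈ (Set.univ : Set (ℤ_[2] × ℕ))} := by
    intro i hi
    -- lowest `K` digits equal to `3`, digit `K` equal to `0`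
    rw [← P_cyl (K + 1) (u := 4 ^ K - 1) (by rw [pow_succ]; omega)]
    refine measure_mono fun x hx => ?_
    simp only [Set.mem_ofPred_eq, Set.mem_univ, and_true] at hx ⊢
    have h1 := g_add_ht e (K := K + 1) (x := x) (by rw [hx, pow_succ]; omega)
    rw [hx, show 4 ^ K - 1 + 1 = 0 + 4 ^ K * 1 by omega,
      g_succ_add e K h4 (by norm_num : 1 < 4), g_zero] at h1
    have h2 := g_succ_add e K (v := 4 ^ K - 1) (c := 0) (by omega) (by norm_num)
    rw [mul_zero, add_zero, lev_zero] at h2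
    have h3 := g_le e K (4 ^ K - 1)
    have h5 : (K + 1) * 4 ^ (K + 1) + G e K ≤ lev e K 1 := by
      refine le_trans ?_ ((e K).slack_le_a K (G e K))
      unfold LevelData.slack
      omega
    have := Finset.mem_range.1 hi
    omega
  rw [mu_apply e MeasurableSet.univ]
  refine le_trans ?_ (ENNReal.sum_le_tsum (Finset.range ((K + 1) * 4 ^ (K + 1))))
  refine le_trans ?_ (Finset.sum_le_sum hsub)
  rw [Finset.sum_const, Finset.card_range, nsmul_eq_mul]
  push_cast
  rw [mul_assoc, ENNReal.mul_inv_cancel (by simp) (by simp), mul_one]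
  exact le_self_add

lemma T_iter_lt {x : ℤ_[2]} {i : ℕ} (h : i < ht e x) : (T e)^[i] (x, 0) = (x, i) := by
  induction i with
  | zero => rfl
  | succ i ih => rw [Function.iterate_succ_apply', ih (by omega), T_apply_lt e h]

lemma T_iter_ht (x : ℤ_[2]) : (T e)^[ht e x] (x, 0) = (x + 1, 0) := by
  have h := ht_pos e x
  obtain ⟨n, hn⟩ : ∃ n, ht e x = n + 1 := ⟨ht e x - 1, by omega⟩
  rw [hn, Function.iterate_succ_apply', T_iter_lt e (by omega), T_apply_eq e hn.symm]

/-- The time needed to pass from the base point `x` to the base point `x + n` is the difference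
of their heights. -/
lemma T_iter_g {K n : ℕ} {x : ℤ_[2]} (h : vv K x + n < 4 ^ K) :
    ∃ N, g e K (vv K x) + N = g e K (vv K x + n) ∧ (T e)^[N] (x, 0) = (x + n, 0) := by
  induction n with
  | zero => exact ⟨0, rfl, by simp⟩
  | succ n ih =>
    obtain ⟨N, h1, h2⟩ := ih (by omega)
    have h3 := vv_add_of_lt (n := n) (x := x) (K := K) (by omega)
    have h4 := g_add_ht e (K := K) (x := x + n) (by omega)
    refine ⟨ht e (x + n) + N, ?_, ?_⟩
    · rw [h3] at h4
      rw [← add_assoc (vv K x), ← h4, ← h1]; ring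
    · rw [Function.iterate_add_apply, h2, T_iter_ht]
      push_cast
      rw [add_assoc]

/-- Conversely, every return to the base is to some `x + r`, after a time equal to the height
difference. -/
lemma T_return (N : ℕ) : ∀ {x x' : ℤ_[2]}, (T e)^[N] (x, 0) = (x', 0) →
    ∃ r : ℕ, x' = x + r ∧ ∀ K, vv K x + r < 4 ^ K → g e K (vv K x) + N = g e K (vv K x + r) := by
  induction N using Nat.strong_induction_on with
  | _ N ih =>
    intro x x' h
    by_cases hN : N < ht e x
    · rw [T_iter_lt e hN, Prod.mk.injEq] at h
      obtain ⟨rfl, rfl⟩ := h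
      exact ⟨0, by simp, by simp⟩
    · have hpos := ht_pos e x
      obtain ⟨M, rfl⟩ := Nat.exists_eq_add_of_le' (not_lt.1 hN)
      rw [Function.iterate_add_apply, T_iter_ht] at h
      obtain ⟨r, rfl, hr⟩ := ih M (by omega) h
      refine ⟨r + 1, by push_cast; ring, fun K hK => ?_⟩
      have h3 := vv_add_of_lt (n := 1) (x := x) (K := K) (by omega)
      have h4 := g_add_ht e (K := K) (x := x) (by omega)
      have h5 := hr K (by push_cast at h3; omega)
      push_cast at h3
      rw [h3] at h5
      rw [add_comm r 1, ← add_assoc (vv K x), ← h5, ← h4]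
      ring

end Tower

/-! ### Ergodic products -/

section ErgodicProducts
open MeasureTheory Measure

/-- The level-`k` cylinder over `(u, w)` in `ℤ₂ × ℤ₂`. -/
def cyl (k u w : ℕ) : Set (ℤ_[2] × ℤ_[2]) := {z | vv k z.1 = u ∧ vv k z.2 = w}

lemma measurableSet_cyl (k u w : ℕ) : MeasurableSet (cyl k u w) :=
  ((measurable_vv k).comp measurable_fst (measurableSet_singleton u)).inter
    ((measurable_vv k).comp measurable_snd (measurableSet_singleton w))

lemma PP_cyl {k u w : ℕ} (hu : u < 4 ^ k) (hw : w < 4 ^ k) :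
    (P.prod P) (cyl k u w) = (4 ^ k : ENNReal)⁻¹ * (4 ^ k : ENNReal)⁻¹ := by
  have : cyl k u w = {x | vv k x = u} ×ˢ {y | vv k y = w} := rfl
  rw [this, Measure.prod_prod, P_cyl k hu, P_cyl k hw]

/-- A set of positive measure fills all but one part in 64 of some cylinder, at every sufficiently
fine level. An open superset is almost exhausted by its level-`k` cylinders, and not all of them can
have a large part outside the set. -/
lemma exists_dense_cyl {E : Set (ℤ_[2] × ℤ_[2])} (hE : MeasurableSet E)
    (h0 : (P.prod P) E ≠ 0) :
    ∃ k0, ∀ k ≥ k0, ∃ u < 4 ^ k, ∃ w < 4 ^ k,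
      64 * (P.prod P) (cyl k u w \ E) < (P.prod P) (cyl k u w) := by
  classical
  have hε : (P.prod P) E / 128 ≠ 0 := by simp [h0]
  obtain ⟨U, hEU, hU, -, hd⟩ := hE.exists_isOpen_sdiff_lt (measure_ne_top (P.prod P) E) hε
  set Uk : ℕ → Set (ℤ_[2] × ℤ_[2]) := fun k =>
    {z | ∀ z' : ℤ_[2] × ℤ_[2], vv k z'.1 = vv k z.1 → vv k z'.2 = vv k z.2 → z' ∈ U} with hUk
  have hmono : Monotone Uk := by
    intro k K hk z hz z' h1 h2
    refine hz z' ?_ ?_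
    · rw [← vv_mod hk, ← vv_mod hk z.1, h1]
    · rw [← vv_mod hk, ← vv_mod hk z.2, h2]
  have hun : ⋃ k, Uk k = U := by
    ext z
    simp only [Set.mem_iUnion]
    constructor
    · rintro ⟨k, hk⟩; exact hk z rfl rfl
    · intro hz
      obtain ⟨δ, hδ, hb⟩ := Metric.isOpen_iff.1 hU z hz
      obtain ⟨k, hk⟩ := exists_pow_lt_of_lt_one hδ (by norm_num : (4⁻¹ : ℝ) < 1)
      refine ⟨k, fun z' h1 h2 => hb ?_⟩
      rw [vv_sub_iff, ← inv_pow] at h1 h2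
      rw [Metric.mem_ball, Prod.dist_eq, max_lt_iff, dist_eq_norm, dist_eq_norm]
      exact ⟨h1.trans_lt hk, h2.trans_lt hk⟩
  have hlim := tendsto_measure_iUnion_atTop (μ := P.prod P) hmono
  rw [hun] at hlim
  have hlt : (P.prod P) E / 2 < (P.prod P) U :=
    (ENNReal.half_lt_self h0 (measure_ne_top _ _)).trans_le (measure_mono hEU)
  obtain ⟨k0, hk0⟩ := Filter.eventually_atTop.1 (hlim.eventually_const_lt hlt)
  refine ⟨k0, fun k hk => ?_⟩
  by_contra! hcon
  have hbig := hk0 k hk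
  set S : Finset (ℕ × ℕ) := (Finset.range (4 ^ k) ×ˢ Finset.range (4 ^ k)).filter
    (fun uw => cyl k uw.1 uw.2 ⊆ U) with hS
  have hUS : Uk k ⊆ ⋃ uw ∈ S, cyl k uw.1 uw.2 := by
    intro z hz
    simp only [Set.mem_iUnion]
    refine ⟨(vv k z.1, vv k z.2), ?_, rfl, rfl⟩
    simp only [hS, Finset.mem_filter, Finset.mem_product, Finset.mem_range]
    exact ⟨⟨vv_lt _ _, vv_lt _ _⟩, fun z' hz' => hz z' hz'.1 hz'.2⟩
  have hdisj : ∀ F : Set (ℤ_[2] × ℤ_[2]),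
      (S : Set (ℕ × ℕ)).PairwiseDisjoint (fun uw => cyl k uw.1 uw.2 \ F) := by
    intro F a _ b _ hab
    refine Set.disjoint_left.2 fun x hx hx' => hab ?_
    exact Prod.ext (hx.1.1.symm.trans hx'.1.1) (hx.1.2.symm.trans hx'.1.2)
  have hsmall : (P.prod P) (Uk k) ≤ 64 * (P.prod P) (U \ E) :=
    calc (P.prod P) (Uk k) ≤ (P.prod P) (⋃ uw ∈ S, cyl k uw.1 uw.2) := measure_mono hUS
      _ ≤ ∑ uw ∈ S, (P.prod P) (cyl k uw.1 uw.2) := measure_biUnion_finset_le _ _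
      _ ≤ ∑ uw ∈ S, 64 * (P.prod P) (cyl k uw.1 uw.2 \ E) := by
          refine Finset.sum_le_sum fun uw huw => ?_
          simp only [hS, Finset.mem_filter, Finset.mem_product, Finset.mem_range] at huw
          exact hcon _ huw.1.1 _ huw.1.2
      _ = 64 * (P.prod P) (⋃ uw ∈ S, cyl k uw.1 uw.2 \ E) := by
          rw [← Finset.mul_sum, measure_biUnion_finset (hdisj E)
            fun uw _ => (measurableSet_cyl k _ _).diff hE]
      _ ≤ 64 * (P.prod P) (U \ E) := by
          gcongr
          refine Set.iUnion₂_subset fun uw huw => ?_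
          simp only [hS, Finset.mem_filter] at huw
          exact Set.sdiff_subset_sdiff_left huw.2
  have h3 : 64 * (P.prod P) (U \ E) ≤ (P.prod P) E / 2 := by
    calc 64 * (P.prod P) (U \ E) ≤ 64 * ((P.prod P) E / 128) := by gcongr
      _ = (P.prod P) E / 2 := by
        rw [show (128 : ENNReal) = 64 * 2 by norm_num, div_eq_mul_inv, div_eq_mul_inv,
          ENNReal.mul_inv (by simp) (by simp), mul_left_comm, ← mul_assoc 64,
          ENNReal.mul_inv_cancel (by simp) (by simp), one_mul]
  exact absurd hbig (not_lt.2 (hsmall.trans h3))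

variable (e : ℕ → LevelData)

lemma mu_null_iff {A : Set (ℤ_[2] × ℕ)} (hA : MeasurableSet A) :
    mu e A = 0 ↔ ∀ i, P {x | i < ht e x ∧ (x, i) ∈ A} = 0 := by
  rw [mu_apply e hA, ENNReal.tsum_eq_zero]

/-- The pairs of base points whose `(i, j)`-th translates lie in `A`. -/
def sect (A : Set ((ℤ_[2] × ℕ) × (ℤ_[2] × ℕ))) (i j : ℕ) : Set (ℤ_[2] × ℤ_[2]) :=
  {z | ((T e)^[i] (z.1, 0), (T e)^[j] (z.2, 0)) ∈ A}

lemma measurableSet_sect {A : Set ((ℤ_[2] × ℕ) × (ℤ_[2] × ℕ))} (hA : MeasurableSet A) (i j : ℕ) :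
    MeasurableSet (sect e A i j) := by
  have h1 : Measurable fun z : ℤ_[2] × ℤ_[2] => (T e)^[i] (z.1, 0) :=
    ((T e).measurable.iterate i).comp (measurable_fst.prodMk measurable_const)
  have h2 : Measurable fun z : ℤ_[2] × ℤ_[2] => (T e)^[j] (z.2, 0) :=
    ((T e).measurable.iterate j).comp (measurable_snd.prodMk measurable_const)
  exact (h1.prodMk h2) hA

/-- A non-null subset of the product of two towers is seen from the base, because every point
`(x, i)` of the tower is `T ^ i (x, 0)`. -/
lemma exists_sect_pos {A : Set ((ℤ_[2] × ℕ) × (ℤ_[2] × ℕ))} (hA : MeasurableSet A)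
    (h : ((mu e).prod (mu e)) A ≠ 0) : ∃ i j, (P.prod P) (sect e A i j) ≠ 0 := by
  by_contra! hcon
  apply h
  rw [measure_prod_null hA]
  have h1 : ∀ᵐ x ∂P, ∀ i j, P (Prod.mk x ⁻¹' sect e A i j) = 0 := by
    rw [ae_all_iff]; intro i
    rw [ae_all_iff]; intro j
    exact (measure_prod_null (measurableSet_sect e hA i j)).1 (hcon i j)
  have hm : MeasurableSet {a | mu e (Prod.mk a ⁻¹' A) = 0} :=
    (measurable_measure_prodMk_left hA) (measurableSet_singleton 0)
  change mu e {a | mu e (Prod.mk a ⁻¹' A) = 0}ᶜ = 0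
  rw [mu_null_iff e hm.compl]
  intro i
  refine measure_mono_null ?_ (ae_iff.1 h1)
  rintro x ⟨hi, hx⟩ hgood
  refine hx ?_
  change mu e (Prod.mk (x, i) ⁻¹' A) = 0
  rw [mu_null_iff e (measurable_prodMk_left hA)]
  intro j
  refine measure_mono_null ?_ (hgood i j)
  rintro y ⟨hj, hy⟩
  change ((T e)^[i] (x, 0), (T e)^[j] (y, 0)) ∈ A
  rw [T_iter_lt e hi, T_iter_lt e hj]
  exact hy

/-- Changing the residue modulo `4 ^ k` from `u` to another value and the `m`-th digit from `c` to
`d` turns the orbit of the base point `x` into that of the new base point, with the time shift read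
off from the heights. -/
lemma T_shift {k m : ℕ} (hkm : k ≤ m) {x : ℤ_[2]} {u u' c d n i : ℕ} (hu : vv k x = u)
    (hc : vv (m + 1) x / 4 ^ m = c) (hu' : u' < 4 ^ k) (hd : d < 4)
    (hn : n + (g e k u + lev e m c) = i + (g e k u' + lev e m d)) :
    vv k (x + ((u' : ℤ_[2]) - u + 4 ^ m * ((d : ℤ_[2]) - c))) = u' ∧
    (T e)^[n] (x, 0) = (T e)^[i] (x + ((u' : ℤ_[2]) - u + 4 ^ m * ((d : ℤ_[2]) - c)), 0) := by
  set V := vv (m + 1) x with hV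
  have hVlt : V < 4 ^ (m + 1) := vv_lt _ _
  have hc4 : c < 4 := by
    rw [← hc]; exact Nat.div_lt_of_lt_mul (by rw [← pow_succ]; exact hVlt)
  have hult : u < 4 ^ k := hu ▸ vv_lt k x
  -- `V = 4 ^ k * r + u + 4 ^ m * c`
  have hm1 : V % 4 ^ m = vv m x := vv_mod (Nat.le_succ m) x
  have hm2 : vv m x % 4 ^ k = u := by rw [vv_mod hkm, hu]
  have hm3 := Nat.div_add_mod V (4 ^ m)
  have hm4 := Nat.div_add_mod (vv m x) (4 ^ k)
  have hmlt := vv_lt m x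
  set r := vv m x / 4 ^ k with hr
  rw [hc, hm1] at hm3
  rw [hm2] at hm4
  have hWu' : 4 ^ k * r + u' < 4 ^ m := by
    obtain ⟨j, rfl⟩ := Nat.exists_eq_add_of_le hkm
    have h1 : r < 4 ^ j := Nat.div_lt_of_lt_mul (by rwa [← pow_add])
    have h2 : 4 ^ k * (r + 1) ≤ 4 ^ k * 4 ^ j := Nat.mul_le_mul_left _ h1
    rw [pow_add]; rw [mul_add] at h2; omega
  set V' := 4 ^ k * r + u' + 4 ^ m * d with hV'
  have hV'lt : V' < 4 ^ (m + 1) := by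
    have : 4 ^ m * d ≤ 4 ^ m * 3 := Nat.mul_le_mul_left _ (by omega)
    rw [pow_succ]; omega
  have hVeq : V = 4 ^ k * r + u + 4 ^ m * c := by omega
  have gV : g e (m + 1) V = g e m (4 ^ k * r) + g e k u + lev e m c := by
    rw [hVeq, g_succ_add e m (by omega) hc4, g_add_low e hkm (dvd_mul_right _ _) hult]
  have gV' : g e (m + 1) V' = g e m (4 ^ k * r) + g e k u' + lev e m d := by
    rw [hV', g_succ_add e m hWu' hd, g_add_low e hkm (dvd_mul_right _ _) hu']
  have hx0 : vv (m + 1) (x - V) = 0 := by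
    have h1 := vv_add (m + 1) V (x - V)
    rw [sub_add_cancel, ← hV] at h1
    have h2 := vv_lt (m + 1) (x - V)
    by_cases h3 : vv (m + 1) (x - V) + V < 4 ^ (m + 1)
    · rw [Nat.mod_eq_of_lt h3] at h1; omega
    · rw [Nat.mod_eq_sub_mod (by omega), Nat.mod_eq_of_lt (by omega)] at h1; omega
  have hx' : x + ((u' : ℤ_[2]) - u + 4 ^ m * ((d : ℤ_[2]) - c)) = (x - V) + (V' : ℕ) := by
    rw [hVeq, hV']; push_cast; ring
  rw [hx']
  constructor
  · have hx0k : vv k (x - V) = 0 := by rw [← vv_mod (by omega : k ≤ m + 1), hx0, Nat.zero_mod]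
    obtain ⟨j, rfl⟩ := Nat.exists_eq_add_of_le hkm
    rw [vv_add, hx0k, zero_add, hV', pow_add,
      show 4 ^ k * r + u' + 4 ^ k * 4 ^ j * d = u' + 4 ^ k * (r + 4 ^ j * d) by ring,
      Nat.add_mul_mod_self_left, Nat.mod_eq_of_lt hu']
  · obtain ⟨N, hN, hT⟩ := T_iter_g e (K := m + 1) (n := V) (x := x - V) (by omega)
    obtain ⟨N', hN', hT'⟩ := T_iter_g e (K := m + 1) (n := V') (x := x - V) (by omega)
    rw [hx0, g_zero, zero_add, zero_add] at hN hN'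
    rw [sub_add_cancel] at hT
    rw [← hT, ← hT', ← Function.iterate_add_apply, ← Function.iterate_add_apply]
    have hfin : n + N = i + N' := by omega
    rw [hfin]

/-- Two complementary invariant sets of positive measure fill most of two cylinders. A level `m`
with ratio `p / q` and suitable offsets lets the `L`-th power of the product map carry a
sixteenth of one cylinder (digits `0` and `1` at level `m`) into the other (digits `2` and `3`),
which contradicts invariance. -/
lemma no_two_invariant {p q : ℕ}
    (hpq : ∀ (k : ℕ) (s t : ℤ), ∃ m ≥ k, (e m).p = p ∧ (e m).q = q ∧ (e m).s = s ∧ (e m).t = t)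
    {A : Set ((ℤ_[2] × ℕ) × (ℤ_[2] × ℕ))} (hA : MeasurableSet A)
    (hinv : Prod.map (T e)^[p] (T e)^[q] ⁻¹' A = A) :
    ((mu e).prod (mu e)) A = 0 ∨ ((mu e).prod (mu e)) Aᶜ = 0 := by
  by_contra! hcon
  obtain ⟨i, j, h1⟩ := exists_sect_pos e hA hcon.1
  obtain ⟨i', j', h2⟩ := exists_sect_pos e hA.compl hcon.2
  have hm1 := measurableSet_sect e hA i j
  have hm2 := measurableSet_sect e hA.compl i' j'
  obtain ⟨k1, hk1⟩ := exists_dense_cyl hm1 h1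
  obtain ⟨k2, hk2⟩ := exists_dense_cyl hm2 h2
  set k := max k1 k2
  obtain ⟨u, hu, w, hw, hd1⟩ := hk1 k (le_max_left _ _)
  obtain ⟨u', hu', w', hw', hd2⟩ := hk2 k (le_max_right _ _)
  obtain ⟨m, hkm, rfl, rfl, hs, ht⟩ := hpq k ((i + g e k u : ℕ) - (i' + g e k u' : ℕ))
    ((j + g e k w : ℕ) - (j' + g e k w' : ℕ))
  set L := (e m).L m (G e m) with hL
  have e2 : (lev e m 2 : ℤ) = (e m).p * L + (e m).s := (e m).pos_two m (G e m)
  have e3 : (lev e m 3 : ℤ) = lev e m 1 + (e m).q * L + (e m).t := (e m).pos_three m (G e m)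
  have n1 : ((e m).p * L + i) + (g e k u + lev e m 0) = i' + (g e k u' + lev e m 2) := by
    rw [hs] at e2; rw [lev_zero]; zify; push_cast at e2; linarith
  have n2 : ((e m).q * L + j) + (g e k w + lev e m 1) = j' + (g e k w' + lev e m 3) := by
    rw [ht] at e3; zify; push_cast at e3; linarith
  set F : Set (ℤ_[2] × ℤ_[2]) := {x | vv k x = u ∧ vv (m + 1) x / 4 ^ m = 0} ×ˢ
    {y | vv k y = w ∧ vv (m + 1) y / 4 ^ m = 1} with hF
  have hPF : (P.prod P) F = (4 ^ (k + 1) : ENNReal)⁻¹ * (4 ^ (k + 1) : ENNReal)⁻¹ := by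
    rw [hF, Measure.prod_prod, P_cyl_digit hkm hu (by norm_num), P_cyl_digit hkm hw (by norm_num)]
  set φ : ℤ_[2] × ℤ_[2] → ℤ_[2] × ℤ_[2] := Prod.map
    (fun x => x + ((u' : ℤ_[2]) - u + 4 ^ m * (((2 : ℕ) : ℤ_[2]) - (0 : ℕ))))
    (fun y => y + ((w' : ℤ_[2]) - w + 4 ^ m * (((3 : ℕ) : ℤ_[2]) - (1 : ℕ)))) with hφ
  have hφm : MeasurePreserving φ (P.prod P) (P.prod P) :=
    (measurePreserving_add_right P _).prod (measurePreserving_add_right P _)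
  have hinvL : Prod.map (T e)^[(e m).p * L] (T e)^[(e m).q * L] ⁻¹' A = A := by
    have : Prod.map (T e)^[(e m).p * L] (T e)^[(e m).q * L] =
        (Prod.map (T e)^[(e m).p] (T e)^[(e m).q])^[L] := by
      rw [Prod.map_iterate, ← Function.iterate_mul, ← Function.iterate_mul]
    rw [this, Set.preimage_iterate_eq]
    exact Function.iterate_fixed hinv L
  have hsub : F ⊆ (cyl k u w \ sect e A i j) ∪ φ ⁻¹' (cyl k u' w' \ sect e Aᶜ i' j') := by
    rintro ⟨x, y⟩ ⟨⟨hx1, hx2⟩, ⟨hy1, hy2⟩⟩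
    obtain ⟨hx3, hx4⟩ := T_shift e hkm hx1 hx2 hu' (by norm_num) n1
    obtain ⟨hy3, hy4⟩ := T_shift e hkm hy1 hy2 hw' (by norm_num) n2
    by_cases hz : (x, y) ∈ sect e A i j
    · refine Or.inr ⟨⟨hx3, hy3⟩, fun hz' => hz' ?_⟩
      have hz2 : ((T e)^[i] (x, 0), (T e)^[j] (y, 0)) ∈ A := hz
      rw [← hinvL, Set.mem_preimage, Prod.map_apply, ← Function.iterate_add_apply,
        ← Function.iterate_add_apply, hx4, hy4] at hz2
      exact hz2
    · exact Or.inl ⟨⟨hx1, hy1⟩, hz⟩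
  have hle : (P.prod P) F ≤ (P.prod P) (cyl k u w \ sect e A i j) +
      (P.prod P) (cyl k u' w' \ sect e Aᶜ i' j') := by
    refine (measure_mono hsub).trans ((measure_union_le _ _).trans ?_)
    rw [hφm.measure_preimage ((measurableSet_cyl _ _ _).diff hm2).nullMeasurableSet]
  have h16 : ∀ u < 4 ^ k, ∀ w < 4 ^ k, (P.prod P) (cyl k u w) = 16 * (P.prod P) F := by
    intro u hu w hw
    have h4 : (4 ^ k : ENNReal)⁻¹ = 4 * (4 ^ (k + 1) : ENNReal)⁻¹ := by
      rw [pow_succ, ENNReal.mul_inv (by simp) (by simp), mul_left_comm,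
        ENNReal.mul_inv_cancel (by simp) (by simp), mul_one]
    rw [PP_cyl hu hw, hPF, h4]
    ring
  rw [h16 u hu w hw] at hd1
  rw [h16 u' hu' w' hw'] at hd2
  have hfin := ENNReal.add_lt_add hd1 hd2
  rw [← mul_add] at hfin
  have h5 : 64 * (P.prod P) F < 16 * (P.prod P) F + 16 * (P.prod P) F :=
    (mul_le_mul_right hle 64).trans_lt hfin
  rw [← add_mul] at h5
  refine absurd h5 (not_lt.2 ?_)
  gcongr
  norm_num

lemma prod_ergodic {p q : ℕ}
    (hpq : ∀ (k : ℕ) (s t : ℤ), ∃ m ≥ k, (e m).p = p ∧ (e m).q = q ∧ (e m).s = s ∧ (e m).t = t)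
    {A : Set ((ℤ_[2] × ℕ) × (ℤ_[2] × ℕ))} (hA : MeasurableSet A)
    (hinv : ((mu e).prod (mu e)) (symmDiff (Prod.map (T e)^[p] (T e)^[q] ⁻¹' A) A) = 0) :
    ((mu e).prod (mu e)) A = 0 ∨ ((mu e).prod (mu e)) Aᶜ = 0 := by
  have hmp := (((mp_T e).iterate p).prod ((mp_T e).iterate q)).quasiMeasurePreserving
  obtain ⟨t, ht, hta, htinv⟩ := hmp.exists_preimage_eq_of_preimage_ae hA.nullMeasurableSet
    (measure_symmDiff_eq_zero_iff.1 hinv)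
  rw [← measure_congr hta, ← measure_congr hta.compl]
  exact no_two_invariant e hpq ht htinv

end ErgodicProducts

/-! ### Products with a wandering set -/

section Wandering
open MeasureTheory Measure
variable (e : ℕ → LevelData)

/-- The 2-adic integers that are not negative rational integers: their forward orbit under
`x ↦ x + 1` carries arbitrarily far without overflow. -/
def nonNeg : Set ℤ_[2] := {x | ∀ j : ℕ, x + j ≠ -1}

lemma nonNeg_compl_countable : (nonNegᶜ).Countable := by
  refine (Set.countable_range fun j : ℕ => (-1 - j : ℤ_[2])).mono fun x hx => ?_
  simp only [nonNeg, Set.mem_compl_iff, Set.mem_ofPred_eq, not_forall, not_not] at hx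
  obtain ⟨j, hj⟩ := hx
  exact ⟨j, by simp only [← hj, add_sub_cancel_right]⟩

/-- The part of the base of the tower over the level-`K` cylinder at `u`, without the negative
integers. -/
def base (K u : ℕ) : Set (ℤ_[2] × ℕ) := ({x | vv K x = u} ∩ nonNeg) ×ˢ {0}

lemma measurableSet_base (K u : ℕ) : MeasurableSet (base K u) := by
  have h : MeasurableSet nonNeg := by
    have := nonNeg_compl_countable.measurableSet.compl
    rwa [compl_compl] at this
  exact ((measurable_vv K (measurableSet_singleton u)).inter h).prod (measurableSet_singleton 0)

lemma mu_base_ne_zero {K u : ℕ} (hu : u < 4 ^ K) : mu e (base K u) ≠ 0 := by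
  intro h
  have h1 := (mu_null_iff e (measurableSet_base K u)).1 h 0
  have h2 : P {x | vv K x = u} = 0 := by
    refine measure_mono_null (fun x hx => ?_)
      (measure_union_null h1 (nonNeg_compl_countable.measure_zero P))
    by_cases hn : x ∈ nonNeg
    · exact Or.inl ⟨ht_pos e x, ⟨hx, hn⟩, rfl⟩
    · exact Or.inr hn
  rw [P_cyl K hu] at h2
  simp at h2

/-- The square of the base over the residue `0` modulo `4 ^ k` never returns to itself under the
product map, except trivially. -/
lemma base_return {p q k : ℕ} (hp : 0 < p) (hpq : p < q) (hqk : q ≤ k)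
    (hne : ∀ m, p * (e m).q ≠ q * (e m).p) {z z' : (ℤ_[2] × ℕ) × (ℤ_[2] × ℕ)}
    (hz : z ∈ base k 0 ×ˢ base k 0) (hz' : z' ∈ base k 0 ×ˢ base k 0) {n : ℕ}
    (h : (Prod.map (T e)^[p] (T e)^[q])^[n] z = z') : z = z' := by
  obtain ⟨⟨x, i⟩, ⟨y, j⟩⟩ := z
  obtain ⟨⟨x', i'⟩, ⟨y', j'⟩⟩ := z'
  obtain ⟨⟨⟨hx, hxn⟩, hi⟩, ⟨⟨hy, hyn⟩, hj⟩⟩ := hz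
  obtain ⟨⟨⟨hx', -⟩, hi'⟩, ⟨⟨hy', -⟩, hj'⟩⟩ := hz'
  simp only [Set.mem_singleton_iff, Set.mem_ofPred_eq] at *
  subst hi hj hi' hj'
  rw [Prod.map_iterate, ← Function.iterate_mul, ← Function.iterate_mul, Prod.map_apply,
    Prod.mk.injEq] at h
  obtain ⟨r, rfl, hr⟩ := T_return e _ h.1
  obtain ⟨r', rfl, hr'⟩ := T_return e _ h.2
  obtain ⟨K1, hK1⟩ := exists_vv_add_lt hxn r
  obtain ⟨K2, hK2⟩ := exists_vv_add_lt hyn r'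
  set K := max k (max K1 K2) with hK
  have hkK : k ≤ K := le_max_left _ _
  have hKx : vv K x + r < 4 ^ K :=
    vv_lt_mono ((le_max_left K1 K2).trans (le_max_right k _)) hK1
  have hKy : vv K y + r' < 4 ^ K :=
    vv_lt_mono ((le_max_right K1 K2).trans (le_max_right k _)) hK2
  have hdvd : ∀ x : ℤ_[2], vv k x = 0 → 4 ^ k ∣ vv K x := fun x hx =>
    Nat.dvd_of_mod_eq_zero (by rw [vv_mod hkK, hx])
  have hg := hr K hKx
  have hg' := hr' K hKy
  have d1 := hdvd _ hx'
  have d2 := hdvd _ hy'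
  rw [vv_add_of_lt hKx] at d1
  rw [vv_add_of_lt hKy] at d2
  obtain ⟨e1, e2⟩ := g_rigid e hp hpq hqk hne hkK (vv_lt K x) hKx (vv_lt K y) hKy
    (hdvd x hx) d1 (hdvd y hy) d2 (by rw [← hg, ← hg']; push_cast; ring)
  have hr0 : r = 0 := by omega
  have hr0' : r' = 0 := by omega
  simp [hr0', hr0]

/-- The saturation of one half of a wandering set is invariant and misses the other half. -/
lemma prod_not_ergodic {p q : ℕ} (hp : 0 < p) (hpq : p < q)
    (hne : ∀ m, p * (e m).q ≠ q * (e m).p) :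
    ∃ B : Set ((ℤ_[2] × ℕ) × (ℤ_[2] × ℕ)), MeasurableSet B ∧
      Prod.map (T e)^[p] (T e)^[q] ⁻¹' B = B ∧
      ((mu e).prod (mu e)) B ≠ 0 ∧ ((mu e).prod (mu e)) Bᶜ ≠ 0 := by
  set τ := Prod.map (T e)^[p] (T e)^[q] with hτ
  have hτinj : Function.Injective τ :=
    ((T e).injective.iterate p).prodMap ((T e).injective.iterate q)
  have hτm : Measurable τ :=
    ((T e).measurable.iterate p).prodMap ((T e).measurable.iterate q)
  set W' := base (q + 1) 0 ×ˢ base q 0 with hW'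
  set B := ⋃ a : ℕ, ⋃ b : ℕ, τ^[a] ⁻¹' (τ^[b] '' W') with hB
  have hmem : ∀ z, z ∈ B ↔ ∃ a b : ℕ, ∃ w ∈ W', τ^[b] w = τ^[a] z := by
    intro z; simp [hB]
  have h4 : 0 < 4 ^ q := by positivity
  have hsub : ∀ u, u % 4 ^ q = 0 → base (q + 1) u ⊆ base q 0 := by
    rintro u hu ⟨x, i⟩ ⟨⟨hx, hn⟩, hi⟩
    refine ⟨⟨?_, hn⟩, hi⟩
    simp only [Set.mem_ofPred_eq] at hx ⊢
    rw [← vv_mod (Nat.le_succ q), hx, hu]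
  refine ⟨B, ?_, ?_, ?_, ?_⟩
  · refine MeasurableSet.iUnion fun a => MeasurableSet.iUnion fun b => (hτm.iterate a) ?_
    have : MeasurableSpace.CountablySeparated ((ℤ_[2] × ℕ) × (ℤ_[2] × ℕ)) :=
      MeasurableSpace.countablySeparated_of_separatesPoints
    exact ((measurableSet_base _ _).prod (measurableSet_base _ _)).image_of_measurable_injOn
      (hτm.iterate b) (hτinj.iterate b).injOn
  · ext z
    rw [Set.mem_preimage, hmem, hmem]
    constructor
    · rintro ⟨a, b, w, hw, h⟩
      exact ⟨a + 1, b, w, hw, by rw [h, Function.iterate_succ_apply]⟩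
    · rintro ⟨a, b, w, hw, h⟩
      refine ⟨a, b + 1, w, hw, ?_⟩
      rw [Function.iterate_succ_apply', h]
      exact (Function.iterate_succ_apply' τ a z).symm
  · intro h0
    have : ((mu e).prod (mu e)) W' = 0 :=
      measure_mono_null (fun z hz => (hmem z).2 ⟨0, 0, z, hz, rfl⟩) h0
    rw [hW', Measure.prod_prod, mul_eq_zero] at this
    exact this.elim (mu_base_ne_zero e (by positivity)) (mu_base_ne_zero e (by positivity))
  · intro h0
    have : ((mu e).prod (mu e)) (base (q + 1) (4 ^ q) ×ˢ base q 0) = 0 := by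
      refine measure_mono_null (t := Bᶜ) (fun z hz hzB => ?_) h0
      obtain ⟨a, b, w, hw, h⟩ := (hmem z).1 hzB
      have hzW : z ∈ base q 0 ×ˢ base q 0 := ⟨hsub _ (Nat.mod_self _) hz.1, hz.2⟩
      have hwW : w ∈ base q 0 ×ˢ base q 0 := ⟨hsub _ (Nat.zero_mod _) hw.1, hw.2⟩
      have hzw : z = w := by
        rcases le_total a b with hab | hab
        · obtain ⟨c, rfl⟩ := Nat.exists_eq_add_of_le hab
          rw [Function.iterate_add_apply] at h
          exact (base_return e hp hpq le_rfl hne hwW hzW (hτinj.iterate a h)).symm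
        · obtain ⟨c, rfl⟩ := Nat.exists_eq_add_of_le hab
          rw [Function.iterate_add_apply] at h
          exact base_return e hp hpq le_rfl hne hzW hwW (hτinj.iterate b h).symm
      have e1 : vv (q + 1) z.1.1 = 4 ^ q := hz.1.1.1
      have e2 : vv (q + 1) w.1.1 = 0 := hw.1.1.1
      rw [hzw] at e1
      omega
    rw [Measure.prod_prod, mul_eq_zero] at this
    exact this.elim (mu_base_ne_zero e (by rw [pow_succ]; omega))
      (mu_base_ne_zero e (by positivity))

end Wandering

/-! ### The sequence of level data -/

section Enumeration

open Classical in
/-- The level data attached to a code `(p, q, s, t)`: the code itself when `p / q ∈ R`, and a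
trivial one with ratio `1` otherwise. -/
noncomputable def codeData (R : Set ℚ) (hR : R ⊆ {r : ℚ | 0 < r ∧ r < 1}) (c : ℕ × ℕ × ℤ × ℤ) :
    LevelData :=
  if h : ((c.1 : ℚ) / (c.2.1 : ℚ)) ∈ R then
    { p := c.1
      q := c.2.1
      s := c.2.2.1
      t := c.2.2.2
      hp := by
        rcases Nat.eq_zero_or_pos c.1 with h0 | h0
        · have := (hR h).1
          simp [h0] at this
        · exact h0
      hpq := by
        have h1 := hR h
        have hq : (0 : ℚ) < c.2.1 := by
          rcases Nat.eq_zero_or_pos c.2.1 with h0 | h0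
          · have := h1.1
            simp [h0] at this
          · exact_mod_cast h0
        have h2 := (div_lt_one hq).1 h1.2
        exact_mod_cast h2.le }
  else { p := 1, q := 1, s := 0, t := 0, hp := one_pos, hpq := le_rfl }

/-- A sequence of level data in which every code occurs infinitely often. -/
noncomputable def levels (R : Set ℚ) (hR : R ⊆ {r : ℚ | 0 < r ∧ r < 1}) (m : ℕ) : LevelData :=
  codeData R hR ((Denumerable.eqv (ℕ × (ℕ × ℕ × ℤ × ℤ))).symm m).2

lemma levels_frequent (R : Set ℚ) (hR : R ⊆ {r : ℚ | 0 < r ∧ r < 1}) {p q : ℕ}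
    (h : ((p : ℚ) / (q : ℚ)) ∈ R) (k : ℕ) (s t : ℤ) :
    ∃ m ≥ k, (levels R hR m).p = p ∧ (levels R hR m).q = q ∧ (levels R hR m).s = s ∧
      (levels R hR m).t = t := by
  have hinj : Function.Injective
      (fun n : ℕ => Denumerable.eqv (ℕ × (ℕ × ℕ × ℤ × ℤ)) (n, (p, q, s, t))) := by
    intro a b hab
    simpa using hab
  obtain ⟨m, ⟨n, hn⟩, hm⟩ := (Set.infinite_range_of_injective hinj).exists_gt k
  refine ⟨m, hm.le, ?_⟩
  simp only at hn
  rw [levels, ← hn, Equiv.symm_apply_apply, codeData]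
  rw [dif_pos h]
  exact ⟨rfl, rfl, rfl, rfl⟩

lemma levels_ratio (R : Set ℚ) (hR : R ⊆ {r : ℚ | 0 < r ∧ r < 1}) {p q : ℕ} (hp : 0 < p)
    (hpq : p < q) (h : ((p : ℚ) / (q : ℚ)) ∉ R) (m : ℕ) :
    p * (levels R hR m).q ≠ q * (levels R hR m).p := by
  unfold levels
  generalize ((Denumerable.eqv (ℕ × (ℕ × ℕ × ℤ × ℤ))).symm m).2 = c
  unfold codeData
  split_ifs with hc
  · intro heq
    apply h
    convert hc using 1
    have h1 : (q : ℚ) ≠ 0 := by exact_mod_cast (by omega : q ≠ 0)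
    have h2 : (c.2.1 : ℚ) ≠ 0 := by
      intro h0
      have := (hR hc).1
      simp [h0] at this
    rw [div_eq_div_iff h1 h2]
    simp only at heq
    rw [mul_comm q] at heq
    exact_mod_cast heq
  · simp only [mul_one]
    omega

end Enumeration

end OdometerTower

open OdometerTower

theorem stmt4 (R : Set ℚ) (hR : R ⊆ {r : ℚ | 0 < r ∧ r < 1}) :
    ∃ (X : Type) (_ : MeasurableSpace X) (_ : StandardBorelSpace X)
      (μ : Measure X) (_ : NoAtoms μ) (_ : SigmaFinite μ) (T : X ≃ᵐ X),
      μ Set.univ = ⊤ ∧ MeasurePreserving T μ μ ∧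
      ∀ p q : ℕ, 0 < p → p < q →
        (IsErgodicMap (μ.prod μ) (fun z : X × X => ((⇑T)^[p] z.1, (⇑T)^[q] z.2)) ↔
          ((p : ℚ) / (q : ℚ)) ∈ R) := by
  refine ⟨ℤ_[2] × ℕ, inferInstance, inferInstance, mu (levels R hR),
    (inferInstance : NullSingletonClass (mu (levels R hR))), inferInstance, T (levels R hR),
    mu_univ _, mp_T _, fun p q hp hpq => ⟨fun herg => ?_, fun h A hA hinv => ?_⟩⟩
  · by_contra h
    obtain ⟨B, hB, hinv, h1, h2⟩ :=
      prod_not_ergodic (levels R hR) hp hpq (levels_ratio R hR hp hpq h)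
    have h3 : (fun z : (ℤ_[2] × ℕ) × (ℤ_[2] × ℕ) =>
        ((T (levels R hR))^[p] z.1, (T (levels R hR))^[q] z.2)) ⁻¹' B = B := hinv
    exact (herg B hB (by rw [h3, symmDiff_self]; exact measure_empty)).elim h1 h2
  · exact prod_ergodic (levels R hR) (levels_frequent R hR h) hA hinv
end

section
/- If R₁ ⊆ R₂ ⊆ ℚ ∩ (0,1), then there exists a standard Borel space X with a nonatomic σ-finite Borel measure μ satisfying μ(X) = ∞, and an invertible measure-preserving transformation T : X → X, such that for all natural numbers p, q with 0 < p < q: (i) if p/q ∈ R₁, then T^p × T^q is conservative and ergodic; (ii) if p/q ∈ R₂ ∖ R₁, then T^p × T^q is conservative but not ergodic; (iii) if p/q ∈ (ℚ ∩ (0,1)) ∖ R₂, then T^p × T^q is not conservative. -/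
/-!
The transformation is the shift on a tower over the compact group `Om` of digit sequences
`x : ℕ → Fin 4` with Haar measure `PP`. The digit `v` at index `n` carries an integer weight
`wt t n v`, and two sequences differing in finitely many digits are at displacement `k` (`Disp`)
when their total weights differ by `k`. The weights grow so fast that a sequence has at most one
companion at a given displacement (`disp_unique`), so `T ^ k x = x'` defines a partial action of
`ℤ` on `Om`, whose completion to a free action is an infinite measure preserving transformation.
Concretely, a sequence `x` is coded by the map `code t x` recording at time `k` the digits of the
sequence at displacement `k` from `x`; `T` is the shift `sh 1`, and the invariant measure `mu` is
the increasing limit of the measures `stage t n`, carried by the shifts by at most `bd t n` of the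
codes of the sequences starting with `n` zeros.

Stage `n` has a tag `t n = (P, Q, a, b)`: the weights of the four digits are `0, A, L, L + B` with
`A = P N + a` and `B = Q N + b`, where `N` is a large multiple of `(n + 1)!` and `L` is much
larger than everything else. Changing digit `n` from `0` to `1` in `x` and from `2` to `3` in `y`
displaces the pair `(x, y)` by `(P N + a, Q N + b)`, while the translation of `Om × Om` used tends
to the identity with `n`. So if a tag occurs infinitely often, every positive set `B` of the
product meets its image under `(T ^ (P N + a), T ^ (Q N + b))` for some `N` divisible by any given
integer (`recur`).

* For `p / q = P / Q ∈ R₂` the tag `(P, Q, 0, 0)` occurs infinitely often, so `T ^ p × T ^ q` is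
  conservative (`conservative`).
* For `p / q = P / Q ∈ R₁` the tags `(P, Q, 1, 0)` and `(P, Q, 0, 1)` occur infinitely often, so an
  invariant set is invariant under `T × 1` and `1 × T`; its trace on `Om × Om` is invariant under
  all finite changes of digits, hence null or conull (`ergodic`).
* Conversely, suppose `(x', y')` is at displacement `(p k, q k)` from `(x, y)`, all of them
  starting with `p + q` zeros. When no tag of ratio `p / q` has `(a, b) ≠ (0, 0)`, the growth of
  the weights forces the relation `q (w x' - w x) = p (w y' - w y)` digit by digit, whence
  `x' n = x n` and `y' n = y n` at stages with a tag of another ratio, and `y' n = 0` if `y n = 0`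
  (`disp_match`). So without tags of ratio `p / q` nothing returns (`not_conservative`); and if
  they all have `a = b = 0`, vanishing of a digit of `y` is an invariant of the orbit of a pair in
  that cylinder, which yields a nontrivial invariant set (`not_ergodic`).
-/

open MeasureTheory

namespace TagTower

open MeasureTheory Filter Topology
open scoped symmDiff ENNReal

/-! ### Two facts about Haar measure on a compact group -/

section Group

variable {G : Type*} [AddCommGroup G] [TopologicalSpace G] [IsTopologicalAddGroup G]
  [CompactSpace G] [T2Space G] [SecondCountableTopology G] [MeasurableSpace G] [BorelSpace G]
  (Q : Measure G) [Q.IsAddHaarMeasure] [IsProbabilityMeasure Q] [Q.InnerRegular]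

theorem null_or_conull_of_dense {s : Set G} (hs : MeasurableSet s)
    (hd : Dense {g : G | (fun z => g + z) ⁻¹' s =ᵐ[Q] s}) : Q s = 0 ∨ Q sᶜ = 0 := by
  have h := aeconst_of_dense_setOfPred_preimage_vadd_ae (M := G) (μ := Q) hs.nullMeasurableSet hd
  rw [eventuallyConst_set] at h
  rcases h with h | h
  · exact Or.inr (mem_ae_iff.1 h)
  · left
    simpa [ae_iff] using h

theorem tendsto_symmDiff_translate {g : ℕ → G} (hg : Tendsto g atTop (𝓝 0)) {s : Set G}
    (hs : MeasurableSet s) :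
    Tendsto (fun n => Q (((fun z => g n + z) ⁻¹' s) ∆ s)) atTop (𝓝 0) := by
  let f : C(G × G, G) := ⟨fun z => z.1 + z.2, by fun_prop⟩
  have h1 : Tendsto (fun n => f.curry (g n)) atTop (𝓝 (f.curry 0)) :=
    (f.curry.continuous.tendsto 0).comp hg
  have h2 := tendsto_measure_symmDiff_preimage_nhds_zero (μ := Q) (ν := Q) (s := s) h1
    (Eventually.of_forall fun n => measurePreserving_add_left Q (g n))
    (measurePreserving_add_left Q 0) hs.nullMeasurableSet (measure_ne_top _ _)
  have h3 : (f.curry 0 : G → G) ⁻¹' s = s := by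
    ext z; simp [f]
  rw [h3] at h2
  exact h2

/-- Quantitative recurrence for small translations: if finitely many translates of `E n`, by
elements tending to `0`, cover the group, then a set of positive measure meets its translate by
`g n → 0` inside `E n`, for all large `n`. -/
theorem eventually_recurrent {ι : Type*} [Fintype ι] {B : Set G} (hB : MeasurableSet B)
    (hpos : 0 < Q B) {E : ℕ → Set G} (hE : ∀ n, MeasurableSet (E n)) {g : ℕ → G}
    (hg : Tendsto g atTop (𝓝 0)) {H : ι → ℕ → G} (hH : ∀ i, Tendsto (H i) atTop (𝓝 0))
    (hcov : ∀ n z, ∃ i, H i n + z ∈ E n) :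
    ∀ᶠ n in atTop, 0 < Q {z | z ∈ B ∧ z ∈ E n ∧ g n + z ∈ B} := by
  have hlim : Tendsto (fun n => ∑ i, (Q (((fun z => g n + z) ⁻¹' B) ∆ B)
      + Q (((fun z => -(H i n) + z) ⁻¹' B) ∆ B))) atTop (𝓝 0) := by
    rw [show (0 : ℝ≥0∞) = ∑ i : ι, (0 + 0) by simp]
    refine tendsto_finsetSum _ fun i _ => ?_
    refine (tendsto_symmDiff_translate Q hg hB).add
      (tendsto_symmDiff_translate Q (g := fun n => -(H i n)) ?_ hB)
    simpa using (hH i).neg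
  filter_upwards [hlim.eventually (gt_mem_nhds hpos)] with n hn
  by_contra hzero
  have hzero : Q {z | z ∈ B ∧ z ∈ E n ∧ g n + z ∈ B} = 0 := by simpa using hzero
  refine absurd hn (not_lt.2 ?_)
  have hsub : B ⊆ ⋃ i, (fun z => H i n + z) ⁻¹' (E n ∩ (fun z => -(H i n) + z) ⁻¹' B) := by
    intro z hz
    obtain ⟨i, hi⟩ := hcov n z
    refine Set.mem_iUnion.2 ⟨i, hi, ?_⟩
    simpa using hz
  refine (measure_mono hsub).trans ((measure_iUnion_fintype_le _ _).trans ?_)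
  refine Finset.sum_le_sum fun i _ => ?_
  have hm : MeasurableSet (E n ∩ (fun z => -(H i n) + z) ⁻¹' B) :=
    (hE n).inter (hB.preimage (measurable_const_add _))
  rw [(measurePreserving_add_left Q (H i n)).measure_preimage hm.nullMeasurableSet]
  have hsub2 : E n ∩ (fun z => -(H i n) + z) ⁻¹' B ⊆
      ({z | z ∈ B ∧ z ∈ E n ∧ g n + z ∈ B} ∪ (((fun z => g n + z) ⁻¹' B) ∆ B))
        ∪ (((fun z => -(H i n) + z) ⁻¹' B) ∆ B) := by
    intro z hz
    simp only [Set.mem_inter_iff, Set.mem_preimage, Set.mem_union, Set.mem_ofPred_eq,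
      Set.mem_symmDiff] at hz ⊢
    tauto
  refine (measure_mono hsub2).trans ((measure_union_le _ _).trans ?_)
  refine add_le_add ?_ le_rfl
  refine (measure_union_le _ _).trans ?_
  rw [hzero, zero_add]

end Group

/-! ### The digit weights -/

/-- A tag `(p, q, a, b)`: at a stage carrying it, the pair of digits `(0, 2)` may be moved to
`(1, 3)` by the pair of shifts `(p * N + a, q * N + b)`. -/
abbrev Tag := ℕ × ℕ × ℕ × ℕ

/-- The restrictions imposed on tags. -/
def Tag.Valid (t : Tag) : Prop := 0 < t.1 ∧ t.1 ≤ t.2.1 ∧ t.2.2.1 ≤ 1 ∧ t.2.2.2 ≤ 1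

/-- The multiplier `N` at stage `n`, when `k` bounds the displacements of the earlier stages. -/
def mult (n : ℕ) (k : ℤ) : ℤ := 2 * (n + 1).factorial * (k + 2)

/-- The weight of the digit `1`. -/
def wA (t : Tag) (n : ℕ) (k : ℤ) : ℤ := t.1 * mult n k + t.2.2.1

/-- The difference of the weights of the digits `3` and `2`. -/
def wB (t : Tag) (n : ℕ) (k : ℤ) : ℤ := t.2.1 * mult n k + t.2.2.2

/-- The weight of the digit `2`, much larger than `wA` and `wB`. -/
def wL (t : Tag) (n : ℕ) (k : ℤ) : ℤ := (n + 3) * (wA t n k + wB t n k + k + 1)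

/-- `bd t n` bounds the total displacement available to the digits of index below `n`. -/
def bd (t : ℕ → Tag) : ℕ → ℤ
  | 0 => 0
  | n + 1 => bd t n + 1 + (wL (t n) n (bd t n) + wB (t n) n (bd t n))

/-- The weight of the digit `v` at stage `n`. -/
def wt (t : ℕ → Tag) (n : ℕ) : Fin 4 → ℤ :=
  ![0, wA (t n) n (bd t n), wL (t n) n (bd t n), wL (t n) n (bd t n) + wB (t n) n (bd t n)]

theorem mult_ge (n : ℕ) {k : ℤ} (hk : 0 ≤ k) : 2 * (n + 1) * (k + 2) ≤ mult n k := by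
  unfold mult
  have : ((n : ℤ) + 1) ≤ (n + 1).factorial := by exact_mod_cast Nat.self_le_factorial (n + 1)
  nlinarith

theorem mult_gt (n : ℕ) {k : ℤ} (hk : 0 ≤ k) : 2 * k < mult n k := by
  have h := mult_ge n hk
  nlinarith [Int.natCast_nonneg n]

section Arith

variable {t : Tag} (ht : t.Valid) (n : ℕ) {k : ℤ} (hk : 0 ≤ k)
include ht hk

theorem wA_ge : mult n k ≤ wA t n k := by
  have h := mult_ge n hk
  have h0 : 0 ≤ mult n k := le_trans (by positivity) h
  have h1 : (1 : ℤ) ≤ t.1 := by exact_mod_cast ht.1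
  unfold wA
  nlinarith [Int.natCast_nonneg t.2.2.1]

theorem wB_ge : mult n k ≤ wB t n k := by
  have h := mult_ge n hk
  have h0 : 0 ≤ mult n k := le_trans (by positivity) h
  have h1 : (1 : ℤ) ≤ t.2.1 := by exact_mod_cast ht.1.trans_le ht.2.1
  unfold wB
  nlinarith [Int.natCast_nonneg t.2.2.2]

theorem wL_ge : 3 * (wA t n k + wB t n k + k + 1) ≤ wL t n k := by
  have h := mult_ge n hk
  have h0 : 0 ≤ mult n k := le_trans (by positivity) h
  have h1 := wA_ge ht n hk
  have h2 := wB_ge ht n hk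
  unfold wL
  have h3 : 0 ≤ wA t n k + wB t n k + k + 1 := by linarith
  nlinarith [Int.natCast_nonneg n]

end Arith

set_option maxHeartbeats 4000000 in
/-- The case analysis behind `wt_match`, with the multiples of the weights by `q` (no prime) and by
`p` (prime) as independent unknowns. -/
theorem match_cases {A B L A' B' L' κ : ℤ} {R : Prop} (_f0 : 0 ≤ κ) (f1 : κ < A') (f2 : κ < A - A')
    (f3 : κ < B') (f4 : κ < B - B') (f5 : κ < B - A')
    (f6 : κ < A - B' ∨ A - B' < -κ ∨ (A - B' = 0 ∧ R))
    (f7 : κ + A + B + A' + B' < L') (f8 : κ + A + B + A' + B' < L - L') (u u' v v' : Fin 4)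
    (hlo : -κ ≤ (![0, A, L, L + B] u' - ![0, A, L, L + B] u)
      - (![0, A', L', L' + B'] v' - ![0, A', L', L' + B'] v))
    (hhi : (![0, A, L, L + B] u' - ![0, A, L, L + B] u)
      - (![0, A', L', L' + B'] v' - ![0, A', L', L' + B'] v) ≤ κ) :
    (![0, A, L, L + B] u' - ![0, A, L, L + B] u)
      - (![0, A', L', L' + B'] v' - ![0, A', L', L' + B'] v) = 0 ∧
      (¬ R → u' = u ∧ v' = v) ∧ (v = 0 → v' = 0) := by
  fin_cases u <;> fin_cases u' <;> fin_cases v <;> fin_cases v' <;>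
    simp at hlo hhi ⊢ <;> first | done | omega | grind

section Weights

variable {t : ℕ → Tag} (ht : ∀ n, (t n).Valid)
include ht

theorem bd_nonneg (n : ℕ) : 0 ≤ bd t n := by
  induction n with
  | zero => simp [bd]
  | succ n ih =>
    have h1 := wA_ge (ht n) n ih
    have h2 := wB_ge (ht n) n ih
    have h3 := wL_ge (ht n) n ih
    have h4 := mult_gt n ih
    simp only [bd]
    linarith

theorem wt_nonneg (n : ℕ) (v : Fin 4) : 0 ≤ wt t n v := by
  have ih := bd_nonneg ht n
  have h1 := wA_ge (ht n) n ih
  have h2 := wB_ge (ht n) n ih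
  have h3 := wL_ge (ht n) n ih
  have h4 := mult_gt n ih
  fin_cases v <;> simp [wt] <;> linarith

theorem wt_le (n : ℕ) (v : Fin 4) : wt t n v ≤ bd t (n + 1) - bd t n - 1 := by
  have ih := bd_nonneg ht n
  have h1 := wA_ge (ht n) n ih
  have h2 := wB_ge (ht n) n ih
  have h3 := wL_ge (ht n) n ih
  have h4 := mult_gt n ih
  fin_cases v <;> simp [wt, bd] <;> linarith

theorem abs_wt_sub_le (n : ℕ) (u v : Fin 4) :
    |wt t n u - wt t n v| ≤ bd t (n + 1) - bd t n := by
  have h1 := wt_nonneg ht n u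
  have h2 := wt_nonneg ht n v
  have h3 := wt_le ht n u
  have h4 := wt_le ht n v
  rw [abs_le]
  constructor <;> linarith

theorem bd_mono : Monotone (bd t) :=
  monotone_nat_of_le_succ fun n => by
    have := abs_wt_sub_le ht n 0 0
    simp at this
    exact this

theorem wt_sep (n : ℕ) {u v : Fin 4} (h : |wt t n u - wt t n v| ≤ 2 * bd t n) : u = v := by
  have ih := bd_nonneg ht n
  have h1 := wA_ge (ht n) n ih
  have h2 := wB_ge (ht n) n ih
  have h3 := wL_ge (ht n) n ih
  have h4 := mult_gt n ih
  rw [abs_le] at h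
  obtain ⟨ha, hb⟩ := h
  fin_cases u <;> fin_cases v <;> simp [wt] at ha hb ⊢ <;> linarith

theorem bd_growth (n : ℕ) : 8 ^ n ≤ bd t n + 1 := by
  induction n with
  | zero => simp [bd]
  | succ n _ =>
    have ih := bd_nonneg ht n
    have h1 := wA_ge (ht n) n ih
    have h2 := wB_ge (ht n) n ih
    have h3 := wL_ge (ht n) n ih
    have h4 := mult_gt n ih
    have h5 := mult_ge n ih
    have h6 : 4 * (bd t n) + 4 ≤ 2 * mult n (bd t n) := by nlinarith [Int.natCast_nonneg n]
    simp only [bd]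
    rw [pow_succ]
    linarith

/-- Exactness of matches: at a stage `n ≥ p + q`, either `q * d - p * e` is larger than what the
earlier stages can compensate, or it vanishes. It vanishes nontrivially only at the stages whose
tag has ratio `p / q`, and then only on digits `2`, `3` in the second coordinate. -/
theorem wt_match {p q : ℕ} (hp : 0 < p) (hpq : p < q)
    (hgood : ∀ n, (t n).1 * q = (t n).2.1 * p → (t n).2.2.1 = 0 ∧ (t n).2.2.2 = 0)
    {n : ℕ} (hn : p + q ≤ n) {u u' v v' : Fin 4}
    (h : |q * (wt t n u' - wt t n u) - p * (wt t n v' - wt t n v)| ≤ (p + q) * bd t n) :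
    q * (wt t n u' - wt t n u) - p * (wt t n v' - wt t n v) = 0 ∧
      ((t n).1 * q ≠ (t n).2.1 * p → u' = u ∧ v' = v) ∧ (v = 0 → v' = 0) := by
  have ih := bd_nonneg ht n
  have h1 := wA_ge (ht n) n ih
  have h2 := wB_ge (ht n) n ih
  have h4 := mult_ge n ih
  obtain ⟨hv1, hv2, hv3, hv4⟩ := ht n
  have hgood := hgood n
  obtain ⟨P, Q, a, b, htn⟩ : ∃ P Q a b, t n = (P, Q, a, b) := ⟨_, _, _, _, rfl⟩
  rw [htn] at h1 h2
  simp only [htn] at hv1 hv2 hv3 hv4 hgood ⊢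
  have hwt : wt t n = ![0, wA (P, Q, a, b) n (bd t n), wL (P, Q, a, b) n (bd t n),
    wL (P, Q, a, b) n (bd t n) + wB (P, Q, a, b) n (bd t n)] := by
    simp only [wt, htn]
  have hAdef : wA (P, Q, a, b) n (bd t n) = P * mult n (bd t n) + a := rfl
  have hBdef : wB (P, Q, a, b) n (bd t n) = Q * mult n (bd t n) + b := rfl
  have hLdef : wL (P, Q, a, b) n (bd t n) =
    (n + 3) * (wA (P, Q, a, b) n (bd t n) + wB (P, Q, a, b) n (bd t n) + bd t n + 1) := rfl
  rw [hwt] at h ⊢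
  generalize wL (P, Q, a, b) n (bd t n) = L at *
  generalize wA (P, Q, a, b) n (bd t n) = A at *
  generalize wB (P, Q, a, b) n (bd t n) = B at *
  generalize mult n (bd t n) = N at *
  generalize bd t n = k at *
  have hp' : (1 : ℤ) ≤ p := by exact_mod_cast hp
  have hpq' : (p : ℤ) + 1 ≤ q := by exact_mod_cast hpq
  have hn' : (p : ℤ) + q ≤ n := by exact_mod_cast hn
  have hP : (1 : ℤ) ≤ P := by exact_mod_cast hv1
  have hPQ : (P : ℤ) ≤ Q := by exact_mod_cast hv2
  have ha : (a : ℤ) ≤ 1 := by exact_mod_cast hv3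
  have hb : (b : ℤ) ≤ 1 := by exact_mod_cast hv4
  have ha0 := Int.natCast_nonneg a
  have hb0 := Int.natCast_nonneg b
  have hn0 := Int.natCast_nonneg n
  have hNn : (p + q : ℤ) * k + (p + q) < N := by
    have e1 := mul_le_mul_of_nonneg_right hn' (show 0 ≤ k + 1 by linarith)
    have e2 := mul_nonneg hn0 ih
    linarith
  have hN0 : 0 < N := by
    have e1 : 0 ≤ (p + q : ℤ) * k := by positivity
    linarith
  have hA0 : 0 ≤ A := by linarith
  have hB0 : 0 ≤ B := by linarith
  generalize hκ : (p + q : ℤ) * k = κ at *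
  have hκ0 : 0 ≤ κ := by rw [← hκ]; positivity
  -- the linear inequalities between `p`- and `q`-multiples of the weights
  have f1 : κ < p * A := by linarith [mul_nonneg (show 0 ≤ (p : ℤ) - 1 by linarith) hA0]
  have f2 : κ < q * A - p * A := by
    linarith [mul_nonneg (show 0 ≤ (q : ℤ) - p - 1 by linarith) hA0]
  have f3 : κ < p * B := by linarith [mul_nonneg (show 0 ≤ (p : ℤ) - 1 by linarith) hB0]
  have f4 : κ < q * B - p * B := by
    linarith [mul_nonneg (show 0 ≤ (q : ℤ) - p - 1 by linarith) hB0]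
  have f5 : κ < q * B - p * A := by
    have h5 : (p : ℤ) * P + 1 ≤ q * Q := by
      have e1 := mul_le_mul_of_nonneg_left hPQ (show (0 : ℤ) ≤ p by linarith)
      have e2 := mul_nonneg (show 0 ≤ (q : ℤ) - p - 1 by linarith) (show (0 : ℤ) ≤ Q by linarith)
      linarith
    have h6 : 0 ≤ (q * Q - p * P - 1) * N := mul_nonneg (by linarith) hN0.le
    have h7 : (p : ℤ) * a ≤ p := mul_le_of_le_one_right (by positivity) ha
    have h8 : 0 ≤ (q : ℤ) * b := by positivity
    rw [hAdef, hBdef]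
    linarith
  have f6 : κ < q * A - p * B ∨ q * A - p * B < -κ ∨ (q * A - p * B = 0 ∧ P * q = Q * p) := by
    rcases lt_trichotomy (P * q) (Q * p) with hlt | heq | hgt
    · right; left
      have h5 : (P : ℤ) * q + 1 ≤ Q * p := by exact_mod_cast hlt
      have h6 : 0 ≤ (Q * p - P * q - 1) * N := mul_nonneg (by linarith) hN0.le
      have h7 : (q : ℤ) * a ≤ q := mul_le_of_le_one_right (by positivity) ha
      have h8 : 0 ≤ (p : ℤ) * b := by positivity
      rw [hAdef, hBdef]
      linarith
    · right; right
      obtain ⟨rfl, rfl⟩ := hgood heq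
      refine ⟨?_, heq⟩
      have : (P : ℤ) * q = Q * p := by exact_mod_cast heq
      rw [hAdef, hBdef]
      push_cast
      linear_combination N * this
    · left
      have h5 : (Q : ℤ) * p + 1 ≤ P * q := by exact_mod_cast hgt
      have h6 : 0 ≤ (P * q - Q * p - 1) * N := mul_nonneg (by linarith) hN0.le
      have h7 : (p : ℤ) * b ≤ p := mul_le_of_le_one_right (by positivity) hb
      have h8 : 0 ≤ (q : ℤ) * a := by positivity
      rw [hAdef, hBdef]
      linarith
  have hL0 : κ + (p + q) * (A + B) < L := by
    rw [hLdef, ← hκ]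
    have e1 := mul_nonneg (show 0 ≤ (n : ℤ) - (p + q) by linarith)
      (show 0 ≤ A + B + k by linarith)
    linarith
  have hL1 : 0 ≤ L := by
    have e1 := mul_nonneg (show 0 ≤ (p : ℤ) + q by linarith) (show 0 ≤ A + B by linarith)
    linarith
  have f7 : κ + q * A + q * B + p * A + p * B < p * L := by
    linarith [mul_nonneg (show 0 ≤ (p : ℤ) - 1 by linarith) hL1]
  have f8 : κ + q * A + q * B + p * A + p * B < q * L - p * L := by
    linarith [mul_nonneg (show 0 ≤ (q : ℤ) - p - 1 by linarith) hL1]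
  rw [abs_le] at h
  have hq : ∀ u, (q : ℤ) * ![0, A, L, L + B] u = ![0, q * A, q * L, q * L + q * B] u := by
    intro u; fin_cases u <;> simp [mul_add]
  have hp : ∀ u, (p : ℤ) * ![0, A, L, L + B] u = ![0, p * A, p * L, p * L + p * B] u := by
    intro u; fin_cases u <;> simp [mul_add]
  simp only [mul_sub, hq, hp] at h ⊢
  exact match_cases hκ0 f1 f2 f3 f4 f5 f6 f7 f8 u u' v v' h.1 h.2

end Weights

/-! ### The digit space and displacements -/

/-- The space of digit sequences, a compact group under digitwise addition modulo `4`. -/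
abbrev Om := ℕ → Fin 4

/-- Normalized Haar measure on the digit space: the digits are independent and uniform. -/
noncomputable def PP : Measure Om := Measure.addHaarMeasure ⊤

instance : IsProbabilityMeasure PP :=
  ⟨by simpa [PP] using
    Measure.addHaarMeasure_self (K₀ := (⊤ : TopologicalSpace.PositiveCompacts Om))⟩

instance : PP.IsAddHaarMeasure := by unfold PP; infer_instance

/-- `Disp t x x' k`: the sequences `x` and `x'` agree from some index on, and the total weight of
`x'` exceeds that of `x` by `k`. -/
def Disp (t : ℕ → Tag) (x x' : Om) (k : ℤ) : Prop :=
  ∃ N, (∀ i, N ≤ i → x i = x' i) ∧ ∑ i ∈ Finset.range N, (wt t i (x' i) - wt t i (x i)) = k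

theorem disp_extend {t : ℕ → Tag} {x x' : Om} {N M : ℕ} (hNM : N ≤ M)
    (h : ∀ i, N ≤ i → x i = x' i) :
    ∑ i ∈ Finset.range M, (wt t i (x' i) - wt t i (x i))
      = ∑ i ∈ Finset.range N, (wt t i (x' i) - wt t i (x i)) := by
  symm
  refine Finset.sum_subset (Finset.range_mono hNM) fun i _ hi => ?_
  rw [h i (by simpa using hi), sub_self]

theorem Disp.refl (t : ℕ → Tag) (x : Om) : Disp t x x 0 := ⟨0, by simp, by simp⟩

theorem Disp.symm {t : ℕ → Tag} {x x' : Om} {k : ℤ} (h : Disp t x x' k) : Disp t x' x (-k) := by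
  obtain ⟨N, h1, h2⟩ := h
  refine ⟨N, fun i hi => (h1 i hi).symm, ?_⟩
  rw [← h2, ← Finset.sum_neg_distrib]
  simp

theorem Disp.trans {t : ℕ → Tag} {x y z : Om} {k l : ℤ} (h : Disp t x y k) (h' : Disp t y z l) :
    Disp t x z (k + l) := by
  obtain ⟨N, h1, h2⟩ := h
  obtain ⟨M, h3, h4⟩ := h'
  refine ⟨max N M, fun i hi => (h1 i (le_trans (le_max_left _ _) hi)).trans
    (h3 i (le_trans (le_max_right _ _) hi)), ?_⟩
  rw [← h2, ← h4, ← disp_extend (le_max_left N M) h1, ← disp_extend (le_max_right N M) h3,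
    ← Finset.sum_add_distrib]
  refine Finset.sum_congr rfl fun i _ => ?_
  ring

theorem disp_self {t : ℕ → Tag} {x : Om} {k : ℤ} (h : Disp t x x k) : k = 0 := by
  obtain ⟨N, _, h2⟩ := h
  rw [← h2]
  simp

/-- The sequence with digit `v` at `n` and `0` elsewhere. -/
def dl (n : ℕ) (v : Fin 4) : Om := Pi.single n v

theorem disp_dl (t : ℕ → Tag) (x : Om) (n : ℕ) (v : Fin 4) :
    Disp t x (dl n v + x) (wt t n (v + x n) - wt t n (x n)) := by
  refine ⟨n + 1, fun i hi => ?_, ?_⟩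
  · simp [dl, Pi.single_eq_of_ne (show i ≠ n by omega)]
  · rw [Finset.sum_range_succ, Finset.sum_eq_zero, zero_add]
    · simp [dl]
    · intro i hi
      have : i ≠ n := by have := Finset.mem_range.1 hi; omega
      simp [dl, Pi.single_eq_of_ne this]

theorem exists_disp_of_eventually_eq (t : ℕ → Tag) {x x' : Om} {N : ℕ}
    (h : ∀ i, N ≤ i → x i = x' i) : ∃ k, Disp t x x' k := ⟨_, N, h, rfl⟩

section Sep

variable {t : ℕ → Tag} (ht : ∀ n, (t n).Valid)
include ht

theorem abs_sum_le (x x' : Om) (n : ℕ) :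
    |∑ i ∈ Finset.range n, (wt t i (x' i) - wt t i (x i))| ≤ bd t n := by
  induction n with
  | zero => simp [bd]
  | succ n ih =>
    rw [Finset.sum_range_succ]
    have := abs_wt_sub_le ht n (x' n) (x n)
    exact (abs_add_le _ _).trans (by linarith)

/-- A displacement of size at most `bd t n` does not involve the digits of index at least `n`. -/
theorem disp_small {x x' : Om} {k : ℤ} (h : Disp t x x' k) {n : ℕ} (hk : |k| ≤ bd t n) :
    (∀ i, n ≤ i → x i = x' i) ∧
      ∑ i ∈ Finset.range n, (wt t i (x' i) - wt t i (x i)) = k := by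
  obtain ⟨N, h1, h2⟩ := h
  -- descending induction on the agreement index
  induction N with
  | zero =>
    refine ⟨fun i _ => h1 i (Nat.zero_le i), ?_⟩
    rw [← h2]
    exact disp_extend (Nat.zero_le n) h1
  | succ N ih =>
    rcases Nat.lt_or_ge N n with hN | hN
    · refine ⟨fun i hi => h1 i (by omega), ?_⟩
      rw [← h2]
      exact disp_extend (by omega) h1
    · rw [Finset.sum_range_succ] at h2
      have h3 := abs_sum_le ht x x' N
      have h4 := bd_mono ht hN
      have h5 : x' N = x N := by
        apply wt_sep ht N
        have : wt t N (x' N) - wt t N (x N)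
          = k - ∑ i ∈ Finset.range N, (wt t i (x' i) - wt t i (x i)) := by linarith
        rw [this]
        exact (abs_sub _ _).trans (by linarith)
      refine ih (fun i hi => ?_) ?_
      · rcases Nat.eq_or_lt_of_le hi with rfl | hlt
        · exact h5.symm
        · exact h1 i hlt
      · rw [h5, sub_self, add_zero] at h2
        exact h2

theorem disp_zero {x x' : Om} (h : Disp t x x' 0) : x' = x := by
  have := (disp_small ht h (n := 0) (by simp [bd])).1
  funext i
  exact (this i (Nat.zero_le i)).symm

theorem disp_unique {x y z : Om} {k : ℤ} (h : Disp t x y k) (h' : Disp t x z k) : y = z := by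
  have := h'.symm.trans h
  rw [neg_add_cancel] at this
  exact disp_zero ht this

/-- If a pair of displacements has ratio `p / q` and does not involve the first `p + q` digits,
then it has ratio `p / q` digit by digit; so the digits at stages whose tag has another ratio do not
change, and no digit of the second sequence changes from `0`. -/
theorem disp_match {p q : ℕ} (hp : 0 < p) (hpq : p < q)
    (hgood : ∀ n, (t n).1 * q = (t n).2.1 * p → (t n).2.2.1 = 0 ∧ (t n).2.2.2 = 0)
    {x x' y y' : Om} {m : ℕ} (hm : p + q ≤ m) (hx : ∀ i, i < m → x' i = x i)
    (hy : ∀ i, i < m → y' i = y i) {k : ℤ} (hxk : Disp t x x' (p * k))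
    (hyk : Disp t y y' (q * k)) (i : ℕ) :
    ((t i).1 * q ≠ (t i).2.1 * p → x' i = x i ∧ y' i = y i) ∧ (y i = 0 → y' i = 0) := by
  obtain ⟨N, h1, h2⟩ := hxk
  obtain ⟨M, h3, h4⟩ := hyk
  rw [← disp_extend (le_max_left N M) h1] at h2
  rw [← disp_extend (le_max_right N M) h3] at h4
  set D : ℕ → ℤ := fun i => q * (wt t i (x' i) - wt t i (x i)) - p * (wt t i (y' i) - wt t i (y i))
    with hD
  have hsplit : ∀ j, ∑ i ∈ Finset.range j, D i
      = q * ∑ i ∈ Finset.range j, (wt t i (x' i) - wt t i (x i))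
        - p * ∑ i ∈ Finset.range j, (wt t i (y' i) - wt t i (y i)) := by
    intro j
    simp only [hD]
    rw [Finset.mul_sum, Finset.mul_sum, ← Finset.sum_sub_distrib]
  have hle : ∀ j, |∑ i ∈ Finset.range j, D i| ≤ (p + q) * bd t j := by
    intro j
    rw [hsplit]
    refine (abs_sub _ _).trans ?_
    rw [abs_mul, abs_mul, Nat.abs_cast, Nat.abs_cast]
    have e1 := mul_le_mul_of_nonneg_left (abs_sum_le ht x x' j) (Int.natCast_nonneg q)
    have e2 := mul_le_mul_of_nonneg_left (abs_sum_le ht y y' j) (Int.natCast_nonneg p)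
    linarith
  have hfin : ∀ j, max N M ≤ j → ∑ i ∈ Finset.range j, D i = 0 := by
    intro j hj
    rw [hsplit, disp_extend (N := max N M) hj fun i hi => h1 i (le_trans (le_max_left _ _) hi),
      disp_extend (N := max N M) hj fun i hi => h3 i (le_trans (le_max_right _ _) hi), h2, h4]
    ring
  -- if the partial sum up to `j + 1` vanishes, the `j`-th term is too small not to vanish
  have hstep : ∀ j, m ≤ j → ∑ i ∈ Finset.range (j + 1), D i = 0 → |D j| ≤ (p + q) * bd t j := by
    intro j _ hj
    rw [Finset.sum_range_succ] at hj
    have : D j = -∑ i ∈ Finset.range j, D i := by linarith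
    rw [this, abs_neg]
    exact hle j
  have hall : ∀ r j, j + r = max N M → ∑ i ∈ Finset.range j, D i = 0 := by
    intro r
    induction r with
    | zero => intro j hj; exact hfin j (by omega)
    | succ r ih =>
      intro j hj
      have h5 := ih (j + 1) (by omega)
      have h6 : D j = 0 := by
        rcases Nat.lt_or_ge j m with hjm | hjm
        · simp [hD, hx j hjm, hy j hjm]
        · exact (wt_match ht hp hpq hgood (le_trans hm hjm) (hstep j hjm h5)).1
      rw [Finset.sum_range_succ, h6, add_zero] at h5
      exact h5
  have hzero : ∀ j, ∑ i ∈ Finset.range j, D i = 0 := by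
    intro j
    rcases le_total (max N M) j with hj | hj
    · exact hfin j hj
    · exact hall (max N M - j) j (by omega)
  rcases Nat.lt_or_ge i m with him | him
  · exact ⟨fun _ => ⟨hx i him, hy i him⟩, fun h => by rw [hy i him, h]⟩
  · exact (wt_match ht hp hpq hgood (le_trans hm him) (hstep i him (hzero _))).2

end Sep

/-! ### The shift space and the coding of digit sequences -/

/-- The phase space, on which the transformation is the shift of the first argument. -/
abbrev XX := ℤ → ℕ → Fin 4 → Prop

/-- The coding `Om → XX`: it records at time `k` the digits of the sequence at displacement `k`
from `x`, and nothing if there is no such sequence. -/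
def code (t : ℕ → Tag) (x : Om) : XX := fun k n v => ∃ x', Disp t x x' k ∧ x' n = v

/-- The shift by `j`. -/
def sh (j : ℤ) : XX ≃ᵐ XX where
  toFun s k := s (k + j)
  invFun s k := s (k - j)
  left_inv s := by funext k; simp
  right_inv s := by funext k; simp
  measurable_toFun := measurable_pi_lambda _ fun k => measurable_pi_apply (k + j)
  measurable_invFun := measurable_pi_lambda _ fun k => measurable_pi_apply (k - j)

theorem sh_apply (j : ℤ) (s : XX) (k : ℤ) : sh j s k = s (k + j) := rfl

theorem sh_sh (i j : ℤ) (s : XX) : sh i (sh j s) = sh (i + j) s := by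
  funext k
  simp only [sh_apply, add_assoc]

theorem sh_zero (s : XX) : sh 0 s = s := by
  funext k
  simp only [sh_apply, add_zero]

theorem sh_iterate (n : ℕ) (s : XX) : (⇑(sh 1))^[n] s = sh n s := by
  induction n generalizing s with
  | zero => simp [sh_zero]
  | succ n ih => rw [Function.iterate_succ_apply, ih, sh_sh]; push_cast; rfl

theorem code_disp {t : ℕ → Tag} {x x' : Om} {k : ℤ} (h : Disp t x x' k) :
    code t x' = sh k (code t x) := by
  funext j n v
  refine propext ⟨?_, ?_⟩
  · rintro ⟨y, hy, rfl⟩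
    refine ⟨y, ?_, rfl⟩
    have := h.trans hy
    rwa [add_comm] at this
  · rintro ⟨y, hy, rfl⟩
    refine ⟨y, ?_, rfl⟩
    have := h.symm.trans hy
    rwa [show -k + (j + k) = j by ring] at this

theorem isOpen_cyl (x : Om) (M : ℕ) : IsOpen {y : Om | ∀ i < M, y i = x i} := by
  have : {y : Om | ∀ i < M, y i = x i} = ⋂ i ∈ Finset.range M, (fun y : Om => y i) ⁻¹' {x i} := by
    ext y; simp
  rw [this]
  exact isOpen_biInter_finset fun i _ => (isOpen_discrete _).preimage (continuous_apply i)

theorem measurable_code (t : ℕ → Tag) : Measurable (code t) := by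
  refine measurable_pi_lambda _ fun k => measurable_pi_lambda _ fun n =>
    measurable_pi_lambda _ fun v => ?_
  refine measurableSet_setOfPred.1 (IsOpen.measurableSet ?_)
  rw [isOpen_iff_mem_nhds]
  rintro x ⟨x', ⟨N, h1, h2⟩, h3⟩
  refine mem_of_superset ((isOpen_cyl x (max N (n + 1))).mem_nhds (fun i _ => rfl)) ?_
  intro y hy
  simp only [Set.mem_ofPred_eq] at hy
  refine ⟨fun i => if i < N then x' i else y i, ⟨N, fun i hi => ?_, ?_⟩, ?_⟩
  · simp [not_lt.2 hi]
  · rw [← h2]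
    refine Finset.sum_congr rfl fun i hi => ?_
    have hi := Finset.mem_range.1 hi
    simp [hi, hy i (lt_of_lt_of_le hi (le_max_left _ _))]
  · by_cases hn : n < N
    · simp [hn, h3]
    · simp only [hn, if_false]
      rw [hy n (by omega), ← h3]
      exact h1 n (by omega)

theorem code_injective {t : ℕ → Tag} (ht : ∀ n, (t n).Valid) : Function.Injective (code t) := by
  intro x y h
  funext n
  have h1 : code t x 0 n (x n) := ⟨x, Disp.refl t x, rfl⟩
  rw [h] at h1
  obtain ⟨y', h2, h3⟩ := h1
  rw [← h3, disp_zero ht h2]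

/-! ### The invariant measure -/

/-- The sequences whose first `n` digits vanish. -/
def W (n : ℕ) : Set Om := {x | ∀ i < n, x i = 0}

theorem measurableSet_W (n : ℕ) : MeasurableSet (W n) := (isOpen_cyl 0 n).measurableSet

theorem measurableSet_pull (t : ℕ → Tag) (n : ℕ) (g : ℤ) {B : Set XX} (hB : MeasurableSet B) :
    MeasurableSet {x | x ∈ W n ∧ sh g (code t x) ∈ B} :=
  (measurableSet_W n).inter (((sh g).measurable.comp (measurable_code t)) hB)

/-- Splitting `W n` according to the digit of index `n`, and moving that digit to `0`. -/
theorem pull_split (t : ℕ → Tag) (n : ℕ) (g : ℤ) {B : Set XX} (hB : MeasurableSet B) :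
    PP {x | x ∈ W n ∧ sh g (code t x) ∈ B}
      = ∑ v, PP {x | x ∈ W (n + 1) ∧ sh (g + wt t n v) (code t x) ∈ B} := by
  have hset : ∀ v : Fin 4, (fun x : Om => dl n (-v) + x) ⁻¹'
      {x | x ∈ W (n + 1) ∧ sh (g + wt t n v) (code t x) ∈ B}
      = {x | x ∈ W n ∧ sh g (code t x) ∈ B} ∩ (fun x : Om => x n) ⁻¹' {v} := by
    intro v
    ext x
    have hW : dl n (-v) + x ∈ W (n + 1) ↔ x ∈ W n ∧ x n = v := by
      constructor
      · intro h
        refine ⟨fun i hi => ?_, ?_⟩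
        · have := h i (by omega)
          simpa [dl, Pi.single_eq_of_ne (show i ≠ n by omega)] using this
        · have := h n (by omega)
          simp only [dl, Pi.add_apply, Pi.single_eq_same] at this
          exact (neg_add_eq_zero.1 this).symm
      · rintro ⟨h, rfl⟩ i hi
        rcases Nat.lt_succ_iff_lt_or_eq.1 hi with hi | rfl
        · simpa [dl, Pi.single_eq_of_ne (show i ≠ n by omega)] using h i hi
        · simp [dl]
    simp only [Set.mem_preimage, Set.mem_ofPred_eq, Set.mem_inter_iff, Set.mem_singleton_iff, hW]
    constructor
    · rintro ⟨⟨h1, h2⟩, h3⟩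
      refine ⟨⟨h1, ?_⟩, h2⟩
      have hd := disp_dl t x n (-v)
      rw [code_disp hd, sh_sh, h2] at h3
      simpa [wt] using h3
    · rintro ⟨⟨h1, h3⟩, h2⟩
      refine ⟨⟨h1, h2⟩, ?_⟩
      have hd := disp_dl t x n (-v)
      rw [code_disp hd, sh_sh, h2]
      simpa [wt] using h3
  have hm := measurableSet_pull t n g hB
  have hcov : {x | x ∈ W n ∧ sh g (code t x) ∈ B}
      = ⋃ v : Fin 4, {x | x ∈ W n ∧ sh g (code t x) ∈ B} ∩ (fun x : Om => x n) ⁻¹' {v} := by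
    ext x; simp
  conv_lhs => rw [hcov]
  rw [measure_iUnion, tsum_fintype]
  · refine Finset.sum_congr rfl fun v _ => ?_
    rw [← hset, (measurePreserving_add_left PP (dl n (-v))).measure_preimage
      (measurableSet_pull t _ _ hB).nullMeasurableSet]
  · intro u v huv
    refine Disjoint.mono Set.inter_subset_right Set.inter_subset_right ?_
    refine Disjoint.preimage _ (Set.disjoint_singleton.2 huv)
  · intro v
    exact hm.inter (measurable_pi_apply n (measurableSet_singleton v))

theorem PP_W (n : ℕ) : PP (W n) = (4 ^ n)⁻¹ := by
  induction n with
  | zero => simp [W]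
  | succ n ih =>
    have h := pull_split (fun _ => (1, 1, 0, 0)) n 0 MeasurableSet.univ
    simp only [Set.mem_univ, and_true, Set.ofPred_mem_eq, Finset.sum_const, Finset.card_univ,
      Fintype.card_fin, nsmul_eq_mul] at h
    rw [ih] at h
    rw [pow_succ, ENNReal.mul_inv (by simp) (by simp), h, mul_comm, ← mul_assoc]
    norm_num
    rw [ENNReal.inv_mul_cancel (by simp) (by simp), one_mul]

/-- The approximation of the invariant measure carried by the shifts of the codes of `W n` by at
most `bd t n`. -/
noncomputable def stage (t : ℕ → Tag) (n : ℕ) : Measure XX :=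
  ∑ f ∈ Finset.Icc (-bd t n) (bd t n), (PP.restrict (W n)).map fun x => sh f (code t x)

theorem measurable_sh_code (t : ℕ → Tag) (f : ℤ) : Measurable fun x => sh f (code t x) :=
  (sh f).measurable.comp (measurable_code t)

theorem stage_apply (t : ℕ → Tag) (n : ℕ) {B : Set XX} (hB : MeasurableSet B) :
    stage t n B
      = ∑ f ∈ Finset.Icc (-bd t n) (bd t n), PP {x | x ∈ W n ∧ sh f (code t x) ∈ B} := by
  rw [stage, Measure.finsetSum_apply]
  refine Finset.sum_congr rfl fun f _ => ?_
  rw [Measure.map_apply (measurable_sh_code t f) hB,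
    Measure.restrict_apply (measurable_sh_code t f hB), Set.inter_comm]
  rfl

section Mu

variable {t : ℕ → Tag} (ht : ∀ n, (t n).Valid)
include ht

theorem stage_shift (n : ℕ) {j : ℤ} (hj : |j| ≤ 1) {B : Set XX} (hB : MeasurableSet B) :
    stage t n (sh j ⁻¹' B) ≤ stage t (n + 1) B := by
  rw [stage_apply t _ ((sh j).measurable hB), stage_apply t _ hB]
  have h1 : ∀ f, PP {x | x ∈ W n ∧ sh f (code t x) ∈ sh j ⁻¹' B}
      = ∑ v, PP {x | x ∈ W (n + 1) ∧ sh (j + f + wt t n v) (code t x) ∈ B} := by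
    intro f
    rw [← pull_split t n _ hB]
    simp only [Set.mem_preimage, sh_sh]
  simp only [h1]
  rw [← Finset.sum_product']
  rw [← Finset.sum_image (s := Finset.Icc (-bd t n) (bd t n) ×ˢ Finset.univ)
    (g := fun z : ℤ × Fin 4 => j + z.1 + wt t n z.2)
    (f := fun g => PP {x | x ∈ W (n + 1) ∧ sh g (code t x) ∈ B})]
  · refine Finset.sum_le_sum_of_subset fun g hg => ?_
    obtain ⟨⟨f, v⟩, hf, rfl⟩ := Finset.mem_image.1 hg
    simp only [Finset.mem_product, Finset.mem_Icc, Finset.mem_univ, and_true] at hf ⊢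
    have h2 := wt_nonneg ht n v
    have h3 := wt_le ht n v
    rw [abs_le] at hj
    constructor <;> linarith [hf.1, hf.2]
  · rintro ⟨f, v⟩ hf ⟨f', v'⟩ hf' h
    simp only [Finset.coe_product, Set.mem_prod, Finset.mem_coe, Finset.mem_Icc] at hf hf'
    simp only at h
    have h2 : v = v' := by
      apply wt_sep ht n
      rw [abs_le]
      constructor <;> linarith [hf.1.1, hf.1.2, hf'.1.1, hf'.1.2]
    subst h2
    simp only [Prod.mk.injEq, and_true]
    linarith

theorem stage_mono {B : Set XX} (hB : MeasurableSet B) : Monotone fun n => stage t n B :=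
  monotone_nat_of_le_succ fun n => by
    have := stage_shift ht n (j := 0) (by simp) hB
    simpa [Set.preimage, sh_zero] using this

/-- The invariant measure: the increasing limit of the measures `stage t n`. -/
noncomputable def mu : Measure XX :=
  Measure.ofMeasurable (fun B _ => ⨆ n, stage t n B) (by simp) (by
    intro A hA hd
    have h1 : ∀ n, stage t n (⋃ i, A i) = ∑' i, stage t n (A i) := fun n => measure_iUnion hd hA
    simp only [h1]
    simp only [← lintegral_count]
    rw [lintegral_iSup]
    · exact fun n => measurable_from_top
    · exact fun n m hnm i => stage_mono ht (hA i) hnm)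

theorem mu_apply {B : Set XX} (hB : MeasurableSet B) : mu ht B = ⨆ n, stage t n B :=
  Measure.ofMeasurable_apply B hB

theorem mu_shift_le {j : ℤ} (hj : |j| ≤ 1) {B : Set XX} (hB : MeasurableSet B) :
    mu ht (sh j ⁻¹' B) ≤ mu ht B := by
  rw [mu_apply ht hB, mu_apply ht ((sh j).measurable hB)]
  exact iSup_le fun n => le_iSup_of_le (n + 1) (stage_shift ht n hj hB)

theorem measurePreserving_sh_one : MeasurePreserving (sh 1) (mu ht) (mu ht) := by
  refine ⟨(sh 1).measurable, Measure.ext fun B hB => ?_⟩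
  rw [Measure.map_apply (sh 1).measurable hB]
  refine le_antisymm (mu_shift_le ht (by simp) hB) ?_
  have h := mu_shift_le ht (j := -1) (by simp) ((sh 1).measurable hB)
  rwa [show sh (-1) ⁻¹' (sh 1 ⁻¹' B) = B from ?_] at h
  ext s
  rw [Set.mem_preimage, Set.mem_preimage, sh_sh, add_neg_cancel, sh_zero]

theorem measurePreserving_sh (j : ℤ) : MeasurePreserving (sh j) (mu ht) (mu ht) := by
  have hnat : ∀ n : ℕ, MeasurePreserving (sh n) (mu ht) (mu ht) := by
    intro n
    have := (measurePreserving_sh_one ht).iterate n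
    rwa [show (⇑(sh 1))^[n] = sh n from funext fun s => sh_iterate n s] at this
  obtain ⟨n, rfl | rfl⟩ := j.eq_nat_or_neg
  · exact hnat n
  · have := (hnat n).symm (sh n)
    exact this

theorem map_code_le_mu : PP.map (code t) ≤ mu ht := by
  refine Measure.le_iff.2 fun B hB => ?_
  rw [mu_apply ht hB, Measure.map_apply (measurable_code t) hB]
  refine le_iSup_of_le 0 ?_
  rw [stage_apply t _ hB]
  simp [bd, W, sh_zero, Set.preimage]

theorem mu_absolutelyContinuous :
    mu ht ≪ Measure.sum fun f : ℤ => PP.map fun x => sh f (code t x) := by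
  refine Measure.AbsolutelyContinuous.mk fun B hB h => ?_
  rw [Measure.sum_apply _ hB, ENNReal.tsum_eq_zero] at h
  rw [mu_apply ht hB]
  simp only [ENNReal.iSup_eq_zero]
  intro n
  rw [stage_apply t _ hB]
  refine Finset.sum_eq_zero fun f _ => ?_
  have := h f
  rw [Measure.map_apply (measurable_sh_code t f) hB] at this
  exact measure_mono_null (fun x hx => hx.2) this

theorem mu_null {B : Set XX} (hB : MeasurableSet B)
    (h : ∀ f : ℤ, PP {x | sh f (code t x) ∈ B} = 0) : mu ht B = 0 := by
  refine mu_absolutelyContinuous ht ?_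
  rw [Measure.sum_apply _ hB, ENNReal.tsum_eq_zero]
  intro f
  rw [Measure.map_apply (measurable_sh_code t f) hB]
  exact h f

theorem mu_univ : mu ht Set.univ = ⊤ := by
  rw [mu_apply ht MeasurableSet.univ]
  refine ENNReal.eq_top_of_forall_nnreal_le fun r => ?_
  obtain ⟨n, hn⟩ := pow_unbounded_of_one_lt r (one_lt_two)
  refine le_iSup_of_le n ?_
  rw [stage_apply t _ MeasurableSet.univ]
  simp only [Set.mem_univ, and_true, Set.ofPred_mem_eq, Finset.sum_const, Int.card_Icc,
    nsmul_eq_mul, PP_W]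
  have h1 : (8 : ℕ) ^ n ≤ (bd t n + 1 - -bd t n).toNat := by
    have h2 := bd_growth ht n
    have h3 := bd_nonneg ht n
    zify
    rw [Int.toNat_of_nonneg (by linarith)]
    linarith
  calc (r : ℝ≥0∞) ≤ 2 ^ n := by exact_mod_cast hn.le
    _ = 8 ^ n * (4 ^ n)⁻¹ := by
      rw [show (8 : ℝ≥0∞) = 2 * 4 by norm_num, mul_pow, mul_assoc,
        ENNReal.mul_inv_cancel (by simp) (by simp), mul_one]
    _ ≤ _ := by
      gcongr
      exact_mod_cast h1

theorem nullSingletonClass_mu : NullSingletonClass (mu ht) := by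
  refine ⟨fun s => mu_null ht (measurableSet_singleton s) fun f => ?_⟩
  have hsub : {x | sh f (code t x) ∈ ({s} : Set XX)}.Subsingleton := by
    intro x hx y hy
    exact code_injective ht ((sh f).injective ((Set.mem_singleton_iff.1 hx).trans
      (Set.mem_singleton_iff.1 hy).symm))
  have hpt : ∀ x : Om, PP {x} = 0 := by
    intro x
    have h0 : PP {(0 : Om)} = 0 := by
      refine le_antisymm ?_ zero_le
      have hlim : Tendsto (fun n : ℕ => ((4 : ℝ≥0∞) ^ n)⁻¹) atTop (𝓝 0) := by
        simp only [ENNReal.inv_pow]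
        exact ENNReal.tendsto_pow_atTop_nhds_zero_of_lt_one (by norm_num)
      refine ge_of_tendsto' hlim fun n => ?_
      rw [← PP_W n]
      refine measure_mono ?_
      rintro _ rfl i _
      rfl
    have h1 := (measurePreserving_add_left PP (-x)).measure_preimage
      (measurableSet_singleton (0 : Om)).nullMeasurableSet
    rw [h0] at h1
    refine measure_mono_null ?_ h1
    rintro _ rfl
    simp
  rcases hsub.eq_empty_or_singleton with h | ⟨x, h⟩
  · rw [h]; simp
  · rw [h]; exact hpt x

/-- The points which record a digit at time `0`; a shifted code lies in this set exactly when it is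
the code of a digit sequence. -/
def base : Set XX := {s | ∃ v, s 0 0 v}

omit ht in
theorem measurableSet_base : MeasurableSet base := by
  have : base = ⋃ v, {s : XX | s 0 0 v} := by ext s; simp [base]
  rw [this]
  refine MeasurableSet.iUnion fun v => measurableSet_setOfPred.2 ?_
  fun_prop

theorem mu_base_le : mu ht base ≤ 1 := by
  rw [mu_apply ht measurableSet_base]
  refine iSup_le fun n => ?_
  rw [stage_apply t _ measurableSet_base]
  -- only the displacements realized by the first `n` digits contribute
  let S : Finset ℤ := Finset.univ.image
    fun w : Fin n → Fin 4 => ∑ i : Fin n, wt t i (w i)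
  have h1 : ∀ f ∈ Finset.Icc (-bd t n) (bd t n), f ∉ S →
      PP {x | x ∈ W n ∧ sh f (code t x) ∈ base} = 0 := by
    intro f hf hfS
    rw [show {x | x ∈ W n ∧ sh f (code t x) ∈ base} = ∅ from ?_, measure_empty]
    ext x
    simp only [Set.mem_ofPred_eq, Set.mem_empty_iff_false, iff_false]
    rintro ⟨hx, v, hv⟩
    rw [sh_apply, zero_add] at hv
    obtain ⟨x', hd, -⟩ := hv
    have h2 := (disp_small ht hd (abs_le.2 (Finset.mem_Icc.1 hf))).2
    refine hfS (Finset.mem_image.2 ⟨fun i => x' i, Finset.mem_univ _, ?_⟩)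
    rw [← h2, Finset.sum_range]
    refine Finset.sum_congr rfl fun i _ => ?_
    rw [hx i i.2]
    simp [wt]
  calc ∑ f ∈ Finset.Icc (-bd t n) (bd t n), PP {x | x ∈ W n ∧ sh f (code t x) ∈ base}
      = ∑ f ∈ (Finset.Icc (-bd t n) (bd t n)).filter (· ∈ S),
          PP {x | x ∈ W n ∧ sh f (code t x) ∈ base} := by
        rw [Finset.sum_filter_of_ne]
        intro f hf hne
        by_contra hc
        exact hne (h1 f hf hc)
    _ ≤ ∑ f ∈ S, PP {x | x ∈ W n ∧ sh f (code t x) ∈ base} :=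
        Finset.sum_le_sum_of_subset fun f hf => (Finset.mem_filter.1 hf).2
    _ ≤ ∑ f ∈ S, (4 ^ n)⁻¹ := Finset.sum_le_sum fun f _ => by
        rw [← PP_W n]; exact measure_mono fun x hx => hx.1
    _ ≤ 4 ^ n * (4 ^ n)⁻¹ := by
        rw [Finset.sum_const, nsmul_eq_mul]
        gcongr
        have : S.card ≤ 4 ^ n := Finset.card_image_le.trans (by simp)
        exact_mod_cast this
    _ = 1 := ENNReal.mul_inv_cancel (by simp) (by simp)

theorem sigmaFinite_mu : SigmaFinite (mu ht) := by
  set Z : Set XX := ⋂ j : ℤ, (sh j ⁻¹' base)ᶜ with hZ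
  have hZm : MeasurableSet Z :=
    MeasurableSet.iInter fun j => ((sh j).measurable measurableSet_base).compl
  have hZ0 : mu ht Z = 0 := by
    refine mu_null ht hZm fun f => ?_
    rw [show {x | sh f (code t x) ∈ Z} = ∅ from ?_, measure_empty]
    ext x
    simp only [Set.mem_ofPred_eq, Set.mem_empty_iff_false, iff_false]
    intro h
    refine Set.mem_iInter.1 h (-f) ?_
    rw [Set.mem_preimage, sh_sh, neg_add_cancel, sh_zero]
    exact ⟨x 0, x, Disp.refl t x, rfl⟩
  refine Measure.sigmaFinite_of_countable
    (S := insert Z (Set.range fun j : ℤ => sh j ⁻¹' base))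
    ((Set.countable_range _).insert _) ?_ ?_
  · rintro s (rfl | ⟨j, rfl⟩)
    · rw [hZ0]; exact ENNReal.zero_lt_top
    · rw [(measurePreserving_sh ht j).measure_preimage measurableSet_base.nullMeasurableSet]
      exact (mu_base_le ht).trans_lt ENNReal.one_lt_top
  · rw [Set.eq_univ_iff_forall]
    intro s
    by_cases h : s ∈ Z
    · exact ⟨Z, Set.mem_insert _ _, h⟩
    · simp only [hZ, Set.mem_iInter, not_forall, Set.mem_compl_iff, not_not] at h
      obtain ⟨j, hj⟩ := h
      exact ⟨_, Set.mem_insert_of_mem _ ⟨j, rfl⟩, hj⟩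

end Mu

/-! ### The product space -/

/-- The shift of the first coordinate by `a` and of the second by `b`. -/
def sh2 (a b : ℤ) (z : XX × XX) : XX × XX := (sh a z.1, sh b z.2)

theorem sh2_sh2 (a b c d : ℤ) (z : XX × XX) : sh2 a b (sh2 c d z) = sh2 (a + c) (b + d) z := by
  simp only [sh2, sh_sh]

theorem sh2_zero (z : XX × XX) : sh2 0 0 z = z := by
  simp only [sh2, sh_zero]

theorem sh2_iterate (a b : ℤ) (n : ℕ) (z : XX × XX) :
    (sh2 a b)^[n] z = sh2 (a * n) (b * n) z := by
  induction n generalizing z with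
  | zero => simp [sh2_zero]
  | succ n ih =>
    rw [Function.iterate_succ_apply, ih, sh2_sh2]
    push_cast
    ring_nf

theorem measurable_sh2 (a b : ℤ) : Measurable (sh2 a b) :=
  ((sh a).measurable.comp measurable_fst).prodMk ((sh b).measurable.comp measurable_snd)

/-- The pair of codes of a pair of digit sequences, shifted by `f` and `f'`. -/
def pr (t : ℕ → Tag) (f f' : ℤ) (z : Om × Om) : XX × XX := (sh f (code t z.1), sh f' (code t z.2))

theorem measurable_pr (t : ℕ → Tag) (f f' : ℤ) : Measurable (pr t f f') :=
  ((measurable_sh_code t f).comp measurable_fst).prodMk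
    ((measurable_sh_code t f').comp measurable_snd)

theorem pr_eq_sh2 (t : ℕ → Tag) (f f' : ℤ) (z : Om × Om) : pr t f f' z = sh2 f f' (pr t 0 0 z) := by
  simp only [pr, sh2, sh_zero]

section Product

variable {t : ℕ → Tag} (ht : ∀ n, (t n).Valid)

instance : SigmaFinite (mu ht) := sigmaFinite_mu ht

theorem measurePreserving_sh2 (a b : ℤ) :
    MeasurePreserving (sh2 a b) ((mu ht).prod (mu ht)) ((mu ht).prod (mu ht)) :=
  (measurePreserving_sh ht a).prod (measurePreserving_sh ht b)

theorem quasiMeasurePreserving_pr (f f' : ℤ) :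
    Measure.QuasiMeasurePreserving (pr t f f') (PP.prod PP) ((mu ht).prod (mu ht)) := by
  have h0 : Measure.QuasiMeasurePreserving (pr t 0 0) (PP.prod PP) ((mu ht).prod (mu ht)) := by
    refine ⟨measurable_pr t 0 0, ?_⟩
    have h1 : (PP.prod PP).map (pr t 0 0) = (PP.map (code t)).prod (PP.map (code t)) := by
      rw [Measure.map_prod_map _ _ (measurable_code t) (measurable_code t)]
      congr 1
      funext z
      simp [pr, sh_zero, Prod.map]
    rw [h1]
    have h2 := (map_code_le_mu ht).absolutelyContinuous
    exact h2.prod h2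
  have h := (measurePreserving_sh2 ht f f').quasiMeasurePreserving.comp h0
  rwa [show sh2 f f' ∘ pr t 0 0 = pr t f f' from funext fun z => (pr_eq_sh2 t f f' z).symm] at h

theorem prod_null {B : Set (XX × XX)} (hB : MeasurableSet B)
    (h : ∀ f f' : ℤ, (PP.prod PP) (pr t f f' ⁻¹' B) = 0) : (mu ht).prod (mu ht) B = 0 := by
  refine (mu_absolutelyContinuous ht).prod (mu_absolutelyContinuous ht) ?_
  rw [Measure.prod_sum, Measure.sum_apply _ hB, ENNReal.tsum_eq_zero]
  rintro ⟨f, f'⟩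
  rw [Measure.map_prod_map _ _ (measurable_sh_code t f) (measurable_sh_code t f'),
    Measure.map_apply ?_ hB]
  · exact h f f'
  · exact measurable_pr t f f'

theorem prod_pos {B : Set (XX × XX)} {f f' : ℤ}
    (h : 0 < (PP.prod PP) (pr t f f' ⁻¹' B)) : 0 < (mu ht).prod (mu ht) B := by
  rw [pos_iff_ne_zero] at h ⊢
  exact fun h0 => h ((quasiMeasurePreserving_pr ht f f').preimage_null h0)

theorem tendsto_dl (v : Fin 4) : Tendsto (fun n => dl n v) atTop (𝓝 (0 : Om)) := by
  rw [tendsto_pi_nhds]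
  intro i
  refine tendsto_const_nhds.congr' ?_
  filter_upwards [eventually_gt_atTop i] with n hn
  simp [dl, Pi.single_eq_of_ne (show i ≠ n by omega)]

/-- Recurrence along the displacements `(p₀ N + a, q₀ N + b)` of a tag `(p₀, q₀, a, b)` which
occurs infinitely often: at a late stage `n` carrying this tag, changing the digit `0` to `1` in
the first coordinate and `2` to `3` in the second one moves almost nothing. -/
theorem recur {p₀ q₀ a b : ℕ} (hτ : ∃ᶠ n in atTop, t n = (p₀, q₀, a, b)) {B : Set (XX × XX)}
    (hB : MeasurableSet B) (hpos : 0 < (mu ht).prod (mu ht) B) {k : ℕ} (hk : 0 < k) :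
    ∃ N : ℕ, 0 < N ∧
      0 < (mu ht).prod (mu ht) (B ∩ sh2 (p₀ * (k * N) + a) (q₀ * (k * N) + b) ⁻¹' B) := by
  obtain ⟨f, f', hff⟩ : ∃ f f', 0 < (PP.prod PP) (pr t f f' ⁻¹' B) := by
    by_contra! hc
    exact hpos.ne' (prod_null ht hB fun f f' => le_antisymm (hc f f') zero_le)
  have hev := eventually_recurrent (PP.prod PP) (measurable_pr t f f' hB) hff
    (E := fun n => {z : Om × Om | z.1 n = 0 ∧ z.2 n = 2})
    (g := fun n => (dl n 1, dl n 1))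
    (H := fun (i : Fin 4 × Fin 4) n => (dl n i.1, dl n i.2))
    (fun n => ((measurable_pi_apply n).comp measurable_fst (measurableSet_singleton 0)).inter
      ((measurable_pi_apply n).comp measurable_snd (measurableSet_singleton 2)))
    ((tendsto_dl 1).prodMk_nhds (tendsto_dl 1))
    (fun i => (tendsto_dl i.1).prodMk_nhds (tendsto_dl i.2))
    (fun n z => ⟨(-z.1 n, 2 - z.2 n), by simp [dl]⟩)
  obtain ⟨n, hn, hpn, hkn⟩ := (hτ.and_eventually (hev.and (eventually_ge_atTop k))).exists
  obtain ⟨c, hc⟩ : k ∣ (n + 1).factorial := Nat.dvd_factorial hk (by omega)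
  have hc0 : 0 < c := by
    rcases Nat.eq_zero_or_pos c with rfl | h
    · exact absurd hc (by simpa using Nat.factorial_ne_zero (n + 1))
    · exact h
  have hbd := bd_nonneg ht n
  have hN : ((2 * c * (bd t n + 2).toNat : ℕ) : ℤ) = 2 * c * (bd t n + 2) := by
    rw [Nat.cast_mul, Int.toNat_of_nonneg (by linarith)]
    push_cast
    rfl
  have hmult : mult n (bd t n) = k * (2 * c * (bd t n + 2).toNat : ℕ) := by
    rw [hN, mult, hc]
    push_cast
    ring
  refine ⟨2 * c * (bd t n + 2).toNat, ?_, prod_pos ht (f := f) (f' := f')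
    (hpn.trans_le (measure_mono ?_))⟩
  · have : 0 < (bd t n + 2).toNat := by omega
    positivity
  · rintro ⟨x, y⟩ ⟨h1, ⟨h2, h3⟩, h4⟩
    simp only at h2 h3
    refine ⟨h1, ?_⟩
    rw [Set.mem_preimage] at h4 ⊢
    convert h4 using 1
    have hx := code_disp (disp_dl t x n 1)
    have hy := code_disp (disp_dl t y n 1)
    rw [h2] at hx
    rw [h3] at hy
    have e1 : wt t n (1 + 0) - wt t n 0 = p₀ * mult n (bd t n) + a := by
      simp [wt, wA, hn]
    have e2 : wt t n (1 + 2) - wt t n 2 = q₀ * mult n (bd t n) + b := by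
      have : (1 + 2 : Fin 4) = 3 := rfl
      rw [this]
      simp [wt, wB, hn]
    rw [e1, hmult] at hx
    rw [e2, hmult] at hy
    simp only [pr, sh2, Prod.mk_add_mk, hx, hy, sh_sh]
    rw [add_comm f, add_comm f']

/-! ### Conservativity and ergodicity -/

theorem conservative {p₀ q₀ k : ℕ} (hk : 0 < k) (hτ : ∃ᶠ n in atTop, t n = (p₀, q₀, 0, 0)) :
    IsConservativeMap ((mu ht).prod (mu ht)) (sh2 ((k * p₀ : ℕ) : ℤ) ((k * q₀ : ℕ) : ℤ)) := by
  intro A hA hpos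
  obtain ⟨N, hN, h⟩ := recur ht hτ hA hpos hk
  refine ⟨N, hN, ?_⟩
  rw [Set.inter_comm]
  convert h using 4
  funext z
  rw [sh2_iterate]
  push_cast
  ring_nf

/-- If the tag `(p₀, q₀, a, b)` occurs infinitely often, a set invariant modulo null sets under the
shift by `(k p₀, k q₀)` is so under the shift by `(a, b)`: a positive part of `A` moved outside `A`
by `(a, b)` would meet its own image under some `(p₀ k N + a, q₀ k N + b)`. -/
theorem ae_invariant_of_tag {p₀ q₀ a b k : ℕ} (hk : 0 < k)
    (hτ : ∃ᶠ n in atTop, t n = (p₀, q₀, a, b)) {A : Set (XX × XX)} (hA : MeasurableSet A)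
    (hinv : sh2 ((k * p₀ : ℕ) : ℤ) ((k * q₀ : ℕ) : ℤ) ⁻¹' A =ᵐ[(mu ht).prod (mu ht)] A) :
    sh2 a b ⁻¹' A =ᵐ[(mu ht).prod (mu ht)] A := by
  have main : ∀ A : Set (XX × XX), MeasurableSet A →
      sh2 ((k * p₀ : ℕ) : ℤ) ((k * q₀ : ℕ) : ℤ) ⁻¹' A =ᵐ[(mu ht).prod (mu ht)] A →
      (mu ht).prod (mu ht) (A \ sh2 a b ⁻¹' A) = 0 := by
    intro A hA hinv
    by_contra hne
    obtain ⟨N, -, h⟩ := recur ht hτ (hA.diff (measurable_sh2 a b hA)) (pos_iff_ne_zero.2 hne) hk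
    refine h.ne' ?_
    have h1 := (measurePreserving_sh2 ht (k * p₀ : ℕ)
      (k * q₀ : ℕ)).quasiMeasurePreserving.preimage_iterate_ae_eq N hinv
    have h2 := (measurePreserving_sh2 ht a b).quasiMeasurePreserving.preimage_ae_eq h1
    refine measure_mono_null ?_ (ae_iff.1 h2.mem_iff)
    rintro z ⟨⟨hz1, hz2⟩, hz3, -⟩ hiff
    refine hz2 (hiff.1 ?_)
    rw [Set.mem_preimage, Set.mem_preimage, sh2_iterate, sh2_sh2]
    convert hz3 using 2 <;> push_cast <;> ring
  have h1 := main A hA hinv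
  have h2 := main Aᶜ hA.compl (by simpa [Set.preimage_compl] using hinv.compl)
  refine (ae_eq_set).2 ⟨?_, h1⟩
  refine measure_mono_null ?_ h2
  rintro z ⟨hz1, hz2⟩
  exact ⟨hz2, fun h => h hz1⟩

theorem ae_invariant_all {A : Set (XX × XX)}
    (h1 : sh2 1 0 ⁻¹' A =ᵐ[(mu ht).prod (mu ht)] A)
    (h2 : sh2 0 1 ⁻¹' A =ᵐ[(mu ht).prod (mu ht)] A) (f f' : ℤ) :
    sh2 f f' ⁻¹' A =ᵐ[(mu ht).prod (mu ht)] A := by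
  have hadd : ∀ {a b c d : ℤ}, sh2 a b ⁻¹' A =ᵐ[(mu ht).prod (mu ht)] A →
      sh2 c d ⁻¹' A =ᵐ[(mu ht).prod (mu ht)] A →
      sh2 (a + c) (b + d) ⁻¹' A =ᵐ[(mu ht).prod (mu ht)] A := by
    intro a b c d hab hcd
    have := (measurePreserving_sh2 ht c d).quasiMeasurePreserving.preimage_ae_eq hab
    refine Filter.EventuallyEq.trans ?_ (this.trans hcd)
    rw [← Set.preimage_comp, show sh2 a b ∘ sh2 c d = sh2 (a + c) (b + d) from
      funext fun z => sh2_sh2 a b c d z]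
    exact Filter.EventuallyEq.rfl
  have hneg : ∀ {a b : ℤ}, sh2 a b ⁻¹' A =ᵐ[(mu ht).prod (mu ht)] A →
      sh2 (-a) (-b) ⁻¹' A =ᵐ[(mu ht).prod (mu ht)] A := by
    intro a b hab
    have := (measurePreserving_sh2 ht (-a) (-b)).quasiMeasurePreserving.preimage_ae_eq hab
    refine Filter.EventuallyEq.trans this.symm ?_
    rw [← Set.preimage_comp, show sh2 a b ∘ sh2 (-a) (-b) = id from
      funext fun z => by simp [sh2_sh2, sh2_zero]]
    rfl
  have hzero : sh2 0 0 ⁻¹' A =ᵐ[(mu ht).prod (mu ht)] A := by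
    rw [show sh2 0 0 = id from funext sh2_zero]
    rfl
  have hL : ∀ f : ℤ, sh2 f 0 ⁻¹' A =ᵐ[(mu ht).prod (mu ht)] A := by
    intro f
    induction f using Int.induction_on with
    | zero => exact hzero
    | succ n ih => simpa using hadd ih h1
    | pred n ih => simpa [sub_eq_add_neg] using hadd ih (hneg h1)
  have hR : ∀ f : ℤ, sh2 0 f ⁻¹' A =ᵐ[(mu ht).prod (mu ht)] A := by
    intro f
    induction f using Int.induction_on with
    | zero => exact hzero
    | succ n ih => simpa using hadd ih h2
    | pred n ih => simpa [sub_eq_add_neg] using hadd ih (hneg h2)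
  have h := hadd (hL f) (hR f')
  simpa using h

/-- A set invariant under all pairs of shifts pulls back to a set of pairs of digit sequences
invariant under changing finitely many digits, so it is null or conull. -/
theorem null_or_conull_of_all {A : Set (XX × XX)} (hA : MeasurableSet A)
    (hall : ∀ f f' : ℤ, sh2 f f' ⁻¹' A =ᵐ[(mu ht).prod (mu ht)] A) :
    (mu ht).prod (mu ht) A = 0 ∨ (mu ht).prod (mu ht) Aᶜ = 0 := by
  have hae : ∀ᵐ z ∂(PP.prod PP), ∀ f f' : ℤ, sh2 f f' (pr t 0 0 z) ∈ A ↔ pr t 0 0 z ∈ A := by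
    refine (quasiMeasurePreserving_pr ht 0 0).ae (p := fun w => ∀ f f' : ℤ, sh2 f f' w ∈ A ↔ w ∈ A)
      ?_
    exact ae_all_iff.2 fun f => ae_all_iff.2 fun f' => (hall f f').mem_iff
  have hpull : ∀ f f' : ℤ, pr t f f' ⁻¹' A =ᵐ[PP.prod PP] pr t 0 0 ⁻¹' A := by
    intro f f'
    filter_upwards [hae] with z hz
    refine propext ?_
    have := hz f f'
    rw [← pr_eq_sh2] at this
    exact this
  have hinv : ∀ g : Om × Om, (∃ N, ∀ i, N ≤ i → g.1 i = 0 ∧ g.2 i = 0) →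
      (fun z => g + z) ⁻¹' (pr t 0 0 ⁻¹' A) =ᵐ[PP.prod PP] pr t 0 0 ⁻¹' A := by
    rintro ⟨g, g'⟩ ⟨N, hN⟩
    filter_upwards [hae] with z hz
    obtain ⟨k, hk⟩ := exists_disp_of_eventually_eq t (x := z.1) (x' := g + z.1) (N := N)
      fun i hi => by simpa using (hN i hi).1
    obtain ⟨k', hk'⟩ := exists_disp_of_eventually_eq t (x := z.2) (x' := g' + z.2) (N := N)
      fun i hi => by simpa using (hN i hi).2
    have h := hz k k'
    have : pr t 0 0 ((g, g') + z) = sh2 k k' (pr t 0 0 z) := by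
      simp only [pr, sh2, sh_zero, Prod.fst_add, Prod.snd_add, code_disp hk, code_disp hk']
    rw [← this] at h
    exact propext h
  have hdense : Dense {g : Om × Om |
      (fun z => g + z) ⁻¹' (pr t 0 0 ⁻¹' A) =ᵐ[PP.prod PP] pr t 0 0 ⁻¹' A} := by
    have htr : ∀ x : Om, Tendsto (fun (N i : ℕ) => if i < N then x i else 0) atTop (𝓝 x) := by
      intro x
      rw [tendsto_pi_nhds]
      intro i
      refine tendsto_const_nhds.congr' ?_
      filter_upwards [eventually_gt_atTop i] with n hn
      simp [hn]
    intro g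
    refine mem_closure_of_tendsto ((htr g.1).prodMk_nhds (htr g.2)) (Eventually.of_forall fun N => ?_)
    refine hinv _ ⟨N, fun i hi => ?_⟩
    simp [not_lt.2 hi]
  rcases null_or_conull_of_dense (PP.prod PP) (measurable_pr t 0 0 hA) hdense with h | h
  · left
    exact prod_null ht hA fun f f' => by rw [measure_congr (hpull f f')]; exact h
  · right
    refine prod_null ht hA.compl fun f f' => ?_
    rw [Set.preimage_compl, measure_congr (hpull f f').compl]
    exact h

theorem ergodic {p₀ q₀ k : ℕ} (hk : 0 < k) (h1 : ∃ᶠ n in atTop, t n = (p₀, q₀, 1, 0))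
    (h2 : ∃ᶠ n in atTop, t n = (p₀, q₀, 0, 1)) :
    IsErgodicMap ((mu ht).prod (mu ht)) (sh2 ((k * p₀ : ℕ) : ℤ) ((k * q₀ : ℕ) : ℤ)) := by
  intro A hA hS
  have hinv := measure_symmDiff_eq_zero_iff.1 hS
  refine null_or_conull_of_all ht hA (ae_invariant_all ht ?_ ?_)
  · exact_mod_cast ae_invariant_of_tag ht hk h1 hA hinv
  · exact_mod_cast ae_invariant_of_tag ht hk h2 hA hinv

/-! ### Failure of conservativity and of ergodicity -/

theorem code_apply_zero (ht : ∀ n, (t n).Valid) {x : Om} {i : ℕ} {v : Fin 4} :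
    code t x 0 i v ↔ x i = v := by
  constructor
  · rintro ⟨x', h, rfl⟩
    rw [disp_zero ht h]
  · rintro rfl
    exact ⟨x, Disp.refl t x, rfl⟩

/-- The points of `XX` whose digits at time `0` of index below `m` vanish. -/
def cyl (m : ℕ) : Set XX := {s | ∀ i < m, s 0 i 0}

theorem measurableSet_entry (i : ℕ) (v : Fin 4) : MeasurableSet {s : XX | s 0 i v} :=
  measurableSet_setOfPred.2 (by fun_prop)

theorem measurableSet_cyl (m : ℕ) : MeasurableSet (cyl m) := by
  have : cyl m = ⋂ i ∈ Finset.range m, {s : XX | s 0 i 0} := by ext s; simp [cyl]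
  rw [this]
  exact Finset.measurableSet_biInter _ fun i _ => measurableSet_entry i 0

theorem code_mem_cyl (ht : ∀ n, (t n).Valid) {x : Om} {m : ℕ} : code t x ∈ cyl m ↔ x ∈ W m :=
  forall₂_congr fun _ _ => code_apply_zero ht

/-- A shifted code in `cyl m` is again the code of a digit sequence. -/
theorem exists_of_mem_cyl (ht : ∀ n, (t n).Valid) {x : Om} {f : ℤ} {m : ℕ} (hm : 0 < m)
    (h : sh f (code t x) ∈ cyl m) :
    ∃ x', Disp t x x' f ∧ sh f (code t x) = code t x' ∧ x' ∈ W m := by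
  have h0 := h 0 hm
  rw [sh_apply, zero_add] at h0
  obtain ⟨x', hd, -⟩ := h0
  have hc := code_disp hd
  rw [← hc] at h
  exact ⟨x', hd, hc.symm, (code_mem_cyl ht).1 h⟩

theorem not_conservative {p q : ℕ} (hp : 0 < p) (hpq : p < q)
    (hgood : ∀ n, (t n).1 * q ≠ (t n).2.1 * p) :
    ¬ IsConservativeMap ((mu ht).prod (mu ht)) (sh2 p q) := by
  intro hcons
  have hm : MeasurableSet (cyl (p + q) ×ˢ cyl (p + q)) :=
    (measurableSet_cyl _).prod (measurableSet_cyl _)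
  obtain ⟨n, hn, hpos⟩ := hcons _ hm (prod_pos ht (f := 0) (f' := 0) (by
    have : pr t 0 0 ⁻¹' (cyl (p + q) ×ˢ cyl (p + q)) = W (p + q) ×ˢ W (p + q) := by
      ext z
      simp [pr, sh_zero, code_mem_cyl ht]
    rw [this, Measure.prod_prod, PP_W]
    exact ENNReal.mul_pos (by simp) (by simp)))
  refine hpos.ne' (prod_null ht ?_ fun f f' => ?_)
  · have := (measurable_sh2 p q).iterate n
    exact (this hm).inter hm
  · rw [show pr t f f' ⁻¹' _ = ∅ from ?_, measure_empty]
    rw [Set.eq_empty_iff_forall_notMem]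
    rintro ⟨x, y⟩ ⟨h1, h2, h3⟩
    rw [Set.mem_preimage, sh2_iterate] at h1
    obtain ⟨h1, h4⟩ := h1
    obtain ⟨x', -, hx', hxW⟩ := exists_of_mem_cyl ht (by omega) h2
    obtain ⟨y', -, hy', hyW⟩ := exists_of_mem_cyl ht (by omega) h3
    simp only [sh2, pr] at h1 h4
    rw [hx'] at h1
    rw [hy'] at h4
    obtain ⟨x'', hdx, -, hxW'⟩ := exists_of_mem_cyl ht (by omega) h1
    obtain ⟨y'', hdy, -, hyW'⟩ := exists_of_mem_cyl ht (by omega) h4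
    have hmatch := disp_match ht hp hpq (fun n h => absurd h (hgood n)) le_rfl
      (fun i hi => (hxW' i hi).trans (hxW i hi).symm)
      (fun i hi => (hyW' i hi).trans (hyW i hi).symm) hdx hdy
    have : x'' = x' := funext fun i => ((hmatch i).1 (hgood i)).1
    rw [this] at hdx
    have := disp_self hdx
    have : p * n = 0 := by exact_mod_cast this
    have := Nat.mul_pos hp hn
    omega

/-- The pairs in `cyl m × cyl m` whose second coordinate has digit `v` at index `m`. -/
def cyl2 (m : ℕ) (v : Fin 4) : Set (XX × XX) := {z | z.1 ∈ cyl m ∧ z.2 ∈ cyl m ∧ z.2 0 m v}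

theorem measurableSet_cyl2 (m : ℕ) (v : Fin 4) : MeasurableSet (cyl2 m v) :=
  (measurable_fst (measurableSet_cyl m)).inter ((measurable_snd (measurableSet_cyl m)).inter
    (measurable_snd (measurableSet_entry m v)))

theorem cyl2_pos (m : ℕ) (v : Fin 4) : 0 < (mu ht).prod (mu ht) (cyl2 m v) := by
  refine prod_pos ht (f := 0) (f' := 0) ?_
  have hsub : W m ×ˢ {y : Om | ∀ i < m + 1, y i = dl m v i} ⊆ pr t 0 0 ⁻¹' cyl2 m v := by
    rintro ⟨x, y⟩ ⟨hx, hy⟩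
    simp only [pr, cyl2, sh_zero, Set.mem_preimage, Set.mem_ofPred_eq, code_mem_cyl ht,
      code_apply_zero ht]
    refine ⟨hx, fun i hi => ?_, ?_⟩
    · have := hy i (by omega)
      simpa [dl, Pi.single_eq_of_ne (show i ≠ m by omega)] using this
    · have := hy m (by omega)
      simpa [dl] using this
  refine lt_of_lt_of_le ?_ (measure_mono hsub)
  rw [Measure.prod_prod, PP_W]
  refine ENNReal.mul_pos (by simp) ?_
  exact ((isOpen_cyl (dl m v) (m + 1)).measure_pos PP ⟨dl m v, fun i _ => rfl⟩).ne'

theorem not_ergodic {p q : ℕ} (hp : 0 < p) (hpq : p < q)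
    (hgood : ∀ n, (t n).1 * q = (t n).2.1 * p → (t n).2.2.1 = 0 ∧ (t n).2.2.2 = 0) :
    ¬ IsErgodicMap ((mu ht).prod (mu ht)) (sh2 p q) := by
  intro herg
  set m := p + q with hmdef
  have hm : 0 < m := by omega
  -- the saturation of `cyl2 m 0` never meets `cyl2 m 1`
  set A : Set (XX × XX) := ⋃ n : ℤ, sh2 (p * n) (q * n) ⁻¹' cyl2 m 0 with hA
  have hAm : MeasurableSet A :=
    MeasurableSet.iUnion fun n => measurable_sh2 _ _ (measurableSet_cyl2 m 0)
  have hinv : sh2 p q ⁻¹' A = A := by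
    ext z
    simp only [hA, Set.mem_preimage, Set.mem_iUnion, sh2_sh2]
    constructor
    · rintro ⟨n, h⟩
      refine ⟨n + 1, ?_⟩
      rwa [mul_add, mul_add, mul_one, mul_one]
    · rintro ⟨n, h⟩
      refine ⟨n - 1, ?_⟩
      rwa [mul_sub, mul_sub, mul_one, mul_one, sub_add_cancel, sub_add_cancel]
  have hnull : (mu ht).prod (mu ht) (cyl2 m 1 ∩ A) = 0 := by
    refine prod_null ht ((measurableSet_cyl2 m 1).inter hAm) fun f f' => ?_
    rw [show pr t f f' ⁻¹' _ = ∅ from ?_, measure_empty]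
    rw [Set.eq_empty_iff_forall_notMem]
    rintro ⟨x, y⟩ ⟨⟨h1, h2, h3⟩, h4⟩
    obtain ⟨n, h5, h6, h7⟩ := Set.mem_iUnion.1 h4
    simp only [sh2, pr] at h1 h2 h3 h5 h6 h7
    obtain ⟨x', -, hx', hxW⟩ := exists_of_mem_cyl ht hm h1
    obtain ⟨y', -, hy', hyW⟩ := exists_of_mem_cyl ht hm h2
    rw [hx'] at h5
    rw [hy'] at h3 h6 h7
    obtain ⟨x'', hdx, -, hxW'⟩ := exists_of_mem_cyl ht hm h5
    obtain ⟨y'', hdy, hy'', hyW'⟩ := exists_of_mem_cyl ht hm h6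
    rw [hy''] at h7
    rw [code_apply_zero ht] at h3 h7
    have hdx' := hdx.symm
    have hdy' := hdy.symm
    rw [← mul_neg] at hdx' hdy'
    have hmatch := (disp_match ht hp hpq hgood hmdef.ge
      (fun i hi => (hxW i hi).trans (hxW' i hi).symm)
      (fun i hi => (hyW i hi).trans (hyW' i hi).symm) hdx' hdy' m).2 h7
    rw [h3] at hmatch
    exact absurd hmatch (by decide)
  rcases herg A hAm (by rw [hinv, symmDiff_self]; simp) with h | h
  · refine (cyl2_pos ht m 0).ne' (measure_mono_null ?_ h)
    intro z hz
    refine Set.mem_iUnion.2 ⟨0, ?_⟩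
    rw [mul_zero, mul_zero, Set.mem_preimage, sh2_zero]
    exact hz
  · refine (cyl2_pos ht m 1).ne' (measure_mono_null (t := (cyl2 m 1 ∩ A) ∪ Aᶜ) ?_
      (measure_union_null hnull h))
    intro z hz
    by_cases hzA : z ∈ A
    · exact Or.inl ⟨hz, hzA⟩
    · exact Or.inr hzA

end Product

/-! ### The choice of the tags -/

/-- The tags used for `R₁ ⊆ R₂`: the filler `(1, 1, 0, 0)`, the tag `(num r, den r, 0, 0)` for
`r ∈ R₂`, and the tags `(num r, den r, 1, 0)` and `(num r, den r, 0, 1)` for `r ∈ R₁`. -/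
def tags (R₁ R₂ : Set ℚ) : Set Tag :=
  {(1, 1, 0, 0)} ∪ (fun r : ℚ => (r.num.toNat, r.den, 0, 0)) '' R₂
    ∪ ((fun r : ℚ => (r.num.toNat, r.den, 1, 0)) '' R₁
      ∪ (fun r : ℚ => (r.num.toNat, r.den, 0, 1)) '' R₁)

theorem num_toNat_bounds {r : ℚ} (h0 : 0 < r) (h1 : r < 1) :
    0 < r.num.toNat ∧ r.num.toNat ≤ r.den := by
  have h2 := Rat.num_pos.2 h0
  have h3 : r.num < r.den := Rat.num_lt_denom_iff.2 h1
  omega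

theorem valid_of_mem_tags {R₁ R₂ : Set ℚ} (h12 : R₁ ⊆ R₂) (hR : R₂ ⊆ {r : ℚ | 0 < r ∧ r < 1})
    {τ : Tag} (hτ : τ ∈ tags R₁ R₂) : τ.Valid := by
  rcases hτ with (rfl | ⟨r, hr, rfl⟩) | (⟨r, hr, rfl⟩ | ⟨r, hr, rfl⟩)
  · simp [Tag.Valid]
  · have := num_toNat_bounds (hR hr).1 (hR hr).2
    exact ⟨this.1, this.2, by simp, by simp⟩
  · have := num_toNat_bounds (hR (h12 hr)).1 (hR (h12 hr)).2
    exact ⟨this.1, this.2, by simp, by simp⟩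
  · have := num_toNat_bounds (hR (h12 hr)).1 (hR (h12 hr)).2
    exact ⟨this.1, this.2, by simp, by simp⟩

/-- A nonempty countable set is enumerated by a sequence with infinitely many repetitions. -/
theorem exists_recurrent_enum {S : Set Tag} (hS : S.Nonempty) :
    ∃ t : ℕ → Tag, (∀ n, t n ∈ S) ∧ ∀ τ ∈ S, ∃ᶠ n in atTop, t n = τ := by
  obtain ⟨e, he⟩ := (Set.to_countable S).exists_eq_range hS
  refine ⟨fun n => e n.unpair.1, fun n => he ▸ ⟨_, rfl⟩, fun τ hτ => ?_⟩
  rw [he] at hτ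
  obtain ⟨i, rfl⟩ := hτ
  rw [frequently_atTop]
  intro k
  exact ⟨Nat.pair i k, Nat.right_le_pair i k, by simp⟩

theorem eq_div_of_cross {r : ℚ} (h0 : 0 < r) {p q : ℕ} (hq : 0 < q)
    (h : r.num.toNat * q = r.den * p) : (p : ℚ) / q = r := by
  have h1 : (r.num.toNat : ℚ) = r.num := by
    exact_mod_cast congrArg (Int.cast : ℤ → ℚ) (Int.toNat_of_nonneg (Rat.num_pos.2 h0).le)
  have h2 : (r.num.toNat : ℚ) * q = r.den * p := by exact_mod_cast h
  have hq' : (q : ℚ) ≠ 0 := by exact_mod_cast hq.ne'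
  have hd : (r.den : ℚ) ≠ 0 := by exact_mod_cast r.den_nz
  rw [h1] at h2
  conv_rhs => rw [← Rat.num_div_den r]
  rw [div_eq_div_iff hq' hd]
  linarith

theorem exists_factor {p q : ℕ} (hp : 0 < p) (hq : 0 < q) :
    ∃ k, 0 < k ∧ p = k * ((p : ℚ) / q).num.toNat ∧ q = k * ((p : ℚ) / q).den := by
  obtain ⟨c, h1, h2⟩ := Rat.exists_eq_mul_div_num_and_eq_mul_div_den (p : ℤ) (d := q)
    (by exact_mod_cast hq.ne')
  rw [Int.cast_natCast, Int.cast_natCast] at h1 h2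
  set r : ℚ := (p : ℚ) / q
  have hr : 0 < r := div_pos (by exact_mod_cast hp) (by exact_mod_cast hq)
  have hc : 0 < c := by
    have h3 : 0 < c * (r.den : ℤ) := by rw [← h2]; exact_mod_cast hq
    exact pos_of_mul_pos_left h3 (Int.natCast_nonneg _)
  lift c to ℕ using hc.le
  refine ⟨c, by exact_mod_cast hc, ?_, by exact_mod_cast h2⟩
  zify
  rw [Int.toNat_of_nonneg (Rat.num_pos.2 hr).le]
  exact h1

end TagTower

theorem stmt5 (R₁ R₂ : Set ℚ) (h12 : R₁ ⊆ R₂) (hR : R₂ ⊆ {r : ℚ | 0 < r ∧ r < 1}) :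
    ∃ (X : Type) (_ : MeasurableSpace X) (_ : StandardBorelSpace X)
      (μ : Measure X) (_ : NoAtoms μ) (_ : SigmaFinite μ) (T : X ≃ᵐ X),
      μ Set.univ = ⊤ ∧ MeasurePreserving T μ μ ∧
      ∀ p q : ℕ, 0 < p → p < q →
        (((p : ℚ) / (q : ℚ) ∈ R₁ →
            IsConservativeMap (μ.prod μ)
              (fun z : X × X => ((⇑T)^[p] z.1, (⇑T)^[q] z.2)) ∧
            IsErgodicMap (μ.prod μ)
              (fun z : X × X => ((⇑T)^[p] z.1, (⇑T)^[q] z.2))) ∧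
         ((p : ℚ) / (q : ℚ) ∈ R₂ \ R₁ →
            IsConservativeMap (μ.prod μ)
              (fun z : X × X => ((⇑T)^[p] z.1, (⇑T)^[q] z.2)) ∧
            ¬ IsErgodicMap (μ.prod μ)
              (fun z : X × X => ((⇑T)^[p] z.1, (⇑T)^[q] z.2))) ∧
         ((p : ℚ) / (q : ℚ) ∉ R₂ →
            ¬ IsConservativeMap (μ.prod μ)
              (fun z : X × X => ((⇑T)^[p] z.1, (⇑T)^[q] z.2)))) := by
  obtain ⟨t, htS, hfreq⟩ := TagTower.exists_recurrent_enum
    (S := TagTower.tags R₁ R₂) ⟨(1, 1, 0, 0), Or.inl (Or.inl rfl)⟩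
  have ht : ∀ n, (t n).Valid := fun n => TagTower.valid_of_mem_tags h12 hR (htS n)
  refine ⟨TagTower.XX, inferInstance, inferInstance, TagTower.mu ht,
    TagTower.nullSingletonClass_mu ht, TagTower.sigmaFinite_mu ht, TagTower.sh 1,
    TagTower.mu_univ ht, TagTower.measurePreserving_sh_one ht, ?_⟩
  intro p q hp hpq
  have hmap : (fun z : TagTower.XX × TagTower.XX =>
      ((⇑(TagTower.sh 1))^[p] z.1, (⇑(TagTower.sh 1))^[q] z.2)) = TagTower.sh2 p q := by
    funext z
    simp only [TagTower.sh_iterate, TagTower.sh2]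
  rw [hmap]
  obtain ⟨k, hk, hkp, hkq⟩ := TagTower.exists_factor hp (hp.trans hpq)
  have hcons : (p : ℚ) / (q : ℚ) ∈ R₂ →
      IsConservativeMap ((TagTower.mu ht).prod (TagTower.mu ht)) (TagTower.sh2 p q) := by
    intro h
    have := TagTower.conservative ht hk (hfreq _ (Or.inl (Or.inr ⟨_, h, rfl⟩)))
    rwa [← hkp, ← hkq] at this
  refine ⟨fun h => ⟨hcons (h12 h), ?_⟩, fun h => ⟨hcons h.1, ?_⟩, fun h => ?_⟩
  · have := TagTower.ergodic ht hk (hfreq _ (Or.inr (Or.inl ⟨_, h, rfl⟩)))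
      (hfreq _ (Or.inr (Or.inr ⟨_, h, rfl⟩)))
    rwa [← hkp, ← hkq] at this
  · refine TagTower.not_ergodic ht hp hpq fun n hn => ?_
    rcases htS n with (h1 | ⟨r, hr, h1⟩) | (⟨r, hr, h1⟩ | ⟨r, hr, h1⟩)
    · rw [h1]; exact ⟨rfl, rfl⟩
    · rw [← h1]; exact ⟨rfl, rfl⟩
    · rw [← h1] at hn
      rw [TagTower.eq_div_of_cross (hR (h12 hr)).1 (hp.trans hpq) hn] at h
      exact absurd hr h.2
    · rw [← h1] at hn
      rw [TagTower.eq_div_of_cross (hR (h12 hr)).1 (hp.trans hpq) hn] at h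
      exact absurd hr h.2
  · refine TagTower.not_conservative ht hp hpq fun n hn => ?_
    rcases htS n with (h1 | ⟨r, hr, h1⟩) | (⟨r, hr, h1⟩ | ⟨r, hr, h1⟩)
    · rw [Set.mem_singleton_iff] at h1
      rw [h1] at hn
      simp only [one_mul] at hn
      omega
    · rw [← h1] at hn
      rw [TagTower.eq_div_of_cross (hR hr).1 (hp.trans hpq) hn] at h
      exact h hr
    · rw [← h1] at hn
      rw [TagTower.eq_div_of_cross (hR (h12 hr)).1 (hp.trans hpq) hn] at h
      exact h (h12 hr)
    · rw [← h1] at hn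
      rw [TagTower.eq_div_of_cross (hR (h12 hr)).1 (hp.trans hpq) hn] at h
      exact h (h12 hr)
end
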